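/- Let α ∈ ℤ^{Q_0} and σ = ⟨α,·⟩. Then there are only finitely many isomorphism classes of σ-stable representations of Q if and only if α ∈ Cone(C) for some compatible subset C of Ψ(Q)_{≥−1}. -/

import Mathlib

set_option autoImplicit false

noncomputable section

open scoped BigOperators

/-! Basic setup for representations of a quiver with vertex set `V`, arrow set `A`,
tail map `t` and head map `h`, over a field `K`. -/

variable (K : Type) [Field K]
variable {V A : Type} [Fintype V] [DecidableEq V] [Fintype A]

/-- The Euler form of the quiver `(V, A, t, h)`. -/
def eulerForm {R : Type} [CommRing R] (t h : A → V) (x y : V → R) : R :=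
  ∑ i, x i * y i - ∑ a, x (t a) * y (h a)

def natZ (x : V → ℕ) : V → ℤ := fun i => (x i : ℤ)
def intQ (x : V → ℤ) : V → ℚ := fun i => (x i : ℚ)
def natQ (x : V → ℕ) : V → ℚ := fun i => (x i : ℚ)

/-- The weight `⟨α,·⟩`. -/
def weightL (t h : A → V) (α : V → ℤ) : V → ℤ :=
  fun i => eulerForm t h α (fun j => if j = i then 1 else 0)

/-- The weight `−⟨·,α⟩`. -/
def weightR (t h : A → V) (α : V → ℤ) : V → ℤ :=
  fun i => - eulerForm t h (fun j => if j = i then 1 else 0) α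

/-- `IsPathFrom t h i p j` : the list of arrows `p` is a path from `i` to `j`. -/
def IsPathFrom (t h : A → V) : V → List A → V → Prop
  | i, [], j => i = j
  | i, a :: p, j => t a = i ∧ IsPathFrom t h (h a) p j

/-- The quiver has no (nontrivial) oriented cycles. -/
def Acyclic (t h : A → V) : Prop := ∀ (i : V) (p : List A), IsPathFrom t h i p i → p = []

/-- The dimension vector `γ_i` of the projective indecomposable at `i`:
`γ_i(j)` is the number of paths from `i` to `j`. -/
def gammaRoot (t h : A → V) (i : V) : V → ℕ :=
  fun j => Set.ncard {p : List A | IsPathFrom t h i p j}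

/-- A finite-dimensional representation of the quiver `(V, A, t, h)` over `K`. -/
structure QuivRep (K : Type) [Field K] (V A : Type) (t h : A → V) : Type 1 where
  sp : V → Type
  [inst1 : ∀ i, AddCommGroup (sp i)]
  [inst2 : ∀ i, Module K (sp i)]
  [inst3 : ∀ i, FiniteDimensional K (sp i)]
  map : ∀ a : A, sp (t a) →ₗ[K] sp (h a)

attribute [instance] QuivRep.inst1 QuivRep.inst2 QuivRep.inst3

namespace QuivRep

variable {K} {t h : A → V}

/-- The dimension vector of a representation. -/
def dimVec (X : QuivRep K V A t h) : V → ℕ := fun i => Module.finrank K (X.sp i)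

/-- A subrepresentation. -/
structure Sub (X : QuivRep K V A t h) where
  sub : ∀ i, Submodule K (X.sp i)
  le : ∀ a : A, ∀ x ∈ sub (t a), X.map a x ∈ sub (h a)

/-- The dimension vector of a subrepresentation. -/
def Sub.dimVec {X : QuivRep K V A t h} (U : Sub X) : V → ℕ :=
  fun i => Module.finrank K (U.sub i)

/-- The space `Hom_Q(X,Y)` of morphisms of representations, as a submodule of
`Π i, Hom_K(X(i),Y(i))`. -/
def homS (X Y : QuivRep K V A t h) : Submodule K (∀ i, X.sp i →ₗ[K] Y.sp i) where
  carrier := {φ | ∀ a : A, (φ (h a)).comp (X.map a) = (Y.map a).comp (φ (t a))}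
  zero_mem' := by intro a; simp
  add_mem' := by
    intro f g hf hg a
    simp only [Pi.add_apply, LinearMap.add_comp, LinearMap.comp_add, hf a, hg a]
  smul_mem' := by
    intro c f hf a
    simp only [Pi.smul_apply, LinearMap.smul_comp, LinearMap.comp_smul, hf a]

/-- The dimension of `Hom_Q(X,Y)`. -/
def homDim (X Y : QuivRep K V A t h) : ℕ := Module.finrank K (homS X Y)

/-- The map `d^X_Y` from Ringel's canonical exact sequence. -/
def dmap (X Y : QuivRep K V A t h) :
    (∀ i, X.sp i →ₗ[K] Y.sp i) →ₗ[K] (∀ a : A, X.sp (t a) →ₗ[K] Y.sp (h a)) where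
  toFun φ := fun a => (φ (h a)).comp (X.map a) - (Y.map a).comp (φ (t a))
  map_add' f g := by
    funext a
    simp only [Pi.add_apply, LinearMap.add_comp, LinearMap.comp_add]
    abel
  map_smul' c f := by
    funext a
    simp only [Pi.smul_apply, LinearMap.smul_comp, LinearMap.comp_smul, smul_sub,
      RingHom.id_apply]

/-- The dimension of `Ext^1_Q(X,Y)`, i.e. of the cokernel of `d^X_Y`. -/
def extDim (X Y : QuivRep K V A t h) : ℕ :=
  Module.finrank K ((∀ a : A, X.sp (t a) →ₗ[K] Y.sp (h a)) ⧸ LinearMap.range (dmap X Y))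

/-- A rigid representation: `Ext^1_Q(X,X) = 0`. -/
def IsRigid (X : QuivRep K V A t h) : Prop := extDim X X = 0

/-- A Schur representation: `End_Q(X) = K·id`. -/
def IsSchur (X : QuivRep K V A t h) : Prop := homDim X X = 1

/-- An exceptional representation: rigid and Schur. -/
def IsExceptional (X : QuivRep K V A t h) : Prop := IsRigid X ∧ IsSchur X

end QuivRep

/-- `β` is a real Schur root: the dimension vector of an exceptional representation. -/
def isRealSchurRoot (t h : A → V) (β : V → ℕ) : Prop :=
  ∃ X : QuivRep K V A t h, X.dimVec = β ∧ X.IsExceptional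

/-- `ext_Q(α,β)` : the generic (minimal) value of `dim Ext^1_Q` on pairs of
representations of dimension vectors `α`, `β`. -/
def extMin (t h : A → V) (α β : V → ℕ) : ℕ :=
  sInf {n | ∃ X Y : QuivRep K V A t h, X.dimVec = α ∧ Y.dimVec = β ∧ QuivRep.extDim X Y = n}

/-- `hom_Q(α,β)` : the generic (minimal) value of `dim Hom_Q`. -/
def homMin (t h : A → V) (α β : V → ℕ) : ℕ :=
  sInf {n | ∃ X Y : QuivRep K V A t h, X.dimVec = α ∧ Y.dimVec = β ∧ QuivRep.homDim X Y = n}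

/-- `β' ↪ β` : every representation of dimension vector `β` has a subrepresentation of
dimension vector `β'`. -/
def Embeds (t h : A → V) (β' β : V → ℕ) : Prop :=
  ∀ X : QuivRep K V A t h, X.dimVec = β → ∃ U : QuivRep.Sub X, U.dimVec = β'

/-- `σ`-semi-stability of a representation. -/
def IsSemistable {t h : A → V} (σ : V → ℤ) (X : QuivRep K V A t h) : Prop :=
  (∑ i, σ i * (X.dimVec i : ℤ)) = 0 ∧
  ∀ U : QuivRep.Sub X, (∑ i, σ i * (U.dimVec i : ℤ)) ≤ 0

/-- `σ`-stability of a representation. -/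
def IsStable {t h : A → V} (σ : V → ℤ) (X : QuivRep K V A t h) : Prop :=
  (∑ i, σ i * (X.dimVec i : ℤ)) = 0 ∧ X.dimVec ≠ (fun _ => 0) ∧
  ∀ U : QuivRep.Sub X, U.dimVec ≠ (fun _ => 0) → U.dimVec ≠ X.dimVec →
    (∑ i, σ i * (U.dimVec i : ℤ)) < 0

/-- Isomorphism of representations. -/
def RepIso {t h : A → V} (X Y : QuivRep K V A t h) : Prop :=
  ∃ e : ∀ i, X.sp i ≃ₗ[K] Y.sp i,
    ∀ (a : A) (x : X.sp (t a)), e (h a) (X.map a x) = Y.map a (e (t a) x)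

/-- A quiver exceptional sequence of dimension vectors. -/
def IsQES (t h : A → V) {l : ℕ} (b : Fin l → V → ℕ) : Prop :=
  (∀ j, isRealSchurRoot K t h (b j)) ∧
  ∀ i j : Fin l, i < j →
    homMin K t h (b i) (b j) = 0 ∧ extMin K t h (b i) (b j) = 0 ∧
      eulerForm t h (natZ (b j)) (natZ (b i)) ≤ 0

/-- The cone of nonnegative rational linear combinations of a finite set of integral
vectors. -/
def coneOf (C : Finset (V → ℤ)) : Set (V → ℚ) :=
  {x | ∃ lam : (V → ℤ) → ℚ, (∀ c, 0 ≤ lam c) ∧ x = ∑ c ∈ C, lam c • intQ c}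

/-- A compatible subset of the set `Ψ(Q)_{≥ -1}` of almost positive real Schur roots. -/
def IsCompatible (t h : A → V) (C : Finset (V → ℤ)) : Prop :=
  (∀ x ∈ C, (∃ β : V → ℕ, isRealSchurRoot K t h β ∧ x = natZ β) ∨
      (∃ i : V, x = fun j => -(gammaRoot t h i j : ℤ))) ∧
  (∀ x ∈ C, ∀ y ∈ C, x ≠ y →
    (∀ β₁ β₂ : V → ℕ, isRealSchurRoot K t h β₁ → isRealSchurRoot K t h β₂ →
      x = natZ β₁ → y = natZ β₂ → extMin K t h β₁ β₂ = 0) ∧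
    (∀ (β : V → ℕ) (i : V), isRealSchurRoot K t h β →
      x = natZ β → y = (fun j => -(gammaRoot t h i j : ℤ)) → β i = 0))

/-- The domain of semi-invariants `D(β) ⊆ ℚ^{Q_0}`. -/
def Dom (t h : A → V) (β : V → ℕ) : Set (V → ℚ) :=
  {x | eulerForm t h x (natQ β) = 0 ∧
    ∀ β' : V → ℕ, Embeds K t h β' β → eulerForm t h x (natQ β') ≤ 0}

/-- A quiver exceptional set: a subset of `Ψ(Q)_{≥ -1}` of the form
`{β_1,…,β_l, −γ_{i_{l+1}},…,−γ_{i_m}}` with `β_j(i_k) = 0` and whose real-Schur-root part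
can be ordered into a quiver exceptional sequence. -/
def IsQExcSet (t h : A → V) (E : Finset (V → ℤ)) : Prop :=
  ∃ (l m : ℕ) (b : Fin l → V → ℕ) (g : Fin m → V),
    Function.Injective b ∧ Function.Injective g ∧ IsQES K t h b ∧
    (∀ j k, b j (g k) = 0) ∧
    (E : Set (V → ℤ)) =
      (Set.range fun j => natZ (b j)) ∪
      (Set.range fun k => (fun v => -(gammaRoot t h (g k) v : ℤ)))


/-- The underlying graph of the quiver is connected. -/
def IsConnectedQuiver (t h : A → V) : Prop :=
  ∀ i j : V,
    Relation.ReflTransGen (fun u v => ∃ a, (t a = u ∧ h a = v) ∨ (t a = v ∧ h a = u)) i j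

/-- Morphisms of representations. -/
structure RepHom {K : Type} [Field K] {V A : Type} {t h : A → V}
    (X Y : QuivRep K V A t h) : Type where
  app : ∀ i, X.sp i →ₗ[K] Y.sp i
  comm : ∀ a : A, (app (h a)).comp (X.map a) = (Y.map a).comp (app (t a))

namespace RepHom

variable {K₀ : Type} [Field K₀] {t h : A → V}

/-- The identity morphism. -/
def idHom (X : QuivRep K₀ V A t h) : RepHom X X :=
  ⟨fun _ => LinearMap.id, fun a => by ext x; simp⟩

/-- Composition of morphisms. -/
def comp {X Y Z : QuivRep K₀ V A t h} (f : RepHom X Y) (g : RepHom Y Z) : RepHom X Z :=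
  ⟨fun i => (g.app i).comp (f.app i), fun a => by
    ext x
    have hf := LinearMap.congr_fun (f.comm a) x
    have hg := LinearMap.congr_fun (g.comm a) (f.app (t a) x)
    simp only [LinearMap.comp_apply] at hf hg ⊢
    rw [hf, hg]⟩

/-- Sum of morphisms. -/
def add {X Y : QuivRep K₀ V A t h} (f g : RepHom X Y) : RepHom X Y :=
  ⟨fun i => f.app i + g.app i, fun a => by
    simp only [LinearMap.add_comp, LinearMap.comp_add, f.comm a, g.comm a]⟩

/-- Scalar multiple of a morphism. -/
def smul {X Y : QuivRep K₀ V A t h} (c : K₀) (f : RepHom X Y) : RepHom X Y :=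
  ⟨fun i => c • f.app i, fun a => by
    simp only [LinearMap.smul_comp, LinearMap.comp_smul, f.comm a]⟩

end RepHom

/-- The number of arrows `i → j` in the Ext-quiver `Q(𝓔)` of a sequence of dimension
vectors: `−⟨β_i, β_j⟩` for `i ≠ j`. -/
def extMult (t h : A → V) {l : ℕ} (b : Fin l → V → ℕ) (i j : Fin l) : ℕ :=
  if i = j then 0 else (-(eulerForm t h (natZ (b i)) (natZ (b j)))).toNat

/-- The arrow set of the Ext-quiver `Q(𝓔)`. -/
abbrev ExtArrow (t h : A → V) {l : ℕ} (b : Fin l → V → ℕ) : Type :=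
  (i : Fin l) × (j : Fin l) × Fin (extMult t h b i j)

/-- The representation space `rep(Q,β)` as a product of matrix spaces. -/
abbrev RepSpace (t h : A → V) (β : V → ℕ) : Type :=
  ∀ a : A, Matrix (Fin (β (h a))) (Fin (β (t a))) K

/-- The (base-change) action of `GL(β)` on `rep(Q,β)`. -/
def glAct (t h : A → V) {β : V → ℕ}
    (g : ∀ i, Matrix.GeneralLinearGroup (Fin (β i)) K) (W : RepSpace K t h β) :
    RepSpace K t h β :=
  fun a => (g (h a) : Matrix (Fin (β (h a))) (Fin (β (h a))) K) * W a *
    (((g (t a))⁻¹ : Matrix.GeneralLinearGroup (Fin (β (t a))) K) :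
      Matrix (Fin (β (t a))) (Fin (β (t a))) K)

/-- A polynomial function on `rep(Q,β)`. -/
def IsPolyFun (t h : A → V) {β : V → ℕ} (f : RepSpace K t h β → K) : Prop :=
  ∃ P : MvPolynomial ((a : A) × (Fin (β (h a)) × Fin (β (t a)))) K,
    ∀ W, f W = MvPolynomial.eval (fun x => W x.1 x.2.1 x.2.2) P

/-- The weight space `SI(Q,β)_σ` of semi-invariant polynomial functions of weight `σ`. -/
def SIweight (t h : A → V) (β : V → ℕ) (σ : V → ℤ) :
    Submodule K (RepSpace K t h β → K) where
  carrier := {f | IsPolyFun K t h f ∧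
    ∀ (g : ∀ i, Matrix.GeneralLinearGroup (Fin (β i)) K) (W : RepSpace K t h β),
      f (glAct K t h g W) =
        (((∏ i, (Matrix.GeneralLinearGroup.det (g i)) ^ σ i : Kˣ) : K)) * f W}
  zero_mem' := by
    refine ⟨⟨0, by simp⟩, by simp⟩
  add_mem' := by
    rintro f g ⟨⟨P, hP⟩, hf⟩ ⟨⟨Q, hQ⟩, hg⟩
    refine ⟨⟨P + Q, fun W => ?_⟩, fun gg W => ?_⟩
    · simp [hP W, hQ W]
    · simp only [Pi.add_apply, hf gg W, hg gg W]; ring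
  smul_mem' := by
    rintro c f ⟨⟨P, hP⟩, hf⟩
    refine ⟨⟨MvPolynomial.C c * P, fun W => ?_⟩, fun gg W => ?_⟩
    · simp [hP W]
    · simp only [Pi.smul_apply, hf gg W, smul_eq_mul]; ring

/-- Entry of a matrix accessed through natural-number indices. -/
def entryN {m n : ℕ} (M : Matrix (Fin m) (Fin n) K) (r c : ℕ) : K :=
  if hr : r < m then (if hc : c < n then M ⟨r, hr⟩ ⟨c, hc⟩ else 0) else 0

/-- The matrix of the map `d^V_W` (with `V` of dimension vector `α` varying and `W` of
dimension vector `w` fixed), in the standard bases. -/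
def schofieldMatrix (t h : A → V) {α w : V → ℕ}
    (Vm : RepSpace K t h α) (W : RepSpace K t h w) :
    Matrix ((a : A) × (Fin (w (h a)) × Fin (α (t a)))) ((i : V) × (Fin (w i) × Fin (α i))) K :=
  fun r c =>
    (if c.1 = h r.1 ∧ (c.2.1 : ℕ) = (r.2.1 : ℕ) then
      entryN K (Vm r.1) (c.2.2 : ℕ) (r.2.2 : ℕ) else 0)
    - (if c.1 = t r.1 ∧ (c.2.2 : ℕ) = (r.2.2 : ℕ) then
      entryN K (W r.1) (r.2.1 : ℕ) (c.2.1 : ℕ) else 0)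

/-- The Schofield semi-invariant `c_W : rep(Q,α) → K`, `V ↦ det d^V_W` (defined when
`⟨α, dim W⟩ = 0`, i.e. when `d^V_W` is a square matrix). -/
def schofieldSI (t h : A → V) {α w : V → ℕ} (W : RepSpace K t h w)
    (Vm : RepSpace K t h α) : K :=
  if hc : Fintype.card ((i : V) × (Fin (w i) × Fin (α i))) =
      Fintype.card ((a : A) × (Fin (w (h a)) × Fin (α (t a)))) then
    ((schofieldMatrix K t h Vm W).submatrix (Fintype.equivOfCardEq hc) id).det
  else 0

/-- The representation of `Q` attached to a point of `rep(Q,β)`. -/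
def toRep (t h : A → V) {β : V → ℕ} (W : RepSpace K t h β) : QuivRep K V A t h where
  sp i := Fin (β i) → K
  map a := Matrix.mulVecLin (W a)

/-!
The weight `σ = ⟨α,·⟩` is studied through its torsion pair: torsion representations have only
quotients of positive weight, torsion-free ones only subrepresentations of weight at most zero.

If `α` is a nonnegative combination of compatible elements, then `σ` is a positive combination of
weights `⟨dim N_p,·⟩` with pairwise ext-orthogonal exceptional `N_p`, and of weights `⟨-γ_i,·⟩`.
Every `σ`-semistable `W` satisfies `Ext(N_p, W) = 0` and `W(i) = 0`, since its weight is a sum of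
nonpositive terms. Universal extension by the `N_p` turns the simple representation at a vertex
into a representation `E` orthogonal in the same sense, and each stable `W` is a quotient of such
an `E` with orthogonal kernel; by induction on `dim E`, only finitely many stable `W` arise.

Conversely, suppose that there are finitely many stable representations. Then the torsion category
has finitely many simple objects `B_j`, pairwise without nonzero morphisms, and an openness argument
along lines in the representation spaces orders them so that `Ext(B_i, B_j) ≠ 0` only in one
direction. Successive universal extensions yield exceptional representations `M_k` with
`⟨dim M_k, dim B_j⟩ = δ_{kj}`. The weight `σ - ∑ σ(B_k) ⟨dim M_k,·⟩` has again finitely many stable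
representations, and its semistable representations span a larger space of dimension vectors,
because they include the `B_j`. After finitely many such steps no torsion is left, so the weight is
nonpositive, i.e. a combination of the `⟨-γ_i,·⟩`.
-/

section Semistability

open QuivRep RepHom

variable {K : Type} [Field K] {V A : Type} {t h : A → V}

/-! ### Representations and exact sequences -/

section LinearAlgebra

variable {E F G : Type} [AddCommGroup E] [Module K E] [AddCommGroup F] [Module K F]
  [AddCommGroup G] [Module K G]

theorem exists_retraction (f : E →ₗ[K] F) (hf : Function.Injective f) :
    ∃ r : F →ₗ[K] E, ∀ x, r (f x) = x := by
  obtain ⟨r, hr⟩ := f.exists_leftInverse_of_injective (LinearMap.ker_eq_bot.2 hf)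
  exact ⟨r, fun x => LinearMap.congr_fun hr x⟩

theorem exists_section (g : E →ₗ[K] F) (hg : Function.Surjective g) :
    ∃ s : F →ₗ[K] E, ∀ x, g (s x) = x := by
  obtain ⟨s, hs⟩ := g.exists_rightInverse_of_surjective (LinearMap.range_eq_top.2 hg)
  exact ⟨s, fun x => LinearMap.congr_fun hs x⟩

theorem exists_factor_of_injective (f : E →ₗ[K] F) (hf : Function.Injective f) (u : G →ₗ[K] F)
    (hu : ∀ x, ∃ y, f y = u x) : ∃ v : G →ₗ[K] E, ∀ x, f (v x) = u x := by
  obtain ⟨r, hr⟩ := exists_retraction f hf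
  refine ⟨r.comp u, fun x => ?_⟩
  obtain ⟨y, hy⟩ := hu x
  rw [LinearMap.comp_apply, ← hy, hr]

theorem exists_factor_of_surjective (g : E →ₗ[K] F) (hg : Function.Surjective g) (u : E →ₗ[K] G)
    (hu : ∀ x, g x = 0 → u x = 0) : ∃ v : F →ₗ[K] G, ∀ x, v (g x) = u x := by
  obtain ⟨s, hs⟩ := exists_section g hg
  refine ⟨u.comp s, fun x => ?_⟩
  have hker : u (s (g x) - x) = 0 := hu _ (by rw [map_sub, hs, sub_self])
  rw [map_sub, sub_eq_zero] at hker
  exact hker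

end LinearAlgebra

section Morphisms

variable {X Y Z : QuivRep K V A t h}

namespace RepHom

theorem app_map (f : RepHom X Y) (a : A) (x : X.sp (t a)) :
    f.app (h a) (X.map a x) = Y.map a (f.app (t a) x) :=
  LinearMap.congr_fun (f.comm a) x

/-- The morphism with prescribed components, the commutation with the arrows being checked
elementwise. -/
def ofCommutes (φ : ∀ i, X.sp i →ₗ[K] Y.sp i)
    (hφ : ∀ a x, φ (h a) (X.map a x) = Y.map a (φ (t a) x)) : RepHom X Y :=
  ⟨φ, fun a => LinearMap.ext fun x => hφ a x⟩

@[simp] theorem ofCommutes_app (φ : ∀ i, X.sp i →ₗ[K] Y.sp i) (hφ) (i : V) :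
    (ofCommutes φ hφ : RepHom X Y).app i = φ i := rfl

@[simp] theorem comp_app_apply (f : RepHom X Y) (g : RepHom Y Z) (i : V) (x : X.sp i) :
    (f.comp g).app i x = g.app i (f.app i x) := rfl

@[simp] theorem idHom_app_apply (i : V) (x : X.sp i) : (idHom X).app i x = x := rfl

/-- The difference of two morphisms. -/
def sub (f g : RepHom X Y) : RepHom X Y :=
  ofCommutes (fun i => f.app i - g.app i) fun a x => by
    simp only [LinearMap.sub_apply, app_map, map_sub]

@[simp] theorem sub_app_apply (f g : RepHom X Y) (i : V) (x : X.sp i) :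
    (f.sub g).app i x = f.app i x - g.app i x := rfl

/-- The zero morphism. -/
def zero (X Y : QuivRep K V A t h) : RepHom X Y :=
  ofCommutes (fun _ => 0) fun a x => by simp only [LinearMap.zero_apply, map_zero]

/-- A monomorphism of representations. -/
def IsInjective (f : RepHom X Y) : Prop := ∀ i, Function.Injective (f.app i)

/-- An epimorphism of representations. -/
def IsSurjective (f : RepHom X Y) : Prop := ∀ i, Function.Surjective (f.app i)

/-- The morphism is zero, expressed elementwise. -/
def IsZero (f : RepHom X Y) : Prop := ∀ i x, f.app i x = 0

theorem isInjective_iff (f : RepHom X Y) :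
    f.IsInjective ↔ ∀ i x, f.app i x = 0 → x = 0 :=
  forall_congr' fun _ => injective_iff_map_eq_zero _

theorem IsInjective.comp {f : RepHom X Y} {g : RepHom Y Z} (hf : f.IsInjective)
    (hg : g.IsInjective) : (f.comp g).IsInjective := fun i => (hg i).comp (hf i)

theorem IsSurjective.comp {f : RepHom X Y} {g : RepHom Y Z} (hf : f.IsSurjective)
    (hg : g.IsSurjective) : (f.comp g).IsSurjective := fun i => (hg i).comp (hf i)

theorem IsInjective.id : (idHom X).IsInjective := fun _ => Function.injective_id

theorem IsSurjective.id : (idHom X).IsSurjective := fun _ => Function.surjective_id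

theorem repIso_of_bijective (f : RepHom X Y) (hinj : f.IsInjective) (hsurj : f.IsSurjective) :
    RepIso K X Y :=
  ⟨fun i => LinearEquiv.ofBijective (f.app i) ⟨hinj i, hsurj i⟩, fun a x => f.app_map a x⟩

/-- A short exact sequence `0 → L → M → N → 0` of representations, expressed elementwise. -/
structure ShortExact {L M N : QuivRep K V A t h} (f : RepHom L M) (g : RepHom M N) : Prop where
  injective : f.IsInjective
  surjective : g.IsSurjective
  comp_eq_zero : ∀ i x, g.app i (f.app i x) = 0
  exact : ∀ i x, g.app i x = 0 → ∃ y, f.app i y = x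

end RepHom

theorem RepIso.refl (X : QuivRep K V A t h) : RepIso K X X :=
  ⟨fun _ => LinearEquiv.refl _ _, fun _ _ => rfl⟩

theorem RepIso.symm (e : RepIso K X Y) : RepIso K Y X := by
  obtain ⟨e, he⟩ := e
  refine ⟨fun i => (e i).symm, fun a x => ?_⟩
  rw [LinearEquiv.symm_apply_eq, he, LinearEquiv.apply_symm_apply]

theorem RepIso.trans (e : RepIso K X Y) (e' : RepIso K Y Z) : RepIso K X Z := by
  obtain ⟨e, he⟩ := e
  obtain ⟨e', he'⟩ := e'
  exact ⟨fun i => (e i).trans (e' i), fun a x => by simp only [LinearEquiv.trans_apply, he, he']⟩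

theorem RepIso.exists_bijective_hom (e : RepIso K X Y) :
    ∃ f : RepHom X Y, f.IsInjective ∧ f.IsSurjective := by
  obtain ⟨e, he⟩ := e
  exact ⟨ofCommutes (fun i => (e i).toLinearMap) he, fun i => (e i).injective,
    fun i => (e i).surjective⟩

namespace QuivRep

/-- Every morphism `X → Y` is zero: `Hom_Q(X, Y) = 0`. -/
def HomVanishes (X Y : QuivRep K V A t h) : Prop := ∀ f : RepHom X Y, f.IsZero

/-- The target of the map `d^X_Y`, whose cokernel is `Ext^1_Q(X, Y)`. An element is the same
thing as an extension of `X` by `Y` that is split at every vertex. -/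
abbrev ExtCocycle (X Y : QuivRep K V A t h) : Type := ∀ a : A, X.sp (t a) →ₗ[K] Y.sp (h a)

/-- Every cocycle is a coboundary: `Ext^1_Q(X, Y) = 0`. -/
def ExtVanishes (X Y : QuivRep K V A t h) : Prop := Function.Surjective (dmap X Y)

/-- The representation is nonzero. -/
def IsNonzero (X : QuivRep K V A t h) : Prop := ∃ i, ∃ x : X.sp i, x ≠ 0

theorem not_homVanishes_iff : ¬ HomVanishes X Y ↔ ∃ f : RepHom X Y, ¬ f.IsZero := not_forall

theorem dmap_apply (φ : ∀ i, X.sp i →ₗ[K] Y.sp i) (a : A) (x : X.sp (t a)) :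
    dmap X Y φ a x = φ (h a) (X.map a x) - Y.map a (φ (t a) x) := rfl

theorem dmap_eq_iff {φ : ∀ i, X.sp i →ₗ[K] Y.sp i} {ξ : ExtCocycle X Y} :
    dmap X Y φ = ξ ↔ ∀ a x, φ (h a) (X.map a x) - Y.map a (φ (t a) x) = ξ a x := by
  simp only [funext_iff, LinearMap.ext_iff, dmap_apply]

theorem dmap_eq_zero_iff {φ : ∀ i, X.sp i →ₗ[K] Y.sp i} :
    dmap X Y φ = 0 ↔ ∀ a x, φ (h a) (X.map a x) = Y.map a (φ (t a) x) := by
  simp only [dmap_eq_iff, Pi.zero_apply, LinearMap.zero_apply, sub_eq_zero]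

/-- The pushforward of a cocycle along a morphism of its second argument. -/
def ExtCocycle.postcomp (ξ : ExtCocycle X Y) (f : RepHom Y Z) : ExtCocycle X Z :=
  fun a => (f.app (h a)).comp (ξ a)

/-- The pullback of a cocycle along a morphism to its first argument. -/
def ExtCocycle.precomp (ξ : ExtCocycle Y Z) (f : RepHom X Y) : ExtCocycle X Z :=
  fun a => (ξ a).comp (f.app (t a))

@[simp] theorem ExtCocycle.postcomp_apply (ξ : ExtCocycle X Y) (f : RepHom Y Z) (a : A)
    (x : X.sp (t a)) : ξ.postcomp f a x = f.app (h a) (ξ a x) := rfl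

@[simp] theorem ExtCocycle.precomp_apply (ξ : ExtCocycle Y Z) (f : RepHom X Y) (a : A)
    (x : X.sp (t a)) : ξ.precomp f a x = ξ a (f.app (t a) x) := rfl

theorem ExtCocycle.postcomp_dmap (φ : ∀ i, X.sp i →ₗ[K] Y.sp i) (f : RepHom Y Z) :
    postcomp (dmap X Y φ) f = dmap X Z fun i => (f.app i).comp (φ i) := by
  refine (dmap_eq_iff.2 fun a x => ?_).symm
  simp only [LinearMap.comp_apply, postcomp_apply, dmap_apply, map_sub, app_map]

theorem ExtCocycle.precomp_dmap (φ : ∀ i, Y.sp i →ₗ[K] Z.sp i) (f : RepHom X Y) :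
    precomp (dmap Y Z φ) f = dmap X Z fun i => (φ i).comp (f.app i) := by
  refine (dmap_eq_iff.2 fun a x => ?_).symm
  simp only [LinearMap.comp_apply, precomp_apply, dmap_apply, app_map]

end QuivRep

theorem RepHom.isNonzero_of_not_isZero {f : RepHom X Y} (hf : ¬ f.IsZero) :
    IsNonzero X ∧ IsNonzero Y := by
  simp only [IsZero, not_forall] at hf
  obtain ⟨i, x, hx⟩ := hf
  exact ⟨⟨i, x, fun hx0 => hx (by rw [hx0, map_zero])⟩, ⟨i, _, hx⟩⟩

theorem QuivRep.IsNonzero.of_injective {f : RepHom X Y} (hf : f.IsInjective) (hX : IsNonzero X) :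
    IsNonzero Y := by
  obtain ⟨i, x, hx⟩ := hX
  exact ⟨i, f.app i x, fun hfx => hx ((isInjective_iff f).1 hf i x hfx)⟩

theorem QuivRep.IsNonzero.of_surjective {f : RepHom X Y} (hf : f.IsSurjective)
    (hY : IsNonzero Y) : IsNonzero X := by
  obtain ⟨i, y, hy⟩ := hY
  obtain ⟨x, rfl⟩ := hf i y
  exact ⟨i, x, fun hx => hy (by rw [hx, map_zero])⟩

end Morphisms

section ExactSequences

variable {X L M N : QuivRep K V A t h} {f : RepHom L M} {g : RepHom M N}

theorem QuivRep.ExtVanishes.right_of_surjective (hg : g.IsSurjective) (H : ExtVanishes X M) :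
    ExtVanishes X N := by
  intro ξ
  choose s hs using fun i => exists_section (g.app i) (hg i)
  obtain ⟨φ, hφ⟩ := H fun a => (s (h a)).comp (ξ a)
  refine ⟨fun i => (g.app i).comp (φ i), dmap_eq_iff.2 fun a x => ?_⟩
  have hx := congrArg (g.app (h a)) (dmap_eq_iff.1 hφ a x)
  simpa only [map_sub, app_map, LinearMap.comp_apply, hs] using hx

theorem QuivRep.ExtVanishes.left_of_injective (hf : f.IsInjective) (H : ExtVanishes M X) :
    ExtVanishes L X := by
  intro ξ
  choose r hr using fun i => exists_retraction (f.app i) (hf i)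
  obtain ⟨φ, hφ⟩ := H fun a => (ξ a).comp (r (t a))
  refine ⟨fun i => (φ i).comp (f.app i), dmap_eq_iff.2 fun a x => ?_⟩
  have hx := dmap_eq_iff.1 hφ a (f.app (t a) x)
  simpa only [← app_map, LinearMap.comp_apply, hr] using hx

namespace RepHom.ShortExact

open ExtCocycle

variable (S : ShortExact f g)
include S

theorem exists_linear_lift {i : V} {E : Type} [AddCommGroup E] [Module K E]
    (u : E →ₗ[K] M.sp i) (hu : ∀ x, g.app i (u x) = 0) :
    ∃ v : E →ₗ[K] L.sp i, ∀ x, f.app i (v x) = u x :=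
  exists_factor_of_injective _ (S.injective i) u fun x => S.exact i _ (hu x)

theorem exists_linear_desc {i : V} {E : Type} [AddCommGroup E] [Module K E]
    (u : M.sp i →ₗ[K] E) (hu : ∀ x, u (f.app i x) = 0) :
    ∃ v : N.sp i →ₗ[K] E, ∀ x, v (g.app i x) = u x :=
  exists_factor_of_surjective _ (S.surjective i) u fun x hx => by
    obtain ⟨y, rfl⟩ := S.exact i x hx
    exact hu y

theorem exists_lift (u : RepHom X M) (hu : ∀ i x, g.app i (u.app i x) = 0) :
    ∃ v : RepHom X L, ∀ i x, f.app i (v.app i x) = u.app i x := by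
  choose v hv using fun i => S.exists_linear_lift (u.app i) (hu i)
  refine ⟨ofCommutes v fun a x => S.injective _ ?_, hv⟩
  rw [hv, app_map, app_map, hv]

theorem exists_desc (u : RepHom M X) (hu : ∀ i x, u.app i (f.app i x) = 0) :
    ∃ v : RepHom N X, ∀ i x, v.app i (g.app i x) = u.app i x := by
  choose v hv using fun i => S.exists_linear_desc (u.app i) (hu i)
  refine ⟨ofCommutes v fun a y => ?_, hv⟩
  obtain ⟨x, rfl⟩ := S.surjective _ y
  rw [hv, ← app_map, hv, app_map]

theorem exists_dmap_eq_of_comp_eq_zero (H : ExtVanishes X L) (ξ : ExtCocycle X M)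
    (hξ : ∀ a x, g.app (h a) (ξ a x) = 0) :
    ∃ φ : ∀ i, X.sp i →ₗ[K] M.sp i, dmap X M φ = ξ ∧ ∀ i x, g.app i (φ i x) = 0 := by
  choose η hη using fun a => S.exists_linear_lift (ξ a) (hξ a)
  obtain ⟨φ, hφ⟩ := H η
  refine ⟨fun i => (f.app i).comp (φ i), dmap_eq_iff.2 fun a x => ?_,
    fun i x => S.comp_eq_zero i _⟩
  rw [← hη, ← dmap_eq_iff.1 hφ, map_sub, app_map, LinearMap.comp_apply, LinearMap.comp_apply]

theorem exists_dmap_eq_of_precomp_eq_zero (H : ExtVanishes N X) (ξ : ExtCocycle M X)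
    (hξ : ∀ a x, ξ a (f.app (t a) x) = 0) :
    ∃ φ : ∀ i, M.sp i →ₗ[K] X.sp i, dmap M X φ = ξ ∧ ∀ i x, φ i (f.app i x) = 0 := by
  choose η hη using fun a => S.exists_linear_desc (ξ a) (hξ a)
  obtain ⟨φ, hφ⟩ := H η
  refine ⟨fun i => (φ i).comp (g.app i), dmap_eq_iff.2 fun a x => ?_, fun i x => ?_⟩
  · rw [← hη, ← dmap_eq_iff.1 hφ, LinearMap.comp_apply, LinearMap.comp_apply, app_map]
  · rw [LinearMap.comp_apply, S.comp_eq_zero, map_zero]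

theorem exists_eq_dmap_add_postcomp (hN : ExtVanishes X N) (ξ : ExtCocycle X M) :
    ∃ (φ : ∀ i, X.sp i →ₗ[K] M.sp i) (η : ExtCocycle X L), ξ = dmap X M φ + η.postcomp f := by
  choose s hs using fun i => exists_section (g.app i) (S.surjective i)
  obtain ⟨ψ, hψ⟩ := hN (ξ.postcomp g)
  let lifted : ∀ i, X.sp i →ₗ[K] M.sp i := fun i => (s i).comp (ψ i)
  choose η hη using fun a => S.exists_linear_lift ((ξ - dmap X M lifted) a) fun x => by
    have hx := dmap_eq_iff.1 hψ a x
    simp only [lifted, Pi.sub_apply, LinearMap.sub_apply, dmap_apply, LinearMap.comp_apply,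
      map_sub, app_map, hs, postcomp_apply] at hx ⊢
    rw [hx, sub_self]
  refine ⟨lifted, η, eq_add_of_sub_eq' (funext fun a => LinearMap.ext fun x => ?_)⟩
  exact (hη a x).symm

theorem exists_eq_dmap_add_precomp (hL : ExtVanishes L X) (ξ : ExtCocycle M X) :
    ∃ (φ : ∀ i, M.sp i →ₗ[K] X.sp i) (η : ExtCocycle N X), ξ = dmap M X φ + η.precomp g := by
  choose r hr using fun i => exists_retraction (f.app i) (S.injective i)
  obtain ⟨ψ, hψ⟩ := hL (ξ.precomp f)
  let extended : ∀ i, M.sp i →ₗ[K] X.sp i := fun i => (ψ i).comp (r i)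
  choose η hη using fun a => S.exists_linear_desc ((ξ - dmap M X extended) a) fun x => by
    have hx := dmap_eq_iff.1 hψ a x
    simp only [extended, Pi.sub_apply, LinearMap.sub_apply, dmap_apply, LinearMap.comp_apply,
      ← app_map, hr, precomp_apply] at hx ⊢
    rw [hx, sub_self]
  refine ⟨extended, η, eq_add_of_sub_eq' (funext fun a => LinearMap.ext fun x => ?_)⟩
  exact (hη a x).symm

theorem extVanishes_right (hL : ExtVanishes X L) (hN : ExtVanishes X N) : ExtVanishes X M := by
  intro ξ
  obtain ⟨φ, η, rfl⟩ := S.exists_eq_dmap_add_postcomp hN ξ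
  obtain ⟨ψ, rfl⟩ := hL η
  exact ⟨φ + fun i => (f.app i).comp (ψ i), by rw [map_add, postcomp_dmap]⟩

theorem extVanishes_left (hL : ExtVanishes L X) (hN : ExtVanishes N X) : ExtVanishes M X := by
  intro ξ
  obtain ⟨φ, η, rfl⟩ := S.exists_eq_dmap_add_precomp hL ξ
  obtain ⟨ψ, rfl⟩ := hN η
  exact ⟨φ + fun i => (ψ i).comp (g.app i), by rw [map_add, precomp_dmap]⟩

theorem exists_lifting (H : ExtVanishes X L) (ψ : RepHom X N) :
    ∃ θ : RepHom X M, ∀ i x, g.app i (θ.app i x) = ψ.app i x := by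
  choose s hs using fun i => exists_section (g.app i) (S.surjective i)
  let lifted : ∀ i, X.sp i →ₗ[K] M.sp i := fun i => (s i).comp (ψ.app i)
  obtain ⟨φ, hφ, hgφ⟩ := S.exists_dmap_eq_of_comp_eq_zero H (dmap X M lifted) fun a x => by
    simp only [lifted, dmap_apply, LinearMap.comp_apply, map_sub, app_map, hs, sub_self]
  refine ⟨ofCommutes (lifted - φ) (dmap_eq_zero_iff.1 ?_), fun i x => ?_⟩
  · rw [map_sub, hφ, sub_self]
  · rw [ofCommutes_app, Pi.sub_apply, LinearMap.sub_apply, map_sub, hgφ, sub_zero]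
    exact hs i _

theorem exists_extension (H : ExtVanishes N X) (ψ : RepHom L X) :
    ∃ θ : RepHom M X, ∀ i x, θ.app i (f.app i x) = ψ.app i x := by
  choose r hr using fun i => exists_retraction (f.app i) (S.injective i)
  let extended : ∀ i, M.sp i →ₗ[K] X.sp i := fun i => (ψ.app i).comp (r i)
  obtain ⟨φ, hφ, hφf⟩ := S.exists_dmap_eq_of_precomp_eq_zero H (dmap M X extended) fun a x => by
    simp only [extended, dmap_apply, LinearMap.comp_apply, ← app_map, hr, sub_self]
  refine ⟨ofCommutes (extended - φ) (dmap_eq_zero_iff.1 ?_), fun i x => ?_⟩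
  · rw [map_sub, hφ, sub_self]
  · rw [ofCommutes_app, Pi.sub_apply, LinearMap.sub_apply, hφf, sub_zero]
    exact congrArg (ψ.app i) (hr i x)

theorem extVanishes_right_sub (hN : HomVanishes X N) (hM : ExtVanishes X M) :
    ExtVanishes X L := by
  intro ξ
  obtain ⟨φ, hφ⟩ := hM fun a => (f.app (h a)).comp (ξ a)
  have hgφ : ∀ i x, g.app i (φ i x) = 0 := by
    refine hN (ofCommutes (fun i => (g.app i).comp (φ i)) fun a x => ?_)
    have hx := congrArg (g.app (h a)) (dmap_eq_iff.1 hφ a x)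
    rw [LinearMap.comp_apply, S.comp_eq_zero, map_sub, app_map, sub_eq_zero] at hx
    exact hx
  choose ψ hψ using fun i => S.exists_linear_lift (φ i) (hgφ i)
  refine ⟨ψ, dmap_eq_iff.2 fun a x => S.injective _ ?_⟩
  rw [map_sub, hψ, app_map, hψ, dmap_eq_iff.1 hφ, LinearMap.comp_apply]

end RepHom.ShortExact

end ExactSequences

section Constructions

variable {X Y Z L M N : QuivRep K V A t h}

namespace RepHom

/-- The kernel of a morphism. -/
def ker (f : RepHom X Y) : QuivRep K V A t h where
  sp i := LinearMap.ker (f.app i)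
  map a := (X.map a).restrict fun x hx => by
    rw [LinearMap.mem_ker] at hx ⊢
    rw [app_map, hx, map_zero]

/-- The inclusion of the kernel. -/
def kerInclusion (f : RepHom X Y) : RepHom f.ker X :=
  ofCommutes (fun i => (LinearMap.ker (f.app i)).subtype) fun _ _ => rfl

/-- The image of a morphism. -/
def range (f : RepHom X Y) : QuivRep K V A t h where
  sp i := LinearMap.range (f.app i)
  map a := (Y.map a).restrict fun x hx => by
    obtain ⟨y, rfl⟩ := hx
    exact ⟨X.map a y, app_map f a y⟩

/-- The inclusion of the image. -/
def rangeInclusion (f : RepHom X Y) : RepHom f.range Y :=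
  ofCommutes (fun i => (LinearMap.range (f.app i)).subtype) fun _ _ => rfl

/-- The corestriction of a morphism to its image. -/
def rangeRestrict (f : RepHom X Y) : RepHom X f.range :=
  ofCommutes (fun i => (f.app i).rangeRestrict) fun a x => Subtype.ext (app_map f a x)

/-- The cokernel of a morphism. -/
def coker (f : RepHom X Y) : QuivRep K V A t h where
  sp i := Y.sp i ⧸ LinearMap.range (f.app i)
  map a := Submodule.mapQ _ _ (Y.map a) fun x hx => by
    obtain ⟨y, rfl⟩ := hx
    exact ⟨X.map a y, app_map f a y⟩

/-- The projection onto the cokernel. -/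
def cokerProjection (f : RepHom X Y) : RepHom Y f.coker :=
  ofCommutes (fun i => (LinearMap.range (f.app i)).mkQ) fun _ _ => rfl

theorem kerInclusion_isInjective (f : RepHom X Y) : f.kerInclusion.IsInjective :=
  fun _ => Subtype.val_injective

theorem rangeInclusion_isInjective (f : RepHom X Y) : f.rangeInclusion.IsInjective :=
  fun _ => Subtype.val_injective

theorem rangeRestrict_isSurjective (f : RepHom X Y) : f.rangeRestrict.IsSurjective :=
  fun i => (f.app i).surjective_rangeRestrict

theorem cokerProjection_isSurjective (f : RepHom X Y) : f.cokerProjection.IsSurjective :=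
  fun _ => Submodule.mkQ_surjective _

@[simp] theorem rangeInclusion_rangeRestrict (f : RepHom X Y) (i : V) (x : X.sp i) :
    f.rangeInclusion.app i (f.rangeRestrict.app i x) = f.app i x := rfl

theorem cokerProjection_eq_zero_iff (f : RepHom X Y) {i : V} {y : Y.sp i} :
    f.cokerProjection.app i y = 0 ↔ ∃ x, f.app i x = y :=
  Submodule.Quotient.mk_eq_zero _

theorem shortExact_ker_range (f : RepHom X Y) : ShortExact f.kerInclusion f.rangeRestrict where
  injective := f.kerInclusion_isInjective
  surjective := f.rangeRestrict_isSurjective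
  comp_eq_zero _ x := Subtype.ext x.2
  exact _ x hx := ⟨⟨x, congrArg Subtype.val hx⟩, rfl⟩

theorem shortExact_ker {f : RepHom X Y} (hf : f.IsSurjective) : ShortExact f.kerInclusion f where
  injective := f.kerInclusion_isInjective
  surjective := hf
  comp_eq_zero _ x := x.2
  exact _ x hx := ⟨⟨x, hx⟩, rfl⟩

theorem shortExact_range_coker (f : RepHom X Y) :
    ShortExact f.rangeInclusion f.cokerProjection where
  injective := f.rangeInclusion_isInjective
  surjective := f.cokerProjection_isSurjective
  comp_eq_zero _ x := f.cokerProjection_eq_zero_iff.2 x.2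
  exact _ x hx := ⟨⟨x, f.cokerProjection_eq_zero_iff.1 hx⟩, rfl⟩

theorem shortExact_coker {f : RepHom X Y} (hf : f.IsInjective) :
    ShortExact f f.cokerProjection where
  injective := hf
  surjective := f.cokerProjection_isSurjective
  comp_eq_zero _ x := f.cokerProjection_eq_zero_iff.2 ⟨x, rfl⟩
  exact _ _ hx := f.cokerProjection_eq_zero_iff.1 hx

theorem not_isNonzero_ker_iff {f : RepHom X Y} : ¬ IsNonzero f.ker ↔ f.IsInjective := by
  rw [isInjective_iff]
  constructor
  · intro hker i x hx
    by_contra hx0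
    exact hker ⟨i, ⟨x, hx⟩, fun h0 => hx0 (congrArg Subtype.val h0)⟩
  · rintro hf ⟨i, x, hx⟩
    exact hx (Subtype.ext (hf i x.1 x.2))

theorem not_isNonzero_range_iff {f : RepHom X Y} : ¬ IsNonzero f.range ↔ f.IsZero := by
  constructor
  · intro hrange i x
    by_contra hx0
    exact hrange ⟨i, ⟨f.app i x, x, rfl⟩, fun h0 => hx0 (congrArg Subtype.val h0)⟩
  · rintro hf ⟨i, ⟨x, y, hy⟩, hx⟩
    exact hx (Subtype.ext (hy.symm.trans (hf i y)))

theorem not_homVanishes_range {f : RepHom X Y} (hf : ¬ f.IsZero) : ¬ HomVanishes X f.range :=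
  fun H => hf fun i x => by rw [← rangeInclusion_rangeRestrict, H, map_zero]

theorem rangeInclusion_isSurjective_iff {f : RepHom X Y} :
    f.rangeInclusion.IsSurjective ↔ f.IsSurjective := by
  refine forall_congr' fun i => ⟨fun H => ?_, fun H => ?_⟩
  · exact H.comp (f.rangeRestrict_isSurjective i)
  · exact Function.Surjective.of_comp (g := f.rangeRestrict.app i) H

theorem not_isNonzero_coker_iff {f : RepHom X Y} : ¬ IsNonzero f.coker ↔ f.IsSurjective := by
  constructor
  · intro hcoker i y
    by_contra hy
    exact hcoker ⟨i, f.cokerProjection.app i y, fun h0 => hy (f.cokerProjection_eq_zero_iff.1 h0)⟩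
  · rintro hf ⟨i, x, hx⟩
    obtain ⟨y, rfl⟩ := f.cokerProjection_isSurjective i x
    exact hx (f.cokerProjection_eq_zero_iff.2 (hf i y))

/-- The fibre product of two morphisms with the same target. -/
def pullback (g : RepHom X Z) (j : RepHom Y Z) : QuivRep K V A t h where
  sp i := LinearMap.eqLocus ((g.app i).comp (LinearMap.fst K _ _))
    ((j.app i).comp (LinearMap.snd K _ _))
  map a := ((X.map a).prodMap (Y.map a)).restrict fun x hx => by
    have hx' : g.app _ x.1 = j.app _ x.2 := hx
    change g.app _ (X.map a x.1) = j.app _ (Y.map a x.2)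
    rw [app_map, app_map, hx']

/-- The first projection of the fibre product. -/
def pullbackFst (g : RepHom X Z) (j : RepHom Y Z) : RepHom (pullback g j) X :=
  ofCommutes (fun _ => (LinearMap.fst K _ _).comp (Submodule.subtype _)) fun _ _ => rfl

/-- The second projection of the fibre product. -/
def pullbackSnd (g : RepHom X Z) (j : RepHom Y Z) : RepHom (pullback g j) Y :=
  ofCommutes (fun _ => (LinearMap.snd K _ _).comp (Submodule.subtype _)) fun _ _ => rfl

theorem pullback_condition (g : RepHom X Z) (j : RepHom Y Z) (i : V) (x : (pullback g j).sp i) :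
    g.app i ((pullbackFst g j).app i x) = j.app i ((pullbackSnd g j).app i x) := x.2

theorem pullbackFst_isInjective (g : RepHom X Z) {j : RepHom Y Z} (hj : j.IsInjective) :
    (pullbackFst g j).IsInjective := by
  refine (isInjective_iff _).2 fun i x hx => ?_
  have hsnd : (pullbackSnd g j).app i x = 0 := (isInjective_iff j).1 hj i _ (by
    rw [← pullback_condition, hx, map_zero])
  exact Subtype.ext (Prod.ext hx hsnd)

theorem ShortExact.exists_pullback {f : RepHom L M} {g : RepHom M N} (S : ShortExact f g)
    (j : RepHom Y N) : ∃ f' : RepHom L (pullback g j), ShortExact f' (pullbackSnd g j) := by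
  refine ⟨ofCommutes
    (fun i => LinearMap.codRestrict _ ((f.app i).prod 0) fun x => ?_) fun a x => ?_, ?_, ?_, ?_, ?_⟩
  · change g.app i (f.app i x) = j.app i 0
    rw [S.comp_eq_zero, map_zero]
  · exact Subtype.ext (Prod.ext (app_map f a x) (map_zero (Y.map a)).symm)
  · exact fun i x y hxy => S.injective i (congrArg (fun z => z.1.1) hxy)
  · intro i y
    obtain ⟨x, hx⟩ := S.surjective i (j.app i y)
    exact ⟨⟨(x, y), hx⟩, rfl⟩
  · exact fun _ _ => rfl
  · intro i x hx
    obtain ⟨y, hy⟩ := S.exact i ((pullbackFst g j).app i x) (by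
      rw [pullback_condition, hx, map_zero])
    exact ⟨y, Subtype.ext (Prod.ext hy hx.symm)⟩

end RepHom

namespace QuivRep

/-- The extension of `N` by `L` given by a cocycle `ξ`: the spaces are `L(i) × N(i)` and the arrow
`a` acts by `(x, y) ↦ (L(a) x + ξ(a) y, N(a) y)`. -/
def extension (ξ : ExtCocycle N L) : QuivRep K V A t h where
  sp i := L.sp i × N.sp i
  map a := ((L.map a).coprod (ξ a)).prod ((N.map a).comp (LinearMap.snd K _ _))

/-- The inclusion of the subrepresentation `L` into an extension of `N` by `L`. -/
def extensionInl (ξ : ExtCocycle N L) : RepHom L (extension ξ) :=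
  ofCommutes (fun _ => LinearMap.inl K _ _) fun a x => by
    refine Prod.ext ?_ (map_zero (N.map a)).symm
    change L.map a x = L.map a x + ξ a 0
    rw [map_zero, add_zero]

/-- The projection of an extension of `N` by `L` onto `N`. -/
def extensionSnd (ξ : ExtCocycle N L) : RepHom (extension ξ) N :=
  ofCommutes (fun _ => LinearMap.snd K _ _) fun _ _ => rfl

theorem shortExact_extension (ξ : ExtCocycle N L) :
    ShortExact (extensionInl ξ) (extensionSnd ξ) where
  injective _ := LinearMap.inl_injective
  surjective _ := LinearMap.snd_surjective
  comp_eq_zero _ _ := rfl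
  exact _ x hx := ⟨x.1, Prod.ext rfl (Eq.symm hx)⟩

/-- The linear retraction of an extension onto `L`; it commutes with the arrows only up to `ξ`. -/
def extensionFst (ξ : ExtCocycle N L) (i : V) : (extension ξ).sp i →ₗ[K] L.sp i :=
  LinearMap.fst K (L.sp i) (N.sp i)

/-- The linear section of an extension over `N`; it commutes with the arrows only up to `ξ`. -/
def extensionInr (ξ : ExtCocycle N L) (i : V) : N.sp i →ₗ[K] (extension ξ).sp i :=
  LinearMap.inr K (L.sp i) (N.sp i)

theorem extensionFst_map (ξ : ExtCocycle N L) (a : A) (x : (extension ξ).sp (t a)) :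
    extensionFst ξ (h a) ((extension ξ).map a x) =
      L.map a (extensionFst ξ (t a) x) + ξ a ((extensionSnd ξ).app (t a) x) := rfl

theorem extension_map_inr (ξ : ExtCocycle N L) (a : A) (y : N.sp (t a)) :
    (extension ξ).map a (extensionInr ξ (t a) y) =
      (extensionInl ξ).app (h a) (ξ a y) + extensionInr ξ (h a) (N.map a y) := by
  refine Prod.ext ?_ ?_
  · change L.map a 0 + ξ a y = ξ a y + 0
    rw [map_zero, zero_add, add_zero]
  · exact (zero_add _).symm

theorem mem_range_dmap_of_retraction {ξ : ExtCocycle N L} (ρ : RepHom (extension ξ) L)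
    (hρ : ∀ i x, ρ.app i ((extensionInl ξ).app i x) = x) : ξ ∈ LinearMap.range (dmap N L) := by
  refine ⟨fun i => -(ρ.app i).comp (extensionInr ξ i), dmap_eq_iff.2 fun a y => ?_⟩
  have hy := app_map ρ a (extensionInr ξ _ y)
  rw [extension_map_inr, map_add, hρ] at hy
  simp only [LinearMap.neg_apply, LinearMap.comp_apply, map_neg, ← hy]
  abel

theorem mem_range_dmap_of_section {ξ : ExtCocycle N L} (s : RepHom N (extension ξ))
    (hs : ∀ i x, (extensionSnd ξ).app i (s.app i x) = x) : ξ ∈ LinearMap.range (dmap N L) := by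
  refine ⟨fun i => (extensionFst ξ i).comp (s.app i), dmap_eq_iff.2 fun a y => ?_⟩
  rw [LinearMap.comp_apply, LinearMap.comp_apply, app_map, extensionFst_map, hs,
    add_sub_cancel_left]

theorem exists_notMem_range_dmap (hext : ¬ ExtVanishes N L) :
    ∃ ξ : ExtCocycle N L, ξ ∉ LinearMap.range (dmap N L) := by
  rw [ExtVanishes, ← LinearMap.range_eq_top] at hext
  exact SetLike.exists_not_mem_of_ne_top _ hext rfl

/-- The direct sum of a finite family of representations. -/
def directSum {ι : Type} [Finite ι] (B : ι → QuivRep K V A t h) : QuivRep K V A t h where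
  sp i := ∀ k, (B k).sp i
  map a := LinearMap.pi fun k => ((B k).map a).comp (LinearMap.proj k)

section DirectSum

variable {ι : Type} [Finite ι] (B : ι → QuivRep K V A t h)

/-- The projection of a direct sum onto a summand. -/
def directSumProj (k : ι) : RepHom (directSum B) (B k) :=
  ofCommutes (fun _ => LinearMap.proj k) fun _ _ => rfl

theorem directSum_ext {B : ι → QuivRep K V A t h} {i : V} {x y : (directSum B).sp i}
    (hxy : ∀ k, (directSumProj B k).app i x = (directSumProj B k).app i y) : x = y := funext hxy

/-- The inclusion of a summand into a direct sum. -/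
def directSumIncl [DecidableEq ι] (k : ι) : RepHom (B k) (directSum B) :=
  ofCommutes (fun i => LinearMap.single K (fun k => (B k).sp i) k) fun a x => by
    funext l
    exact (Pi.apply_single (fun k => (B k).map a) (fun k => map_zero _) k x l).symm

theorem directSumProj_incl [DecidableEq ι] (k : ι) (i : V) (x : (B k).sp i) :
    (directSumProj B k).app i ((directSumIncl B k).app i x) = x :=
  Pi.single_eq_same (M := fun k => (B k).sp i) k x

theorem directSumProj_incl_of_ne [DecidableEq ι] {k l : ι} (hl : l ≠ k) (i : V) (x : (B k).sp i) :
    (directSumProj B l).app i ((directSumIncl B k).app i x) = 0 :=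
  Pi.single_eq_of_ne (M := fun k => (B k).sp i) hl x

end DirectSum

theorem exists_shortExact_directSum_succ {n : ℕ} (B : Fin (n + 1) → QuivRep K V A t h) :
    ∃ (f : RepHom (B 0) (directSum B))
      (g : RepHom (directSum B) (directSum fun k : Fin n => B k.succ)), ShortExact f g := by
  refine ⟨directSumIncl B 0, ofCommutes
    (fun i => LinearMap.pi fun k => (directSumProj B k.succ).app i) fun _ _ => rfl, ?_, ?_, ?_, ?_⟩
  · refine (isInjective_iff _).2 fun i x hx => ?_
    rw [← directSumProj_incl B 0 i x, hx, map_zero]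
  · exact fun i y => ⟨Fin.cons 0 y, rfl⟩
  · exact fun i x => directSum_ext fun k => directSumProj_incl_of_ne B (Fin.succ_ne_zero k) i x
  · refine fun i x hx => ⟨(directSumProj B 0).app i x, directSum_ext fun k => ?_⟩
    refine Fin.cases ?_ (fun k => ?_) k
    · rw [directSumProj_incl]
    · rw [directSumProj_incl_of_ne B (Fin.succ_ne_zero k)]
      exact (congrFun hx k).symm

/-- The simple representation concentrated at the vertex `i`. -/
def simple (K : Type) [Field K] {V A : Type} [DecidableEq V] (t h : A → V) (i : V) :
    QuivRep K V A t h where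
  sp j := ↥(if j = i then ⊤ else ⊥ : Submodule K K)
  map _ := 0

end QuivRep

end Constructions

section Dimensions

variable {X Y L M N : QuivRep K V A t h} {f : RepHom L M} {g : RepHom M N}

theorem RepHom.ShortExact.dimVec (S : ShortExact f g) (i : V) :
    M.dimVec i = L.dimVec i + N.dimVec i := by
  have hrange : LinearMap.range (f.app i) = LinearMap.ker (g.app i) := by
    refine le_antisymm ?_ (S.exact i)
    rintro _ ⟨y, rfl⟩
    exact S.comp_eq_zero i y
  have hdim := LinearMap.finrank_range_add_finrank_ker (g.app i)
  rw [← hrange, LinearMap.finrank_range_of_inj (S.injective i),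
    LinearMap.range_eq_top.2 (S.surjective i), finrank_top] at hdim
  exact hdim.symm.trans (add_comm _ _)

theorem RepIso.dimVec_eq (e : RepIso K X Y) : X.dimVec = Y.dimVec := by
  obtain ⟨e, -⟩ := e
  exact funext fun i => (e i).finrank_eq

theorem QuivRep.not_isNonzero_iff_dimVec : ¬ IsNonzero X ↔ X.dimVec = fun _ => 0 := by
  simp only [IsNonzero, not_exists, not_not]
  constructor
  · intro hX
    funext i
    have : Subsingleton (X.sp i) := ⟨fun x y => by rw [hX i x, hX i y]⟩
    exact Module.finrank_zero_of_subsingleton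
  · intro hX i x
    have : Subsingleton (X.sp i) := Module.finrank_zero_iff.1 (congrFun hX i)
    exact Subsingleton.elim _ _

theorem RepHom.IsInjective.isSurjective_of_dimVec_eq {f : RepHom X Y} (hf : f.IsInjective)
    (hdim : X.dimVec = Y.dimVec) : f.IsSurjective := fun i =>
  (LinearMap.injective_iff_surjective_of_finrank_eq_finrank (congrFun hdim i)).1 (hf i)

theorem RepHom.IsSurjective.isInjective_of_dimVec_eq {f : RepHom X Y} (hf : f.IsSurjective)
    (hdim : X.dimVec = Y.dimVec) : f.IsInjective := fun i =>
  (LinearMap.injective_iff_surjective_of_finrank_eq_finrank (congrFun hdim i)).2 (hf i)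

variable [Fintype V]

namespace QuivRep

/-- The value `σ(dim X)` of a weight on the dimension vector of a representation. -/
def weight (σ : V → ℤ) (X : QuivRep K V A t h) : ℤ := ∑ i, σ i * (X.dimVec i : ℤ)

/-- The total dimension of a representation. -/
def totalDim (X : QuivRep K V A t h) : ℕ := ∑ i, X.dimVec i

theorem totalDim_pos_iff : 0 < totalDim X ↔ IsNonzero X := by
  rw [← not_iff_not, not_isNonzero_iff_dimVec, not_lt, Nat.le_zero, totalDim,
    Finset.sum_eq_zero_iff]
  simp only [Finset.mem_univ, true_imp_iff, funext_iff]

theorem weight_eq_zero_of_not_isNonzero (hX : ¬ IsNonzero X) (σ : V → ℤ) : weight σ X = 0 := by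
  rw [not_isNonzero_iff_dimVec] at hX
  simp only [weight, hX, Nat.cast_zero, mul_zero, Finset.sum_const_zero]

end QuivRep

theorem RepIso.weight_eq (e : RepIso K X Y) (σ : V → ℤ) : weight σ X = weight σ Y := by
  simp only [weight, e.dimVec_eq]

namespace RepHom

theorem ShortExact.weight (S : ShortExact f g) (σ : V → ℤ) :
    weight σ M = weight σ L + weight σ N := by
  simp only [QuivRep.weight, ← Finset.sum_add_distrib, ← mul_add]
  exact Finset.sum_congr rfl fun i _ => by rw [S.dimVec, Nat.cast_add]

theorem ShortExact.totalDim (S : ShortExact f g) : totalDim M = totalDim L + totalDim N := by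
  simp only [QuivRep.totalDim, ← Finset.sum_add_distrib]
  exact Finset.sum_congr rfl fun i _ => S.dimVec i

end RepHom

end Dimensions

section EulerForm

variable {X Y L M N : QuivRep K V A t h} {f : RepHom L M} {g : RepHom M N}

namespace QuivRep

theorem homS_eq_ker_dmap : homS X Y = LinearMap.ker (dmap X Y) := by
  ext φ
  simp only [LinearMap.mem_ker, dmap_eq_zero_iff]
  exact forall_congr' fun a => LinearMap.ext_iff

theorem extVanishes_iff_extDim [Finite A] : ExtVanishes X Y ↔ extDim X Y = 0 := by
  unfold extDim ExtVanishes
  rw [Module.finrank_zero_iff, Submodule.Quotient.subsingleton_iff, LinearMap.range_eq_top]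

theorem homVanishes_iff_homDim [Finite V] : HomVanishes X Y ↔ homDim X Y = 0 := by
  unfold homDim
  rw [Submodule.finrank_eq_zero, Submodule.eq_bot_iff]
  constructor
  · exact fun hom φ hφ => funext fun i => LinearMap.ext fun x => hom ⟨φ, hφ⟩ i x
  · exact fun hom f i x => LinearMap.congr_fun (congrFun (hom f.app f.comm) i) x

variable [Fintype V] [Fintype A]

/-- The value of the Euler form on the dimension vectors of two representations. -/
def eulerPairing (X Y : QuivRep K V A t h) : ℤ := eulerForm t h (natZ X.dimVec) (natZ Y.dimVec)

theorem eulerPairing_eq : eulerPairing X Y = homDim X Y - extDim X Y := by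
  have hker := LinearMap.finrank_range_add_finrank_ker (dmap X Y)
  have hcoker := Submodule.finrank_quotient_add_finrank (LinearMap.range (dmap X Y))
  rw [← homS_eq_ker_dmap] at hker
  simp only [Module.finrank_pi_fintype, Module.finrank_linearMap] at hker hcoker
  simp only [eulerPairing, eulerForm, homDim, extDim, natZ, dimVec]
  have hker' := congrArg (Nat.cast : ℕ → ℤ) hker
  have hcoker' := congrArg (Nat.cast : ℕ → ℤ) hcoker
  push_cast at hker' hcoker'
  rw [← hker', ← hcoker']
  ring

theorem weight_weightL [DecidableEq V] (α : V → ℤ) :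
    weight (weightL t h α) X = eulerForm t h α (natZ X.dimVec) := by
  simp only [weight, weightL, eulerForm, natZ, sub_mul, Finset.sum_sub_distrib, Finset.sum_mul]
  congr 1
  · simp only [mul_ite, mul_one, mul_zero, ite_mul, zero_mul, Finset.sum_ite_eq', Finset.mem_univ,
      if_true]
  · rw [Finset.sum_comm]
    simp only [mul_ite, mul_one, mul_zero, ite_mul, zero_mul, Finset.sum_ite_eq, Finset.mem_univ,
      if_true]

end QuivRep

namespace RepHom.ShortExact

variable [Fintype V] [Fintype A] (S : ShortExact f g)
include S

theorem eulerPairing_right : eulerPairing X M = eulerPairing X L + eulerPairing X N := by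
  simp only [eulerPairing, eulerForm, natZ, S.dimVec]
  push_cast
  simp only [mul_add, Finset.sum_add_distrib]
  ring

end RepHom.ShortExact

end EulerForm

section DimensionDrop

theorem finrank_quotient_lt {E F : Type} [AddCommGroup E] [Module K E] [FiniteDimensional K E]
    [AddCommGroup F] [Module K F] {p : Submodule K E} {q : Submodule K F} {P : E →ₗ[K] F}
    (hle : p ≤ q.comap P) (hsurj : ∀ y, ∃ x, y - P x ∈ q) {x : E} (hx : x ∉ p) (hPx : P x ∈ q) :
    Module.finrank K (F ⧸ q) < Module.finrank K (E ⧸ p) := by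
  let Q := Submodule.mapQ p q P hle
  have hQsurj : Function.Surjective Q := by
    intro y
    obtain ⟨y, rfl⟩ := Submodule.mkQ_surjective _ y
    obtain ⟨x, hx⟩ := hsurj y
    exact ⟨p.mkQ x, ((Submodule.Quotient.eq q).2 hx).symm⟩
  have hker : LinearMap.ker Q ≠ ⊥ := by
    refine (Submodule.ne_bot_iff _).2 ⟨p.mkQ x, ?_, ?_⟩
    · exact (Submodule.Quotient.mk_eq_zero q).2 hPx
    · exact fun h0 => hx ((Submodule.Quotient.mk_eq_zero p).1 h0)
  have hdim := LinearMap.finrank_range_add_finrank_ker Q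
  rw [LinearMap.range_eq_top.2 hQsurj, finrank_top] at hdim
  have hpos := Submodule.one_le_finrank_iff.2 hker
  omega

variable [Finite A] {X L M N : QuivRep K V A t h} {f : RepHom L M} {g : RepHom M N}

namespace RepHom.ShortExact

open ExtCocycle

theorem extDim_lt_left (S : ShortExact f g) (hL : ExtVanishes L X) {η : ExtCocycle N X}
    (hη : η ∉ LinearMap.range (dmap N X)) (hηM : η.precomp g ∈ LinearMap.range (dmap M X)) :
    extDim M X < extDim N X := by
  let precompₗ : ExtCocycle N X →ₗ[K] ExtCocycle M X :=
    { toFun := fun η => η.precomp g, map_add' := fun _ _ => rfl, map_smul' := fun _ _ => rfl }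
  refine finrank_quotient_lt (P := precompₗ) ?_ (fun ζ => ?_) hη hηM
  · rintro _ ⟨φ, rfl⟩
    exact ⟨_, (precomp_dmap φ g).symm⟩
  · obtain ⟨φ, η, rfl⟩ := S.exists_eq_dmap_add_precomp hL ζ
    exact ⟨η, φ, (add_sub_cancel_right _ _).symm⟩

theorem extDim_lt_right (S : ShortExact f g) (hN : ExtVanishes X N) {η : ExtCocycle X L}
    (hη : η ∉ LinearMap.range (dmap X L)) (hηM : η.postcomp f ∈ LinearMap.range (dmap X M)) :
    extDim X M < extDim X L := by
  let postcompₗ : ExtCocycle X L →ₗ[K] ExtCocycle X M :=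
    { toFun := fun η => η.postcomp f
      map_add' := fun _ _ => funext fun _ => LinearMap.ext fun _ => map_add (f.app _) _ _
      map_smul' := fun _ _ => funext fun _ => LinearMap.ext fun _ => map_smul (f.app _) _ _ }
  refine finrank_quotient_lt (P := postcompₗ) ?_ (fun ζ => ?_) hη hηM
  · rintro _ ⟨φ, rfl⟩
    exact ⟨_, (postcomp_dmap φ f).symm⟩
  · obtain ⟨φ, η, rfl⟩ := S.exists_eq_dmap_add_postcomp hN ζ
    exact ⟨η, φ, (add_sub_cancel_right _ _).symm⟩

end RepHom.ShortExact

namespace QuivRep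

theorem extDim_extension_left_lt (hL : ExtVanishes L X) {ξ : ExtCocycle N L} (p : RepHom L X)
    (hp : ξ.postcomp p ∉ LinearMap.range (dmap N X)) : extDim (extension ξ) X < extDim N X := by
  refine (shortExact_extension ξ).extDim_lt_left hL hp
    ⟨fun i => (p.app i).comp (extensionFst ξ i), dmap_eq_iff.2 fun a x => ?_⟩
  simp only [LinearMap.comp_apply, extensionFst_map, map_add, app_map, ExtCocycle.precomp_apply,
    ExtCocycle.postcomp_apply, add_sub_cancel_left]

theorem extDim_extension_right_lt (hN : ExtVanishes N N) {ξ : ExtCocycle N L}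
    (hξ : ξ ∉ LinearMap.range (dmap N L)) : extDim N (extension ξ) < extDim N L := by
  refine (shortExact_extension ξ).extDim_lt_right hN hξ
    ⟨fun i => -extensionInr ξ i, dmap_eq_iff.2 fun a x => ?_⟩
  simp only [LinearMap.neg_apply, map_neg, extension_map_inr, ExtCocycle.postcomp_apply]
  abel

end QuivRep

end DimensionDrop

/-! ### The torsion pair of a weight -/

section Torsion

variable {X Y L M N W : QuivRep K V A t h} {f : RepHom L M} {g : RepHom M N} {σ : V → ℤ}

namespace QuivRep

/-- A subrepresentation, regarded as a representation. -/
def Sub.toRep (U : Sub X) : QuivRep K V A t h where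
  sp i := U.sub i
  map a := (X.map a).restrict (U.le a)

/-- The inclusion of a subrepresentation. -/
def Sub.inclusion (U : Sub X) : RepHom U.toRep X :=
  ofCommutes (fun i => (U.sub i).subtype) fun _ _ => rfl

theorem Sub.dimVec_toRep (U : Sub X) : U.toRep.dimVec = U.dimVec := rfl

theorem Sub.inclusion_isInjective (U : Sub X) : U.inclusion.IsInjective :=
  fun _ => Subtype.val_injective

theorem Sub.dimVec_eq_of_isSurjective {U : Sub X} (hU : U.inclusion.IsSurjective) :
    U.dimVec = X.dimVec :=
  RepIso.dimVec_eq (repIso_of_bijective _ U.inclusion_isInjective hU)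

end QuivRep

/-- The image of a morphism, as a subrepresentation of its target. -/
def RepHom.rangeSub (f : RepHom X Y) : Sub Y where
  sub i := LinearMap.range (f.app i)
  le a x hx := by
    obtain ⟨y, rfl⟩ := hx
    exact ⟨X.map a y, app_map f a y⟩

theorem RepHom.IsInjective.dimVec_rangeSub {f : RepHom X Y} (hf : f.IsInjective) :
    f.rangeSub.dimVec = X.dimVec :=
  funext fun i => LinearMap.finrank_range_of_inj (hf i)

variable [Fintype V]

/-- `X` is a torsion object for `σ`: every nonzero quotient has positive weight. -/
def QuivRep.IsTorsion (σ : V → ℤ) (X : QuivRep K V A t h) : Prop :=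
  ∀ (Y : QuivRep K V A t h) (g : RepHom X Y), g.IsSurjective → IsNonzero Y → 0 < weight σ Y

/-- `X` is a torsion-free object for `σ`: every subobject has weight at most zero. -/
def QuivRep.IsTorsionFree (σ : V → ℤ) (X : QuivRep K V A t h) : Prop :=
  ∀ (Y : QuivRep K V A t h) (f : RepHom Y X), f.IsInjective → weight σ Y ≤ 0

theorem isSemistable_iff : IsSemistable K σ X ↔ weight σ X = 0 ∧ IsTorsionFree σ X := by
  refine and_congr Iff.rfl ⟨fun hX Y f hf => ?_, fun hX U => ?_⟩
  · rw [weight, ← hf.dimVec_rangeSub]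
    exact hX _
  · rw [← U.dimVec_toRep]
    exact hX U.toRep U.inclusion U.inclusion_isInjective

theorem isStable_iff : IsStable K σ X ↔ weight σ X = 0 ∧ IsNonzero X ∧
    ∀ (Y : QuivRep K V A t h) (f : RepHom Y X), f.IsInjective → IsNonzero Y → ¬ f.IsSurjective →
      weight σ Y < 0 := by
  simp only [IsStable, ne_eq, ← not_isNonzero_iff_dimVec, not_not]
  refine and_congr Iff.rfl (and_congr Iff.rfl ⟨fun hX Y f hf hY hsurj => ?_, fun hX U hU hne => ?_⟩)
  · rw [weight, ← hf.dimVec_rangeSub]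
    refine hX _ ?_ fun hdim => hsurj (hf.isSurjective_of_dimVec_eq ?_)
    · rwa [hf.dimVec_rangeSub, ← not_isNonzero_iff_dimVec, not_not]
    · rw [← hf.dimVec_rangeSub, hdim]
  · rw [← U.dimVec_toRep] at hU ⊢
    exact hX U.toRep U.inclusion U.inclusion_isInjective
      (not_not.1 fun hzero => hU (not_isNonzero_iff_dimVec.1 hzero))
      fun hsurj => hne (Sub.dimVec_eq_of_isSurjective hsurj)

theorem IsStable.weight_eq_zero (hX : IsStable K σ X) : weight σ X = 0 := hX.1

theorem IsStable.isNonzero (hX : IsStable K σ X) : IsNonzero X := (isStable_iff.1 hX).2.1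

theorem IsStable.weight_neg (hX : IsStable K σ X) {f : RepHom Y X} (hf : f.IsInjective)
    (hY : IsNonzero Y) (hsurj : ¬ f.IsSurjective) : weight σ Y < 0 :=
  (isStable_iff.1 hX).2.2 Y f hf hY hsurj

theorem IsSemistable.weight_eq_zero (hX : IsSemistable K σ X) : weight σ X = 0 := hX.1

theorem IsSemistable.isTorsionFree (hX : IsSemistable K σ X) : IsTorsionFree σ X :=
  (isSemistable_iff.1 hX).2

theorem IsStable.isSemistable (hX : IsStable K σ X) : IsSemistable K σ X := by
  refine isSemistable_iff.2 ⟨hX.weight_eq_zero, fun Y f hf => ?_⟩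
  by_cases hY : IsNonzero Y
  · by_cases hsurj : f.IsSurjective
    · exact ((repIso_of_bijective f hf hsurj).weight_eq σ).trans_le hX.weight_eq_zero.le
    · exact (hX.weight_neg hf hY hsurj).le
  · exact (weight_eq_zero_of_not_isNonzero hY σ).le

theorem IsSemistable.weight_nonneg (hX : IsSemistable K σ X) {g : RepHom X Y}
    (hg : g.IsSurjective) : 0 ≤ weight σ Y := by
  have hadd := (shortExact_ker hg).weight σ
  have hker := hX.isTorsionFree _ _ g.kerInclusion_isInjective
  rw [hX.weight_eq_zero] at hadd
  omega

theorem IsStable.weight_pos (hX : IsStable K σ X) {g : RepHom X Y} (hg : g.IsSurjective)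
    (hY : IsNonzero Y) (hinj : ¬ g.IsInjective) : 0 < weight σ Y := by
  have hadd := (shortExact_ker hg).weight σ
  have hker := hX.weight_neg g.kerInclusion_isInjective
    (not_not.1 fun hzero => hinj (not_isNonzero_ker_iff.1 hzero)) fun hsurj => by
      obtain ⟨i, y, hy⟩ := hY
      obtain ⟨x, rfl⟩ := hg i y
      obtain ⟨z, rfl⟩ := hsurj i x
      exact hy z.2
  rw [hX.weight_eq_zero] at hadd
  omega

namespace QuivRep

theorem IsTorsion.of_surjective (hX : IsTorsion σ X) {g : RepHom X Y} (hg : g.IsSurjective) :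
    IsTorsion σ Y :=
  fun _ _ hg' hZ => hX _ _ (hg.comp hg') hZ

theorem IsTorsionFree.of_injective (hX : IsTorsionFree σ X) {f : RepHom Y X}
    (hf : f.IsInjective) : IsTorsionFree σ Y :=
  fun _ _ hf' => hX _ _ (hf'.comp hf)

theorem IsTorsion.weight_pos (hX : IsTorsion σ X) (hX0 : IsNonzero X) : 0 < weight σ X :=
  hX X _ IsSurjective.id hX0

theorem IsTorsion.weight_nonneg (hX : IsTorsion σ X) : 0 ≤ weight σ X := by
  by_cases hX0 : IsNonzero X
  · exact (hX.weight_pos hX0).le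
  · exact (weight_eq_zero_of_not_isNonzero hX0 σ).ge

theorem IsTorsionFree.weight_nonpos (hX : IsTorsionFree σ X) : weight σ X ≤ 0 :=
  hX X _ IsInjective.id

theorem IsTorsionFree.of_iso (hX : IsTorsionFree σ X) (e : RepIso K X Y) : IsTorsionFree σ Y := by
  obtain ⟨f, hf, -⟩ := e.symm.exists_bijective_hom
  exact hX.of_injective hf

theorem isTorsion_of_not_isNonzero (hX : ¬ IsNonzero X) : IsTorsion σ X :=
  fun _ _ hg hY => (hX (hY.of_surjective hg)).elim

theorem isTorsionFree_of_not_isNonzero (hX : ¬ IsNonzero X) : IsTorsionFree σ X :=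
  fun _ _ hf => (weight_eq_zero_of_not_isNonzero (fun hY => hX (hY.of_injective hf)) σ).le

theorem IsTorsion.not_isNonzero_of_isTorsionFree (hX : IsTorsion σ X) (hX' : IsTorsionFree σ X) :
    ¬ IsNonzero X :=
  fun hX0 => (hX.weight_pos hX0).not_ge hX'.weight_nonpos

theorem IsTorsion.homVanishes (hX : IsTorsion σ X) (hY : IsTorsionFree σ Y) : HomVanishes X Y :=
  fun f => not_isNonzero_range_iff.1 <|
    (hX.of_surjective f.rangeRestrict_isSurjective).not_isNonzero_of_isTorsionFree
      (hY.of_injective f.rangeInclusion_isInjective)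

end QuivRep

theorem isSemistable_of_not_isNonzero (hX : ¬ IsNonzero X) : IsSemistable K σ X :=
  isSemistable_iff.2 ⟨weight_eq_zero_of_not_isNonzero hX σ, isTorsionFree_of_not_isNonzero hX⟩

namespace RepHom.ShortExact

variable (S : ShortExact f g)
include S

theorem isTorsion (hL : IsTorsion σ L) (hN : IsTorsion σ N) : IsTorsion σ M := by
  intro Y u hu hY
  have hadd := (shortExact_range_coker (f.comp u)).weight σ
  have hrange : IsTorsion σ (f.comp u).range := hL.of_surjective (rangeRestrict_isSurjective _)
  obtain ⟨v, hv⟩ := S.exists_desc (u.comp (f.comp u).cokerProjection) fun i x =>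
    (f.comp u).cokerProjection_eq_zero_iff.2 ⟨x, rfl⟩
  have hcoker : IsTorsion σ (f.comp u).coker := hN.of_surjective (g := v) fun i z => by
    obtain ⟨x, hx⟩ := hu.comp (f.comp u).cokerProjection_isSurjective i z
    exact ⟨g.app i x, by rw [hv, hx]⟩
  by_cases hcoker0 : IsNonzero (f.comp u).coker
  · have hpos := hcoker.weight_pos hcoker0
    have hnonneg := hrange.weight_nonneg
    omega
  · have hzero := weight_eq_zero_of_not_isNonzero hcoker0 σ
    rw [not_isNonzero_coker_iff] at hcoker0
    have hrange0 : IsNonzero (f.comp u).range := by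
      obtain ⟨i, y, hy⟩ := hY
      obtain ⟨x, hx⟩ := hcoker0 i y
      exact not_not.1 fun hzero => hy (hx ▸ not_isNonzero_range_iff.1 hzero i x)
    have hpos := hrange.weight_pos hrange0
    omega

theorem isTorsionFree (hL : IsTorsionFree σ L) (hN : IsTorsionFree σ N) : IsTorsionFree σ M := by
  intro Y u hu
  have hadd := (shortExact_ker_range (u.comp g)).weight σ
  have hrange : QuivRep.weight σ (u.comp g).range ≤ 0 := hN _ _ (rangeInclusion_isInjective _)
  obtain ⟨v, hv⟩ := S.exists_lift ((u.comp g).kerInclusion.comp u) fun i x => x.2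
  have hker : QuivRep.weight σ (u.comp g).ker ≤ 0 := by
    refine hL _ v ((isInjective_iff v).2 fun i x hx => ?_)
    refine (isInjective_iff _).1 ((u.comp g).kerInclusion_isInjective.comp hu) i x ?_
    rw [← hv, hx, map_zero]
  omega

theorem isSemistable (hL : IsSemistable K σ L) (hN : IsSemistable K σ N) : IsSemistable K σ M :=
  isSemistable_iff.2 ⟨by rw [S.weight, hL.weight_eq_zero, hN.weight_eq_zero, add_zero],
    S.isTorsionFree hL.isTorsionFree hN.isTorsionFree⟩

theorem isSemistable_right (hL : QuivRep.weight σ L = 0) (hM : IsSemistable K σ M) :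
    IsSemistable K σ N := by
  have hadd := S.weight σ
  rw [hL, hM.weight_eq_zero, zero_add] at hadd
  refine isSemistable_iff.2 ⟨hadd.symm, fun Y j hj => ?_⟩
  obtain ⟨f', S'⟩ := S.exists_pullback j
  have hpullback := hM.isTorsionFree _ _ (pullbackFst_isInjective g hj)
  rwa [S'.weight, hL, zero_add] at hpullback

theorem isSemistable_left (hN : QuivRep.weight σ N = 0) (hM : IsSemistable K σ M) :
    IsSemistable K σ L := by
  have hadd := S.weight σ
  rw [hN, hM.weight_eq_zero, add_zero] at hadd
  exact isSemistable_iff.2 ⟨hadd.symm, hM.isTorsionFree.of_injective S.injective⟩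

end RepHom.ShortExact

theorem RepHom.IsInjective.weight_le {f : RepHom Y X} (hf : f.IsInjective) (σ : V → ℤ) :
    weight σ Y ≤ ∑ i, |σ i| * X.dimVec i := by
  refine Finset.sum_le_sum fun i _ => ?_
  have hdim : (Y.dimVec i : ℤ) ≤ X.dimVec i := by
    exact_mod_cast LinearMap.finrank_le_finrank_of_injective (hf i)
  gcongr
  exact le_abs_self _

theorem QuivRep.exists_maximal_weight (σ : V → ℤ) (X : QuivRep K V A t h) :
    ∃ (T : QuivRep K V A t h) (f : RepHom T X), f.IsInjective ∧
      (∀ (Y : QuivRep K V A t h) (u : RepHom Y X), u.IsInjective → weight σ Y ≤ weight σ T) ∧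
      ∀ (Y : QuivRep K V A t h) (u : RepHom Y X), u.IsInjective → weight σ Y = weight σ T →
        totalDim T ≤ totalDim Y := by
  classical
  obtain ⟨m, ⟨Y₀, u₀, hu₀, hY₀⟩, hmax⟩ := Int.exists_greatest_of_bdd
    (P := fun m => ∃ (Y : QuivRep K V A t h) (u : RepHom Y X), u.IsInjective ∧ weight σ Y = m)
    ⟨_, by rintro _ ⟨Y, u, hu, rfl⟩; exact hu.weight_le σ⟩ ⟨_, X, _, IsInjective.id, rfl⟩
  have hexists : ∃ n, ∃ (Y : QuivRep K V A t h) (u : RepHom Y X), u.IsInjective ∧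
      weight σ Y = m ∧ totalDim Y = n := ⟨_, Y₀, u₀, hu₀, hY₀, rfl⟩
  obtain ⟨T, f, hf, rfl, hdim⟩ := Nat.find_spec hexists
  exact ⟨T, f, hf, fun Y u hu => hmax _ ⟨Y, u, hu, rfl⟩, fun Y u hu hY =>
    hdim.trans_le (Nat.find_min' hexists ⟨Y, u, hu, hY, rfl⟩)⟩

-- The torsion part is a subobject of maximal weight and, among those, of minimal dimension.
theorem QuivRep.exists_torsion_sequence (σ : V → ℤ) (X : QuivRep K V A t h) :
    ∃ (T F : QuivRep K V A t h) (f : RepHom T X) (g : RepHom X F),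
      ShortExact f g ∧ IsTorsion σ T ∧ IsTorsionFree σ F := by
  obtain ⟨T, f, hf, hmax, hmin⟩ := exists_maximal_weight σ X
  have S := shortExact_coker hf
  refine ⟨T, f.coker, f, f.cokerProjection, S, fun Y g hg hY => ?_, fun Y j hj => ?_⟩
  · have hker := g.kerInclusion_isInjective.comp hf
    have hadd := (shortExact_ker hg).weight σ
    have hle := hmax _ _ hker
    by_contra hneg
    have hdim := hmin _ _ hker (by omega)
    rw [(shortExact_ker hg).totalDim] at hdim
    have hpos := totalDim_pos_iff.2 hY
    omega
  · obtain ⟨f', S'⟩ := S.exists_pullback j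
    have hle := hmax _ _ (pullbackFst_isInjective f.cokerProjection hj)
    rwa [S'.weight, add_le_iff_nonpos_right] at hle

theorem QuivRep.isTorsionFree_of_forall_isTorsion
    (hX : ∀ (T : QuivRep K V A t h) (u : RepHom T X), u.IsInjective → IsTorsion σ T →
      ¬ IsNonzero T) : IsTorsionFree σ X := by
  intro Y f hf
  obtain ⟨T, F, u, v, S, hT, hF⟩ := exists_torsion_sequence σ Y
  have hzero := weight_eq_zero_of_not_isNonzero (hX T _ (S.injective.comp hf) hT) σ
  rw [S.weight, hzero, zero_add]
  exact hF.weight_nonpos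

end Torsion

section Stable

variable {X Y W : QuivRep K V A t h}

/-- A representation all of whose endomorphisms are scalars. -/
def QuivRep.IsBrick (X : QuivRep K V A t h) : Prop :=
  ∀ f : RepHom X X, ∃ c : K, ∀ i x, f.app i x = c • x

theorem QuivRep.IsBrick.exists_ne_zero (hX : IsBrick X) {f : RepHom X X} (hf : ¬ f.IsZero) :
    ∃ c : K, c ≠ 0 ∧ ∀ i x, f.app i x = c • x := by
  obtain ⟨c, hc⟩ := hX f
  refine ⟨c, ?_, hc⟩
  rintro rfl
  exact hf fun i x => by rw [hc, zero_smul]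

theorem QuivRep.isBrick_of_injective_end [IsAlgClosed K] (hX : IsNonzero X)
    (hend : ∀ f : RepHom X X, ¬ f.IsZero → f.IsInjective) : IsBrick X := by
  intro f
  obtain ⟨i, x, hx⟩ := hX
  have : Nontrivial (X.sp i) := ⟨x, 0, hx⟩
  obtain ⟨c, hc⟩ := Module.End.exists_eigenvalue (f.app i : Module.End K (X.sp i))
  obtain ⟨v, hv⟩ := hc.exists_hasEigenvector
  have hzero : (f.sub (RepHom.smul c (idHom X))).IsZero := by
    by_contra hne
    exact hv.2 ((isInjective_iff _).1 (hend _ hne) i v (sub_eq_zero.2 hv.apply_eq_smul))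
  exact ⟨c, fun j y => sub_eq_zero.1 (hzero j y)⟩

variable [Fintype V] {σ : V → ℤ}

theorem IsStable.isInjective_of_not_isZero (hW : IsStable K σ W) (hX : IsSemistable K σ X)
    {f : RepHom W X} (hf : ¬ f.IsZero) : f.IsInjective := by
  by_contra hinj
  have hpos := hW.weight_pos f.rangeRestrict_isSurjective
    (not_not.1 fun hzero => hf (not_isNonzero_range_iff.1 hzero))
    fun hrestrict => hinj (hrestrict.comp f.rangeInclusion_isInjective)
  exact hpos.not_ge (hX.isTorsionFree _ _ f.rangeInclusion_isInjective)

theorem IsStable.isSurjective_of_not_isZero (hW : IsStable K σ W) (hX : IsSemistable K σ X)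
    {f : RepHom X W} (hf : ¬ f.IsZero) : f.IsSurjective := by
  by_contra hsurj
  have hneg := hW.weight_neg f.rangeInclusion_isInjective
    (not_not.1 fun hzero => hf (not_isNonzero_range_iff.1 hzero))
    fun hincl => hsurj (f.rangeRestrict_isSurjective.comp hincl)
  exact hneg.not_ge (hX.weight_nonneg f.rangeRestrict_isSurjective)

theorem exists_isStable_sub (hX : IsSemistable K σ X) (hX0 : IsNonzero X) :
    ∃ (W : QuivRep K V A t h) (f : RepHom W X), IsStable K σ W ∧ f.IsInjective := by
  induction hn : totalDim X using Nat.strong_induction_on generalizing X with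
  | _ n ih =>
    by_cases hstable : IsStable K σ X
    · exact ⟨X, idHom X, hstable, IsInjective.id⟩
    obtain ⟨Y, f, hf, hY, hsurj, hweight⟩ : ∃ (Y : QuivRep K V A t h) (f : RepHom Y X),
        f.IsInjective ∧ IsNonzero Y ∧ ¬ f.IsSurjective ∧ 0 ≤ weight σ Y := by
      contrapose! hstable
      exact isStable_iff.2 ⟨hX.weight_eq_zero, hX0, hstable⟩
    have hYss : IsSemistable K σ Y := isSemistable_iff.2
      ⟨le_antisymm (hX.isTorsionFree Y f hf) hweight, hX.isTorsionFree.of_injective hf⟩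
    have hdim := (shortExact_coker hf).totalDim
    have hpos := totalDim_pos_iff.2
      (not_not.1 fun hzero => hsurj (not_isNonzero_coker_iff.1 hzero))
    obtain ⟨W, u, hW, hu⟩ := ih (totalDim Y) (by omega) hYss hY rfl
    exact ⟨W, u.comp f, hW, hu.comp hf⟩

theorem IsSemistable.induction {P : QuivRep K V A t h → Prop}
    (zero : ∀ X, ¬ IsNonzero X → P X)
    (extend : ∀ (L M N : QuivRep K V A t h) (f : RepHom L M) (g : RepHom M N), ShortExact f g →
      IsStable K σ L → IsSemistable K σ N → P N → P M) (hX : IsSemistable K σ X) : P X := by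
  induction hn : totalDim X using Nat.strong_induction_on generalizing X with
  | _ n ih =>
    by_cases hX0 : IsNonzero X
    · obtain ⟨W, f, hW, hf⟩ := exists_isStable_sub hX hX0
      have S := shortExact_coker hf
      have hcoker := S.isSemistable_right hW.weight_eq_zero hX
      have hdim := S.totalDim
      have hpos := totalDim_pos_iff.2 hW.isNonzero
      exact extend _ _ _ _ _ S hW hcoker (ih _ (by omega) hcoker rfl)
    · exact zero X hX0

end Stable

/-! ### Acyclic quivers -/

section Quiver

/-- The relation of being joined by an arrow. -/
def HasArrow (t h : A → V) (i j : V) : Prop := ∃ a, t a = i ∧ h a = j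

theorem IsPathFrom.append {i j k : V} {p q : List A} (hp : IsPathFrom t h i p j)
    (hq : IsPathFrom t h j q k) : IsPathFrom t h i (p ++ q) k := by
  induction p generalizing i with
  | nil => cases hp; exact hq
  | cons a p ih => exact ⟨hp.1, ih hp.2⟩

theorem exists_isPathFrom_of_transGen {i j : V} (hij : Relation.TransGen (HasArrow t h) i j) :
    ∃ p : List A, p ≠ [] ∧ IsPathFrom t h i p j := by
  induction hij with
  | single harrow =>
    obtain ⟨a, ha⟩ := harrow
    exact ⟨[a], by simp, ha⟩
  | tail _ harrow ih =>
    obtain ⟨p, -, hp⟩ := ih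
    obtain ⟨a, ha⟩ := harrow
    exact ⟨p ++ [a], by simp, hp.append ha⟩

theorem Acyclic.irrefl_transGen (hQ : Acyclic t h) (i : V) :
    ¬ Relation.TransGen (HasArrow t h) i i := fun hi => by
  obtain ⟨p, hp, hpath⟩ := exists_isPathFrom_of_transGen hi
  exact hp (hQ i p hpath)

theorem Acyclic.wellFounded [Finite V] (hQ : Acyclic t h) : WellFounded (HasArrow t h) :=
  have : Std.Irrefl (Relation.TransGen (HasArrow t h)) := ⟨hQ.irrefl_transGen⟩
  Subrelation.wf Relation.TransGen.single
    (Finite.wellFounded_of_trans_of_irrefl (Relation.TransGen (HasArrow t h)))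

theorem Acyclic.wellFounded_swap [Finite V] (hQ : Acyclic t h) :
    WellFounded (Function.swap (HasArrow t h)) :=
  have : Std.Irrefl (Relation.TransGen (Function.swap (HasArrow t h))) :=
    ⟨fun i hi => hQ.irrefl_transGen i (Relation.transGen_swap.1 hi)⟩
  Subrelation.wf Relation.TransGen.single
    (Finite.wellFounded_of_trans_of_irrefl (Relation.TransGen (Function.swap (HasArrow t h))))

/-- A path is either trivial or an arrow followed by a path. -/
def pathEquiv (t h : A → V) (i j : V) : {p : List A | IsPathFrom t h i p j} ≃
    (PLift (i = j)) ⊕ (Σ a : {a : A // t a = i}, {p : List A | IsPathFrom t h (h a) p j}) where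
  toFun p := match p with
    | ⟨[], hp⟩ => Sum.inl ⟨hp⟩
    | ⟨a :: p, hp⟩ => Sum.inr ⟨⟨a, hp.1⟩, ⟨p, hp.2⟩⟩
  invFun s := match s with
    | Sum.inl e => ⟨[], e.down⟩
    | Sum.inr ⟨a, p⟩ => ⟨a :: p, ⟨a.2, p.2⟩⟩
  left_inv := by rintro ⟨_ | ⟨a, p⟩, hp⟩ <;> rfl
  right_inv := by rintro (e | ⟨a, p⟩) <;> rfl

theorem Acyclic.finite_isPathFrom [Finite V] [Finite A] (hQ : Acyclic t h) (i j : V) :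
    Finite {p : List A | IsPathFrom t h i p j} := by
  induction i using hQ.wellFounded_swap.induction with
  | _ i ih =>
    have (a : {a : A // t a = i}) : Finite {p : List A | IsPathFrom t h (h a) p j} :=
      ih _ ⟨a, a.2, rfl⟩
    exact Finite.of_equiv _ (pathEquiv t h i j).symm

theorem Acyclic.gammaRoot_eq [Finite V] [DecidableEq V] [Fintype A] (hQ : Acyclic t h) (i j : V) :
    gammaRoot t h i j =
      (if i = j then 1 else 0) + ∑ a : {a : A // t a = i}, gammaRoot t h (h a) j := by
  have (a : {a : A // t a = i}) : Finite {p : List A | IsPathFrom t h (h a) p j} :=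
    hQ.finite_isPathFrom _ _
  have hcard : Nat.card (PLift (i = j)) = if i = j then 1 else 0 := by
    split_ifs with hij <;> simp [hij]
  simp only [gammaRoot]
  rw [← Nat.card_coe_set_eq, Nat.card_congr (pathEquiv t h i j), Nat.card_sum, Nat.card_sigma,
    hcard]
  rfl

variable [Fintype V] [Fintype A]

section EulerForm

variable {R : Type} [CommRing R]

theorem eulerForm_add_left (x x' y : V → R) :
    eulerForm t h (x + x') y = eulerForm t h x y + eulerForm t h x' y := by
  simp only [eulerForm, Pi.add_apply, add_mul, Finset.sum_add_distrib]
  ring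

theorem eulerForm_smul_left (c : R) (x y : V → R) :
    eulerForm t h (c • x) y = c * eulerForm t h x y := by
  simp only [eulerForm, Pi.smul_apply, smul_eq_mul, mul_sub, Finset.mul_sum, mul_assoc]

theorem eulerForm_sum_left {ι : Type} (s : Finset ι) (x : ι → V → R) (y : V → R) :
    eulerForm t h (∑ k ∈ s, x k) y = ∑ k ∈ s, eulerForm t h (x k) y :=
  map_sum (AddMonoidHom.mk' (eulerForm t h · y) fun x x' => eulerForm_add_left x x' y) x s

end EulerForm

theorem Acyclic.eulerForm_gammaRoot (hQ : Acyclic t h) (i : V) (y : V → ℤ) :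
    eulerForm t h (natZ (gammaRoot t h i)) y = y i := by
  classical
  induction i using hQ.wellFounded_swap.induction with
  | _ i ih =>
    have hgamma : natZ (gammaRoot t h i) = (fun j => if i = j then 1 else 0) +
        ∑ a : {a : A // t a = i}, natZ (gammaRoot t h (h a)) := by
      funext j
      simp only [natZ, Pi.add_apply, Finset.sum_apply, hQ.gammaRoot_eq i]
      push_cast
      rfl
    have hrest (a : {a : A // t a = i}) :
        eulerForm t h (natZ (gammaRoot t h (h a))) y = y (h a) := ih _ ⟨a, a.2, rfl⟩
    have hunit : eulerForm t h (fun j => if i = j then 1 else 0) y =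
        y i - ∑ a : {a : A // t a = i}, y (h a) := by
      simp only [eulerForm, ite_mul, one_mul, zero_mul, Finset.sum_ite_eq, Finset.mem_univ,
        if_true]
      rw [← Finset.sum_filter, Finset.sum_subtype (p := fun a => t a = i) _ (by simp [eq_comm])]
    rw [hgamma, eulerForm_add_left, eulerForm_sum_left, Finset.sum_congr rfl fun a _ => hrest a,
      hunit, sub_add_cancel]

theorem Acyclic.eulerForm_left_ext [DecidableEq V] {R : Type} [CommRing R] (hQ : Acyclic t h)
    {x y : V → R}
    (hxy : ∀ i, eulerForm t h x (Pi.single i 1) = eulerForm t h y (Pi.single i 1)) : x = y := by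
  have heuler (z : V → R) (i : V) : eulerForm t h z (Pi.single i 1) =
      z i - ∑ a, if h a = i then z (t a) else 0 := by
    simp [eulerForm, Pi.single_apply]
  funext i
  induction i using hQ.wellFounded.induction with
  | _ i ih =>
    have hi := hxy i
    have hsum : ∑ a, (if h a = i then x (t a) else 0) = ∑ a, if h a = i then y (t a) else 0 :=
      Finset.sum_congr rfl fun a _ => if_ctx_congr Iff.rfl (fun ha => ih _ ⟨a, rfl, ha⟩)
        fun _ => rfl
    rw [heuler, heuler, hsum] at hi
    exact sub_left_injective hi

end Quiver

theorem Acyclic.gammaRoot_self_pos [Finite V] [Finite A] (hQ : Acyclic t h) (i : V) :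
    0 < gammaRoot t h i i := by
  classical
  have := Fintype.ofFinite A
  rw [hQ.gammaRoot_eq, if_pos rfl]
  exact Nat.add_pos_left one_pos _

theorem Acyclic.gammaRoot_injective [Finite V] [Finite A] (hQ : Acyclic t h) :
    Function.Injective (gammaRoot t h) := by
  classical
  have := Fintype.ofFinite V
  have := Fintype.ofFinite A
  intro i j hij
  have hi := hQ.eulerForm_gammaRoot i (Pi.single i 1)
  rw [hij, hQ.eulerForm_gammaRoot, Pi.single_apply, Pi.single_eq_same] at hi
  by_contra hne
  exact zero_ne_one ((if_neg (Ne.symm hne)).symm.trans hi)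

section Simple

variable {X : QuivRep K V A t h} {σ : V → ℤ}

theorem QuivRep.isNonzero_iff_exists_dimVec_ne_zero : IsNonzero X ↔ ∃ i, X.dimVec i ≠ 0 := by
  rw [← not_iff_not, not_isNonzero_iff_dimVec, funext_iff]
  push Not
  rfl

theorem QuivRep.not_homVanishes_of_eulerPairing_pos [Fintype V] [Fintype A]
    {Y : QuivRep K V A t h} (hXY : 0 < eulerPairing X Y) : ¬ HomVanishes X Y := by
  rw [eulerPairing_eq] at hXY
  rw [homVanishes_iff_homDim]
  omega

theorem QuivRep.isTorsion_of_forall_pos [Fintype V] (hX : ∀ i, X.dimVec i ≠ 0 → 0 < σ i) :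
    IsTorsion σ X := by
  intro Y g hg hY
  have hpos (i : V) (hi : Y.dimVec i ≠ 0) : 0 < σ i * Y.dimVec i :=
    mul_pos (hX i fun hXi => hi (Nat.le_zero.1
      (hXi ▸ LinearMap.finrank_le_finrank_of_surjective (hg i)))) (by positivity)
  obtain ⟨i, hi⟩ := isNonzero_iff_exists_dimVec_ne_zero.1 hY
  refine Finset.sum_pos' (fun j _ => ?_) ⟨i, Finset.mem_univ i, hpos i hi⟩
  by_cases hj : Y.dimVec j = 0
  · simp [hj]
  · exact (hpos j hj).le

theorem QuivRep.isTorsionFree_of_forall_nonpos [Fintype V]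
    (hX : ∀ i, X.dimVec i ≠ 0 → σ i ≤ 0) : IsTorsionFree σ X := by
  intro Y f hf
  refine Finset.sum_nonpos fun i _ => ?_
  by_cases hi : X.dimVec i = 0
  · simp [Nat.le_zero.1 (hi ▸ LinearMap.finrank_le_finrank_of_injective (hf i) :
      Y.dimVec i ≤ 0)]
  · exact mul_nonpos_of_nonpos_of_nonneg (hX i hi) (by positivity)

variable [DecidableEq V]

theorem QuivRep.dimVec_simple (i j : V) :
    (simple K t h i).dimVec j = if j = i then 1 else 0 := by
  change Module.finrank K ↥(if j = i then ⊤ else ⊥ : Submodule K K) = _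
  by_cases hj : j = i
  · rw [if_pos hj, if_pos hj, finrank_top, Module.finrank_self]
  · rw [if_neg hj, if_neg hj, finrank_bot]

theorem QuivRep.dimVec_simple_ne_zero_iff {i j : V} :
    (simple K t h i).dimVec j ≠ 0 ↔ j = i := by
  simp [dimVec_simple]

theorem QuivRep.isNonzero_simple (i : V) : IsNonzero (simple K t h i) :=
  isNonzero_iff_exists_dimVec_ne_zero.2 ⟨i, dimVec_simple_ne_zero_iff.2 rfl⟩

theorem QuivRep.isTorsion_simple [Fintype V] {i : V} (hi : 0 < σ i) :
    IsTorsion σ (simple K t h i) :=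
  isTorsion_of_forall_pos fun _ hj => dimVec_simple_ne_zero_iff.1 hj ▸ hi

theorem QuivRep.isTorsionFree_simple [Fintype V] {i : V} (hi : σ i ≤ 0) :
    IsTorsionFree σ (simple K t h i) :=
  isTorsionFree_of_forall_nonpos fun _ hj => dimVec_simple_ne_zero_iff.1 hj ▸ hi

theorem Acyclic.exists_hom_to_simple [Finite V] [Finite A] (hQ : Acyclic t h)
    (hX : IsNonzero X) : ∃ i, ¬ HomVanishes X (simple K t h i) := by
  have := Fintype.ofFinite V
  have := Fintype.ofFinite A
  obtain ⟨i, hi, hmin⟩ := hQ.wellFounded.has_min {i | X.dimVec i ≠ 0}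
    (isNonzero_iff_exists_dimVec_ne_zero.1 hX)
  have harrow (a : A) : (X.dimVec (t a) : ℤ) * (simple K t h i).dimVec (h a) = 0 := by
    rw [dimVec_simple]
    split_ifs with ha
    · rw [not_not.1 fun hta => hmin (t a) hta ⟨a, rfl, ha⟩, Nat.cast_zero, zero_mul]
    · rw [Nat.cast_zero, mul_zero]
  have hpairing : eulerPairing X (simple K t h i) = X.dimVec i := by
    rw [eulerPairing, eulerForm]
    simp only [natZ, harrow, Finset.sum_const_zero, sub_zero]
    simp [dimVec_simple]
  refine ⟨i, not_homVanishes_of_eulerPairing_pos ?_⟩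
  rw [hpairing]
  exact Nat.cast_pos.2 (Nat.pos_of_ne_zero hi)

theorem Acyclic.exists_hom_from_simple [Finite V] [Finite A] (hQ : Acyclic t h)
    (hX : IsNonzero X) : ∃ i, X.dimVec i ≠ 0 ∧ ¬ HomVanishes (simple K t h i) X := by
  have := Fintype.ofFinite V
  have := Fintype.ofFinite A
  obtain ⟨i, hi, hmin⟩ := hQ.wellFounded_swap.has_min {i | X.dimVec i ≠ 0}
    (isNonzero_iff_exists_dimVec_ne_zero.1 hX)
  have harrow (a : A) : ((simple K t h i).dimVec (t a) : ℤ) * X.dimVec (h a) = 0 := by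
    rw [dimVec_simple]
    split_ifs with ha
    · rw [not_not.1 fun hha => hmin (h a) hha ⟨a, ha, rfl⟩, Nat.cast_zero, mul_zero]
    · rw [Nat.cast_zero, zero_mul]
  have hpairing : eulerPairing (simple K t h i) X = X.dimVec i := by
    rw [eulerPairing, eulerForm]
    simp only [natZ, harrow, Finset.sum_const_zero, sub_zero]
    simp [dimVec_simple]
  refine ⟨i, hi, not_homVanishes_of_eulerPairing_pos ?_⟩
  rw [hpairing]
  exact Nat.cast_pos.2 (Nat.pos_of_ne_zero hi)

end Simple

/-! ### Openness along lines in a representation space -/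

section Pencil

variable {E F : Type} [AddCommGroup E] [Module K E] [AddCommGroup F] [Module K F]

-- A retraction `r` of `D₀` turns a kernel vector of `D₀ + s • D₁` into an eigenvector of `r ∘ D₁`
-- for the eigenvalue `-s⁻¹`.
theorem finite_setOf_not_injective_add_smul [FiniteDimensional K E] (D₀ D₁ : E →ₗ[K] F)
    (H : Function.Injective D₀) : {s : K | ¬ Function.Injective (D₀ + s • D₁)}.Finite := by
  obtain ⟨r, hr⟩ := exists_retraction D₀ H
  have hfin := Module.End.finite_hasEigenvalue (r.comp D₁ : Module.End K E)
  refine Set.Finite.of_finite_image (hfin.subset ?_) (f := fun s => -s⁻¹)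
    fun a _ b _ hab => by simpa using hab
  rintro _ ⟨s, hs, rfl⟩
  rw [Set.mem_ofPred_eq, injective_iff_map_eq_zero] at hs
  push Not at hs
  obtain ⟨v, hv, hv0⟩ := hs
  have hrv : v + s • r (D₁ v) = 0 := by simpa [hr] using congrArg r hv
  have hs0 : s ≠ 0 := by
    rintro rfl
    exact hv0 (by simpa using hrv)
  have heigen : r (D₁ v) = (-s⁻¹) • v := by
    rw [neg_smul, ← smul_neg, ← eq_neg_of_add_eq_zero_right hrv, smul_smul, inv_mul_cancel₀ hs0,
      one_smul]
  exact Module.End.hasEigenvalue_of_hasEigenvector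
    ⟨Module.End.mem_eigenspace_iff.2 heigen, hv0⟩

theorem finite_setOf_not_surjective_add_smul [FiniteDimensional K F] (D₀ D₁ : E →ₗ[K] F)
    (H : Function.Surjective D₀) : {s : K | ¬ Function.Surjective (D₀ + s • D₁)}.Finite := by
  obtain ⟨r, hr⟩ := exists_section D₀ H
  refine (finite_setOf_not_injective_add_smul (LinearMap.id : F →ₗ[K] F) (D₁.comp r)
    Function.injective_id).subset fun s hs hinj => hs fun y => ?_
  obtain ⟨x, rfl⟩ := LinearMap.injective_iff_surjective.1 hinj y
  exact ⟨r x, by simp [hr]⟩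

variable [FiniteDimensional K E]

-- On `E' × ker D₀`, for a complement `E'` of `ker D₀`, the substitution `(e, n) ↦ e + s⁻¹ • n`
-- turns `D₀ + s • D₁` into a pencil whose constant term `(e, n) ↦ D₀ e + D₁ n` is injective.
theorem finite_setOf_not_injective_add_smul_of_forall (D₀ D₁ : E →ₗ[K] F)
    (H : ∀ v₀ v₁ : E, D₀ v₀ = 0 → D₀ v₁ + D₁ v₀ = 0 → v₀ = 0) :
    {s : K | ¬ Function.Injective (D₀ + s • D₁)}.Finite := by
  obtain ⟨E', hE'⟩ := Submodule.exists_isCompl (LinearMap.ker D₀)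
  let L₀ : (E' × LinearMap.ker D₀) →ₗ[K] F :=
    (D₀.comp E'.subtype).coprod (D₁.comp (LinearMap.ker D₀).subtype)
  let L₁ : (E' × LinearMap.ker D₀) →ₗ[K] F := (D₁.comp E'.subtype).coprod 0
  have hL₀ : Function.Injective L₀ := by
    rw [injective_iff_map_eq_zero]
    rintro ⟨e, n⟩ hen
    have hsum : D₀ e + D₁ n = 0 := by simpa [L₀] using hen
    obtain rfl : n = 0 := Subtype.ext (H n e n.2 hsum)
    have he : (e : E) = 0 :=
      Submodule.disjoint_def.1 hE'.disjoint e (by simpa using hsum) e.2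
    exact Prod.ext (Subtype.ext he) rfl
  refine ((finite_setOf_not_injective_add_smul L₀ L₁ hL₀).union
    (Set.finite_singleton (0 : K))).subset fun s hs => ?_
  by_contra hgood
  simp only [Set.mem_union, Set.mem_ofPred_eq, not_or, not_not, Set.mem_singleton_iff] at hgood
  obtain ⟨hinj, hs0⟩ := hgood
  refine hs ((injective_iff_map_eq_zero _).2 fun v hv => ?_)
  obtain ⟨n, hn, e, he, rfl⟩ := Submodule.mem_sup.1 (hE'.sup_eq_top ▸ Submodule.mem_top (x := v))
  have hker : (L₀ + s • L₁) (⟨e, he⟩, ⟨s • n, Submodule.smul_mem _ _ hn⟩) = 0 := by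
    rw [LinearMap.mem_ker] at hn
    simp only [LinearMap.add_apply, map_add, hn, LinearMap.smul_apply] at hv
    simp only [L₀, L₁, LinearMap.add_apply, LinearMap.smul_apply, LinearMap.coprod_apply,
      LinearMap.comp_apply, Submodule.subtype_apply, map_smul, LinearMap.zero_apply, add_zero]
    rw [← hv]
    abel
  have hzero := (injective_iff_map_eq_zero _).1 hinj _ hker
  simp only [Prod.mk_eq_zero, Submodule.mk_eq_zero, smul_eq_zero, hs0, false_or] at hzero
  rw [hzero.1, hzero.2, add_zero]

theorem exists_first_order_kernel_vector (D₀ D₁ : E →ₗ[K] F)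
    (H : {s : K | ¬ Function.Injective (D₀ + s • D₁)}.Infinite) :
    ∃ v₀ v₁ : E, v₀ ≠ 0 ∧ D₀ v₀ = 0 ∧ D₀ v₁ + D₁ v₀ = 0 := by
  by_contra! hnone
  refine H (finite_setOf_not_injective_add_smul_of_forall D₀ D₁ fun v₀ v₁ h₀ h₁ => ?_)
  by_contra hv
  exact hnone v₀ v₁ hv h₀ h₁

end Pencil

section Matrices

variable {L : Type} [Field L] {d e : ℕ}

theorem exists_submatrix_det_ne_zero (B : Matrix (Fin d) (Fin e) L)
    (C : Matrix (Fin e) (Fin d) L) (H : C * B = 1) :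
    ∃ ρ : Fin e → Fin d, (B.submatrix ρ id).det ≠ 0 := by
  by_contra! hdet
  have hrows : C * B = fun j => ∑ k, C j k • B k := by
    funext j l
    simp [Matrix.mul_apply, Finset.sum_apply]
  have hzero : Matrix.detRowAlternating (C * B) = 0 := by
    rw [hrows, ← AlternatingMap.coe_multilinearMap, MultilinearMap.map_sum]
    refine Finset.sum_eq_zero fun ρ _ => ?_
    rw [MultilinearMap.map_smul_univ, AlternatingMap.coe_multilinearMap]
    exact smul_eq_zero_of_right _ (hdet ρ)
  rw [H] at hzero
  exact one_ne_zero (Matrix.det_one.symm.trans hzero)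

theorem exists_submatrix_det_valuation_maximal (O : ValuationSubring L)
    (B : Matrix (Fin d) (Fin e) L) (C : Matrix (Fin e) (Fin d) L) (H : C * B = 1) :
    ∃ ρ : Fin e → Fin d, (B.submatrix ρ id).det ≠ 0 ∧
      ∀ ρ', O.valuation (B.submatrix ρ' id).det ≤ O.valuation (B.submatrix ρ id).det := by
  obtain ⟨ρ₀, hρ₀⟩ := exists_submatrix_det_ne_zero B C H
  have : Nonempty (Fin e → Fin d) := ⟨ρ₀⟩
  obtain ⟨ρ, hρ⟩ := Finite.exists_max fun ρ : Fin e → Fin d => O.valuation (B.submatrix ρ id).det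
  refine ⟨ρ, fun hdet => hρ₀ ?_, hρ⟩
  simpa [hdet] using hρ ρ₀

theorem mul_inv_submatrix_apply (B : Matrix (Fin d) (Fin e) L) (ρ : Fin e → Fin d)
    (k : Fin d) (j : Fin e) :
    (B * (B.submatrix ρ id)⁻¹) k j =
      (B.submatrix ρ id).det⁻¹ * (B.submatrix (Function.update ρ j k) id).det := by
  have hrow : B.submatrix (Function.update ρ j k) id = (B.submatrix ρ id).updateRow j (B k) := by
    ext a b
    obtain rfl | ha := eq_or_ne a j <;> simp [*]
  rw [hrow, ← Matrix.cramer_transpose_apply, Matrix.cramer_eq_adjugate_mulVec,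
    ← Matrix.adjugate_transpose, Matrix.inv_def, Ring.inverse_eq_inv', Matrix.mul_smul,
    Matrix.smul_apply, smul_eq_mul, Matrix.mulVec_transpose]
  rfl

-- Dividing by a minor of maximal valuation makes all entries integral, by Cramer's rule.
theorem exists_integral_normalization (O : ValuationSubring L) (B : Matrix (Fin d) (Fin e) L)
    (C : Matrix (Fin e) (Fin d) L) (H : C * B = 1) :
    ∃ (ρ : Fin e → Fin d) (B' : Matrix (Fin d) (Fin e) O) (P P' : Matrix (Fin e) (Fin e) L),
      B'.submatrix ρ id = 1 ∧ B * P = B'.map O.subtype ∧ B'.map O.subtype * P' = B := by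
  obtain ⟨ρ, hdet, hmax⟩ := exists_submatrix_det_valuation_maximal O B C H
  have hunit : IsUnit (B.submatrix ρ id).det := isUnit_iff_ne_zero.2 hdet
  have hintegral : ∀ k j, (B * (B.submatrix ρ id)⁻¹) k j ∈ O := fun k j => by
    rw [mul_inv_submatrix_apply, ← O.valuation_le_one_iff, map_mul, map_inv₀,
      inv_mul_le_iff₀ (zero_lt_iff.2 ((map_ne_zero _).2 hdet)), mul_one]
    exact hmax _
  refine ⟨ρ, Matrix.of fun k j => ⟨_, hintegral k j⟩, (B.submatrix ρ id)⁻¹, B.submatrix ρ id,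
    ?_, rfl, ?_⟩
  · refine Matrix.map_injective (f := O.subtype) Subtype.val_injective ?_
    beta_reduce
    rw [Matrix.map_one _ (map_zero _) (map_one _), ← Matrix.mul_nonsing_inv _ hunit]
    rfl
  · change B * (B.submatrix ρ id)⁻¹ * B.submatrix ρ id = B
    rw [Matrix.mul_assoc, Matrix.nonsing_inv_mul _ hunit, Matrix.mul_one]

end Matrices

section Specialization

theorem exists_algHom_of_finiteType [IsAlgClosed K] (R : Type) [CommRing R] [Nontrivial R]
    [Algebra K R] [Algebra.FiniteType K R] : Nonempty (R →ₐ[K] K) := by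
  obtain ⟨m, hm⟩ := Ideal.exists_maximal R
  let _ : Field (R ⧸ m) := Ideal.Quotient.field m
  have : Module.Finite K (R ⧸ m) := finite_of_finite_type_of_isJacobsonRing K (R ⧸ m)
  let e : K ≃ₐ[K] R ⧸ m := AlgEquiv.ofBijective (Algebra.ofId K (R ⧸ m))
    IsAlgClosed.algebraMap_bijective_of_isIntegral
  exact ⟨e.symm.toAlgHom.comp (Ideal.Quotient.mkₐ K m)⟩

theorem mem_range_algebraMap_of_isAlgebraic [IsAlgClosed K] {L : Type} [Field L] [Algebra K L]
    {s : L} (hs : IsAlgebraic K s) : ∃ c, algebraMap K L c = s :=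
  minpoly.mem_range_of_degree_eq_one K s
    (IsAlgClosed.degree_eq_one_of_irreducible K (minpoly.irreducible hs.isIntegral))

open Polynomial in
theorem exists_valuationSubring_mem_nonunits {L : Type} [Field L] [Algebra K L] {s : L}
    (hs : Transcendental K s) :
    ∃ O : ValuationSubring L, (∀ c : K, algebraMap K L c ∈ O) ∧ s ∈ O.nonunits := by
  let R : Subring L := (aeval (R := K) s).range.toSubring
  have hsR : s ∈ R := ⟨X, aeval_X s⟩
  have hspan : Ideal.span {(⟨s, hsR⟩ : R)} ≠ ⊤ := by
    rw [Ne, Ideal.span_singleton_eq_top, isUnit_iff_exists_inv]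
    rintro ⟨⟨_, p, rfl⟩, hp⟩
    have haeval : aeval s (X * p - 1) = 0 := by
      simpa [sub_eq_zero] using congrArg Subtype.val hp
    have hpoly : X * p - 1 = 0 := not_not.1 fun hne => hs ⟨_, hne, haeval⟩
    simpa using congrArg (eval 0) hpoly
  obtain ⟨O, hRO, hO⟩ := Ideal.image_subset_nonunits_valuationSubring _ hspan
  exact ⟨O, fun c => hRO ⟨C c, aeval_C s c⟩,
    hO ⟨⟨s, hsR⟩, Ideal.mem_span_singleton_self _, rfl⟩⟩

-- `L` is the residue field of a nonprincipal maximal ideal of `S → K`, i.e. an ultrapower of `K`.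
theorem exists_ringHom_pi_ne_const {S : Set K} (hS : S.Infinite) :
    ∃ (L : Type) (_ : Field L) (π : (S → K) →+* L),
      ∀ c : K, π Subtype.val ≠ π (Function.const S c) := by
  classical
  let I : Ideal (S → K) :=
    { carrier := {f | (Function.support f).Finite}
      zero_mem' := by simp
      add_mem' := fun {f g} hf hg => (hf.union hg).subset (Function.support_add f g)
      smul_mem' := fun c f hf => hf.subset fun s hs hs0 => hs (by simp [hs0]) }
  have hI : I ≠ ⊤ := (Ideal.ne_top_iff_one I).2 fun hone => by
    have hfin : (Function.support (1 : S → K)).Finite := hone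
    rw [Function.support_one, Set.finite_univ_iff] at hfin
    exact hS hfin
  obtain ⟨m, hm, hle⟩ := Ideal.exists_le_maximal I hI
  refine ⟨(S → K) ⧸ m, Ideal.Quotient.field m, Ideal.Quotient.mk m, fun c hc => ?_⟩
  have hsub : Subtype.val - Function.const S c ∈ m := Ideal.Quotient.eq.1 hc
  have hdelta : (fun s : S => if (s : K) = c then (1 : K) else 0) ∈ I := by
    refine ((Set.finite_singleton c).preimage Subtype.val_injective.injOn).subset fun s hs => ?_
    by_contra hsc
    exact hs (if_neg hsc)
  refine hm.ne_top (Ideal.eq_top_of_isUnit_mem _ (m.add_mem hsub (hle hdelta)) ?_)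
  refine Pi.isUnit_iff.2 fun s => isUnit_iff_ne_zero.2 ?_
  obtain hsc | hsc := eq_or_ne (s : K) c
  · simp [hsc]
  · simpa [hsc] using sub_ne_zero.2 hsc

end Specialization

section SplitSub

/-- A representation of the quiver by matrices of shape `d` over a ring. -/
abbrev MatrixRep (R : Type) (t h : A → V) (d : V → ℕ) : Type :=
  ∀ a : A, Matrix (Fin (d (h a))) (Fin (d (t a))) R

/-- Base change of a matrix representation. -/
def MatrixRep.map {R S : Type} (φ : R → S) {d : V → ℕ} (M : MatrixRep R t h d) :
    MatrixRep S t h d := fun a => (M a).map φ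

/-- The matrix representation `M` has a subrepresentation which is free of rank `e` and a direct
summand at every vertex: `B i` is its inclusion, `C i` a retraction and `G a` the induced map. -/
def HasSplitSub {R : Type} [CommRing R] {d : V → ℕ} (M : MatrixRep R t h d) (e : V → ℕ) : Prop :=
  ∃ (B : ∀ i, Matrix (Fin (d i)) (Fin (e i)) R) (C : ∀ i, Matrix (Fin (e i)) (Fin (d i)) R)
    (G : MatrixRep R t h e), (∀ i, C i * B i = 1) ∧ ∀ a, M a * B (t a) = B (h a) * G a

variable {R S : Type} [CommRing R] [CommRing S] {d e : V → ℕ}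

theorem HasSplitSub.map (φ : R →+* S) {M : MatrixRep R t h d} (H : HasSplitSub M e) :
    HasSplitSub (M.map φ) e := by
  obtain ⟨B, C, G, hC, hG⟩ := H
  refine ⟨fun i => (B i).map φ, fun i => (C i).map φ, G.map φ, fun i => ?_, fun a => ?_⟩
  · rw [← Matrix.map_mul, hC, Matrix.map_one _ (map_zero φ) (map_one φ)]
  · rw [MatrixRep.map, MatrixRep.map, ← Matrix.map_mul, ← Matrix.map_mul, hG]

theorem HasSplitSub.pi {ι : Type} {M : MatrixRep (ι → R) t h d}
    (H : ∀ s, HasSplitSub (M.map (Pi.evalRingHom (fun _ => R) s)) e) : HasSplitSub M e := by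
  choose B C G hC hG using H
  have hext : ∀ {m n : ℕ} {P Q : Matrix (Fin m) (Fin n) (ι → R)},
      (∀ s, P.map (Pi.evalRingHom (fun _ => R) s) = Q.map (Pi.evalRingHom (fun _ => R) s)) →
        P = Q := fun hPQ => by
    ext k l s
    exact congrFun (congrFun (hPQ s) k) l
  refine ⟨fun i => Matrix.of fun k l s => B s i k l, fun i => Matrix.of fun k l s => C s i k l,
    fun a => Matrix.of fun k l s => G s a k l, fun i => hext fun s => ?_,
    fun a => hext fun s => ?_⟩
  · rw [Matrix.map_mul, Matrix.map_one _ (map_zero _) (map_one _)]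
    exact hC s i
  · rw [Matrix.map_mul, Matrix.map_mul]
    exact hG s a

theorem hasSplitSub_of_map_injective {φ : R →+* S} (hφ : Function.Injective φ)
    {M : MatrixRep R t h d} {B : ∀ i, Matrix (Fin (d i)) (Fin (e i)) R}
    {C : ∀ i, Matrix (Fin (e i)) (Fin (d i)) R} {G : MatrixRep R t h e}
    (hC : ∀ i, (C i).map φ * (B i).map φ = 1)
    (hG : ∀ a, (M a).map φ * (B (t a)).map φ = (B (h a)).map φ * (G a).map φ) :
    HasSplitSub M e := by
  refine ⟨B, C, G, fun i => Matrix.map_injective hφ ?_, fun a => Matrix.map_injective hφ ?_⟩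
  · exact Matrix.map_mul.trans ((hC i).trans (Matrix.map_one _ (map_zero φ) (map_one φ)).symm)
  · exact Matrix.map_mul.trans ((hG a).trans Matrix.map_mul.symm)

theorem HasSplitSub.of_valuationSubring {L : Type} [Field L] (O : ValuationSubring L)
    {M : MatrixRep O t h d} (H : HasSplitSub (M.map O.subtype) e) : HasSplitSub M e := by
  obtain ⟨B, C, G, hC, hG⟩ := H
  choose ρ B' P P' hB' hP hP' using fun i => exists_integral_normalization O (B i) (C i) (hC i)
  let G' : MatrixRep O t h e := fun a => (M a * B' (t a)).submatrix (ρ (h a)) id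
  have hMB : ∀ a, (M a * B' (t a)).map O.subtype =
      (B' (h a)).map O.subtype * (P' (h a) * G a * P (t a)) := fun a => by
    rw [Matrix.map_mul, ← hP, ← Matrix.mul_assoc, show (M a).map O.subtype * B (t a) = _ from hG a,
      ← Matrix.mul_assoc, ← Matrix.mul_assoc, hP']
  have hG' : ∀ a, (G' a).map O.subtype = P' (h a) * G a * P (t a) := fun a => by
    rw [← Matrix.submatrix_map, hMB, Matrix.submatrix_mul _ _ _ id _ Function.bijective_id,
      Matrix.submatrix_map, hB', Matrix.submatrix_id_id, Matrix.map_one _ (map_zero _) (map_one _),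
      Matrix.one_mul]
  refine hasSplitSub_of_map_injective (φ := O.subtype) Subtype.val_injective (B := B') (G := G')
    (C := fun i => (1 : Matrix (Fin (d i)) (Fin (d i)) O).submatrix (ρ i) id)
    (fun i => ?_) fun a => ?_
  · rw [← Matrix.map_mul, ← Matrix.map_one O.subtype (map_zero _) (map_one _), ← hB' i]
    congr 1
    ext j k
    simp [Matrix.mul_apply, Matrix.one_apply]
  · rw [← Matrix.map_mul, hMB, hG']

-- The entries of the three families generate a finitely generated subalgebra, which has a
-- `K`-point by the Nullstellensatz.
theorem HasSplitSub.of_algebraMap [Finite V] [Finite A] [IsAlgClosed K] [Nontrivial R]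
    [Algebra K R] {M : MatrixRep K t h d} (H : HasSplitSub (M.map (algebraMap K R)) e) :
    HasSplitSub M e := by
  obtain ⟨B, C, G, hC, hG⟩ := H
  let entries : Set R := (Set.range fun x : Σ i, Fin (d i) × Fin (e i) => B x.1 x.2.1 x.2.2) ∪
    (Set.range fun x : Σ i, Fin (e i) × Fin (d i) => C x.1 x.2.1 x.2.2) ∪
    Set.range fun x : Σ a, Fin (e (h a)) × Fin (e (t a)) => G x.1 x.2.1 x.2.2
  have hfin : entries.Finite :=
    ((Set.finite_range _).union (Set.finite_range _)).union (Set.finite_range _)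
  have : Algebra.FiniteType K (Algebra.adjoin K entries) :=
    .adjoin_of_finite hfin
  obtain ⟨φ⟩ := exists_algHom_of_finiteType (K := K) (Algebra.adjoin K entries)
  have hadjoin : HasSplitSub (M.map (algebraMap K (Algebra.adjoin K entries))) e :=
    hasSplitSub_of_map_injective (φ := (Algebra.adjoin K entries).val.toRingHom)
      Subtype.val_injective
      (B := fun i => Matrix.of fun k l =>
        ⟨B i k l, Algebra.subset_adjoin (.inl (.inl ⟨⟨i, k, l⟩, rfl⟩))⟩)
      (C := fun i => Matrix.of fun k l =>
        ⟨C i k l, Algebra.subset_adjoin (.inl (.inr ⟨⟨i, k, l⟩, rfl⟩))⟩)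
      (G := fun a => Matrix.of fun k l =>
        ⟨G a k l, Algebra.subset_adjoin (.inr ⟨⟨a, k, l⟩, rfl⟩)⟩) hC hG
  have hM : (M.map (algebraMap K (Algebra.adjoin K entries))).map φ.toRingHom = M := by
    funext a
    ext k l
    exact φ.commutes _
  exact hM ▸ hadjoin.map φ.toRingHom

-- The given subrepresentations define one over an ultrapower `L` of `K`, hence one over a
-- valuation ring of `L` in whose residue field the class of the parameter vanishes.
theorem hasSplitSub_of_infinite [Finite V] [Finite A] [IsAlgClosed K] (M₀ M₁ : MatrixRep K t h d)
    (H : {s : K | HasSplitSub (M₀ + s • M₁) e}.Infinite) : HasSplitSub M₀ e := by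
  set S := {s : K | HasSplitSub (M₀ + s • M₁) e}
  obtain ⟨L, _, π, hπ⟩ := exists_ringHom_pi_ne_const H
  let _ : Algebra K L := (π.comp (algebraMap K (S → K))).toAlgebra
  have htrans : Transcendental K (π Subtype.val) := fun halg => by
    obtain ⟨c, hc⟩ := mem_range_algebraMap_of_isAlgebraic halg
    exact hπ c hc.symm
  obtain ⟨O, hKO, hsO⟩ := exists_valuationSubring_mem_nonunits htrans
  let j : K →+* O := (algebraMap K L).codRestrict O.toSubring hKO
  let s : O := ⟨π Subtype.val, O.nonunits_subset hsO⟩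
  let M : MatrixRep (S → K) t h d := fun a => Matrix.of fun k l s => M₀ a k l + s.1 * M₁ a k l
  let MO : MatrixRep O t h d := M₀.map j + s • M₁.map j
  have hM : HasSplitSub M e := .pi fun s => s.2
  have hMO : MO.map O.subtype = M.map π := by
    funext a
    ext k l
    change π (algebraMap K (S → K) (M₀ a k l)) +
      π Subtype.val * π (algebraMap K (S → K) (M₁ a k l)) = _
    rw [← map_mul, ← map_add]
    rfl
  let r := IsLocalRing.residue O
  let _ : Algebra K (IsLocalRing.ResidueField O) := (r.comp j).toAlgebra
  have hs : r s = 0 := (IsLocalRing.residue_eq_zero_iff _).2 (O.coe_mem_nonunits_iff.1 hsO)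
  have hr : MO.map r = M₀.map (algebraMap K (IsLocalRing.ResidueField O)) := by
    funext a
    ext k l
    change r (j (M₀ a k l) + s * j (M₁ a k l)) = _
    rw [map_add, map_mul, hs, zero_mul, add_zero]
    rfl
  exact .of_algebraMap (hr ▸ (HasSplitSub.of_valuationSubring O (hMO ▸ hM.map π)).map r)

end SplitSub

namespace QuivRep

/-- An arbitrarily chosen basis of the space of `X` at the vertex `i`, indexed so that matrices
with respect to these bases have their sizes given by the dimension vector. -/
def basis (X : QuivRep K V A t h) (i : V) : Module.Basis (Fin (X.dimVec i)) K (X.sp i) :=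
  Module.finBasis K (X.sp i)

/-- The matrices of the structure maps of a representation in the bases `QuivRep.basis`. -/
def toMatrixRep (X : QuivRep K V A t h) : MatrixRep K t h X.dimVec := fun a =>
  LinearMap.toMatrix (X.basis (t a)) (X.basis (h a)) (X.map a)

theorem hasSplitSub_toMatrixRep_of_isInjective {X Y : QuivRep K V A t h} {f : RepHom Y X}
    (hf : f.IsInjective) : HasSplitSub X.toMatrixRep Y.dimVec := by
  choose r hr using fun i => exists_retraction (f.app i) (hf i)
  refine ⟨fun i => LinearMap.toMatrix (Y.basis i) (X.basis i) (f.app i),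
    fun i => LinearMap.toMatrix (X.basis i) (Y.basis i) (r i), Y.toMatrixRep,
    fun i => ?_, fun a => ?_⟩
  · have hid : (r i).comp (f.app i) = LinearMap.id := LinearMap.ext (hr i)
    rw [← LinearMap.toMatrix_comp, hid, LinearMap.toMatrix_id]
  · rw [toMatrixRep, toMatrixRep, ← LinearMap.toMatrix_comp, ← LinearMap.toMatrix_comp, f.comm]

theorem exists_isInjective_of_hasSplitSub {X : QuivRep K V A t h} {e : V → ℕ}
    (H : HasSplitSub X.toMatrixRep e) :
    ∃ (Y : QuivRep K V A t h) (f : RepHom Y X), f.IsInjective ∧ Y.dimVec = e := by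
  obtain ⟨B, C, G, hC, hG⟩ := H
  let bE : ∀ i, Module.Basis (Fin (e i)) K (Fin (e i) → K) := fun i => Pi.basisFun K _
  have hcomm : ∀ a, (Matrix.toLin (bE (h a)) (X.basis (h a)) (B (h a))).comp
      (Matrix.toLin (bE (t a)) (bE (h a)) (G a)) =
        (X.map a).comp (Matrix.toLin (bE (t a)) (X.basis (t a)) (B (t a))) := fun a => by
    rw [← Matrix.toLin_mul, ← hG, Matrix.toLin_mul _ (X.basis (t a)), toMatrixRep,
      Matrix.toLin_toMatrix]
  have hretr : ∀ i, (Matrix.toLin (X.basis i) (bE i) (C i)).comp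
      (Matrix.toLin (bE i) (X.basis i) (B i)) = LinearMap.id := fun i => by
    rw [← Matrix.toLin_mul, hC, Matrix.toLin_one]
  exact ⟨⟨fun i => Fin (e i) → K, fun a => Matrix.toLin (bE (t a)) (bE (h a)) (G a)⟩,
    ⟨fun i => Matrix.toLin (bE i) (X.basis i) (B i), hcomm⟩,
    fun i => Function.LeftInverse.injective (g := Matrix.toLin (X.basis i) (bE i) (C i))
      (LinearMap.congr_fun (hretr i)),
    funext fun i => Module.finrank_fin_fun K⟩

/-- The point with parameter `s` on the line through the representation `X` with direction `ξ`. -/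
def deform (X : QuivRep K V A t h) (ξ : ExtCocycle X X) (s : K) : QuivRep K V A t h where
  sp := X.sp
  map a := X.map a + s • ξ a

variable [Finite V] [Finite A] [IsAlgClosed K] {X : QuivRep K V A t h}

theorem exists_isInjective_of_infinite_deform (ξ : ExtCocycle X X) {e : V → ℕ}
    (H : {s : K | ∃ (Y : QuivRep K V A t h) (f : RepHom Y (X.deform ξ s)),
      f.IsInjective ∧ Y.dimVec = e}.Infinite) :
    ∃ (Y : QuivRep K V A t h) (f : RepHom Y X), f.IsInjective ∧ Y.dimVec = e := by
  let M₁ : MatrixRep K t h X.dimVec := fun a =>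
    LinearMap.toMatrix (X.basis (t a)) (X.basis (h a)) (ξ a)
  have hdeform : ∀ s, (X.deform ξ s).toMatrixRep = X.toMatrixRep + s • M₁ := fun s => by
    funext a
    change LinearMap.toMatrix _ _ (X.map a + s • ξ a) = _
    rw [map_add, map_smul]
    rfl
  refine exists_isInjective_of_hasSplitSub (hasSplitSub_of_infinite X.toMatrixRep M₁ (H.mono ?_))
  rintro s ⟨Y, f, hf, rfl⟩
  rw [Set.mem_ofPred_eq, ← hdeform s]
  exact hasSplitSub_toMatrixRep_of_isInjective hf

-- Only finitely many dimension vectors of subrepresentations are to be excluded.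
theorem finite_setOf_not_forall_dimVec_deform {P : (V → ℕ) → Prop}
    (H : ∀ (Y : QuivRep K V A t h) (f : RepHom Y X), f.IsInjective → P Y.dimVec)
    (ξ : ExtCocycle X X) :
    {s : K | ¬ ∀ (Y : QuivRep K V A t h) (f : RepHom Y (X.deform ξ s)),
      f.IsInjective → P Y.dimVec}.Finite := by
  have hdims : {e : V → ℕ | e ≤ X.dimVec ∧ ¬ P e}.Finite :=
    (Set.Finite.pi' fun i => Set.finite_Iic (X.dimVec i)).subset fun e he => he.1
  refine Set.Finite.subset (s := ⋃ e ∈ {e : V → ℕ | e ≤ X.dimVec ∧ ¬ P e},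
    {s : K | ∃ (Y : QuivRep K V A t h) (f : RepHom Y (X.deform ξ s)), f.IsInjective ∧ Y.dimVec = e})
    (hdims.biUnion fun e he => ?_) fun s hs => ?_
  · by_contra hinf
    obtain ⟨Y, f, hf, rfl⟩ := exists_isInjective_of_infinite_deform ξ hinf
    exact he.2 (H Y f hf)
  · simp only [Set.mem_ofPred_eq, not_forall] at hs
    obtain ⟨Y, f, hf, hY⟩ := hs
    exact Set.mem_biUnion (x := Y.dimVec)
      ⟨fun i => LinearMap.finrank_le_finrank_of_injective (hf i), hY⟩ ⟨Y, f, hf, rfl⟩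

end QuivRep

section Openness

variable [Fintype V] {X : QuivRep K V A t h} {σ : V → ℤ}

theorem isTorsion_iff_forall_sub : IsTorsion σ X ↔ ∀ (Y : QuivRep K V A t h) (f : RepHom Y X),
    f.IsInjective → Y.dimVec ≠ X.dimVec → Y.weight σ < X.weight σ := by
  constructor
  · intro H Y f hf hd
    have hw := (shortExact_coker hf).weight σ
    have hcoker := H _ _ f.cokerProjection_isSurjective (by
      by_contra hzero
      rw [not_isNonzero_coker_iff] at hzero
      exact hd (repIso_of_bijective f hf hzero).dimVec_eq)
    omega
  · intro H Y g hg hY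
    have hw := (shortExact_ker hg).weight σ
    have hker := H _ _ g.kerInclusion_isInjective fun hd => by
      have hiso := g.kerInclusion_isInjective.isSurjective_of_dimVec_eq hd
      obtain ⟨i, y, hy⟩ := hY
      obtain ⟨x, rfl⟩ := hg i y
      obtain ⟨z, rfl⟩ := hiso i x
      exact hy ((shortExact_ker hg).comp_eq_zero i z)
    omega

variable [Finite A] [IsAlgClosed K]

theorem IsSemistable.finite_setOf_not_deform (HX : IsSemistable K σ X) (ξ : ExtCocycle X X) :
    {s : K | ¬ IsSemistable K σ (X.deform ξ s)}.Finite := by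
  refine (finite_setOf_not_forall_dimVec_deform (P := fun e => ∑ i, σ i * (e i : ℤ) ≤ 0)
    HX.isTorsionFree ξ).subset fun s hs hfree => hs ?_
  exact isSemistable_iff.2 ⟨HX.weight_eq_zero, hfree⟩

theorem QuivRep.IsTorsion.finite_setOf_not_deform (HX : IsTorsion σ X) (ξ : ExtCocycle X X) :
    {s : K | ¬ IsTorsion σ (X.deform ξ s)}.Finite :=
  (finite_setOf_not_forall_dimVec_deform
    (P := fun e => e ≠ X.dimVec → ∑ i, σ i * (e i : ℤ) < X.weight σ)
    (isTorsion_iff_forall_sub.1 HX) ξ).subset fun _ hs hsub => hs (isTorsion_iff_forall_sub.2 hsub)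

end Openness

/-! ### Universal extensions and ordered systems -/

section UniversalExtensions

/-- A class of representations which contains the middle term of every short exact sequence whose
outer terms it contains. -/
def ExtensionClosed (P : QuivRep K V A t h → Prop) : Prop :=
  ∀ ⦃L M N : QuivRep K V A t h⦄ ⦃f : RepHom L M⦄ ⦃g : RepHom M N⦄, ShortExact f g →
    P L → P N → P M

theorem ExtensionClosed.directSum {P : QuivRep K V A t h → Prop} (hP : ExtensionClosed P)
    (h0 : ∀ X, ¬ IsNonzero X → P X) {n : ℕ} (B : Fin n → QuivRep K V A t h)
    (hB : ∀ j, P (B j)) : P (QuivRep.directSum B) := by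
  induction n with
  | zero =>
    exact h0 _ fun ⟨i, x, hx⟩ => hx (directSum_ext fun k => k.elim0)
  | succ n ih =>
    obtain ⟨f, g, S⟩ := exists_shortExact_directSum_succ B
    exact hP S (hB 0) (ih _ fun k => hB k.succ)

variable [Finite A]

theorem exists_extVanishes_left {Y : QuivRep K V A t h} (hY : ExtVanishes Y Y)
    {P : QuivRep K V A t h → Prop}
    (hP : ∀ X (ξ : ExtCocycle X Y), P X → ξ ∉ LinearMap.range (dmap X Y) → P (extension ξ))
    {X : QuivRep K V A t h} (hX : P X) : ∃ X', P X' ∧ ExtVanishes X' Y := by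
  have := Fintype.ofFinite A
  induction hn : extDim X Y using Nat.strong_induction_on generalizing X with
  | _ n ih =>
    by_cases hXY : ExtVanishes X Y
    · exact ⟨X, hX, hXY⟩
    · obtain ⟨ξ, hξ⟩ := exists_notMem_range_dmap hXY
      exact ih _ (hn ▸ extDim_extension_left_lt hY (RepHom.idHom Y) hξ) (hP X ξ hX hξ) rfl

theorem exists_extVanishes_right [Finite V] {Y : QuivRep K V A t h} (hY : ExtVanishes Y Y)
    {P : QuivRep K V A t h → Prop}
    (hP : ∀ X (ξ : ExtCocycle Y X), P X → ξ ∉ LinearMap.range (dmap Y X) → P (extension ξ))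
    {X : QuivRep K V A t h} (hX : P X) : ∃ X', P X' ∧ ExtVanishes Y X' := by
  have := Fintype.ofFinite V
  have := Fintype.ofFinite A
  induction hn : extDim Y X using Nat.strong_induction_on generalizing X with
  | _ n ih =>
    by_cases hXY : ExtVanishes Y X
    · exact ⟨X, hX, hXY⟩
    · obtain ⟨ξ, hξ⟩ := exists_notMem_range_dmap hXY
      exact ih _ (hn ▸ extDim_extension_right_lt hY hξ) (hP X ξ hX hξ) rfl

theorem exists_forall_extVanishes_left {ι : Type} [LinearOrder ι] {B : ι → QuivRep K V A t h}
    (hB : ∀ j k, k ≤ j → ExtVanishes (B j) (B k)) {P : QuivRep K V A t h → Prop} (s : Finset ι)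
    (hP : ∀ j ∈ s, ∀ X (ξ : ExtCocycle X (B j)), P X → ξ ∉ LinearMap.range (dmap X (B j)) →
      P (extension ξ))
    {X : QuivRep K V A t h} (hX : P X) : ∃ X', P X' ∧ ∀ j ∈ s, ExtVanishes X' (B j) := by
  induction s using Finset.induction_on_max with
  | empty => exact ⟨X, hX, by simp⟩
  | insert a s ha ih =>
    obtain ⟨X₁, hX₁, hX₁s⟩ := ih fun j hj => hP j (Finset.mem_insert_of_mem hj)
    obtain ⟨X₂, ⟨hX₂, hX₂s⟩, hX₂a⟩ := exists_extVanishes_left (hB a a le_rfl)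
      (P := fun Y => P Y ∧ ∀ j ∈ s, ExtVanishes Y (B j))
      (fun Y ξ hY hξ => ⟨hP a (Finset.mem_insert_self a s) Y ξ hY.1 hξ, fun j hj =>
        (shortExact_extension ξ).extVanishes_left (hB a j (ha j hj).le) (hY.2 j hj)⟩)
      ⟨hX₁, hX₁s⟩
    exact ⟨X₂, hX₂, Finset.forall_mem_insert .. |>.2 ⟨hX₂a, hX₂s⟩⟩

theorem exists_forall_extVanishes_right [Finite V] {ι : Type} {B : ι → QuivRep K V A t h}
    (hB : ∀ j k, ExtVanishes (B j) (B k)) {P : QuivRep K V A t h → Prop} (s : Finset ι)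
    (hP : ∀ j ∈ s, ∀ X (ξ : ExtCocycle (B j) X), P X → ξ ∉ LinearMap.range (dmap (B j) X) →
      P (extension ξ))
    {X : QuivRep K V A t h} (hX : P X) : ∃ X', P X' ∧ ∀ j ∈ s, ExtVanishes (B j) X' := by
  classical
  induction s using Finset.induction_on with
  | empty => exact ⟨X, hX, by simp⟩
  | insert a s _ ih =>
    obtain ⟨X₁, hX₁, hX₁s⟩ := ih fun j hj => hP j (Finset.mem_insert_of_mem hj)
    obtain ⟨X₂, ⟨hX₂, hX₂s⟩, hX₂a⟩ := exists_extVanishes_right (hB a a)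
      (P := fun Y => P Y ∧ ∀ j ∈ s, ExtVanishes (B j) Y)
      (fun Y ξ hY hξ => ⟨hP a (Finset.mem_insert_self a s) Y ξ hY.1 hξ, fun j hj =>
        (shortExact_extension ξ).extVanishes_right (hY.2 j hj) (hB j a)⟩)
      ⟨hX₁, hX₁s⟩
    exact ⟨X₂, hX₂, Finset.forall_mem_insert .. |>.2 ⟨hX₂a, hX₂s⟩⟩

end UniversalExtensions

/-- A class of representations with finitely many isomorphism classes. -/
def FiniteUpToIso (P : QuivRep K V A t h → Prop) : Prop :=
  ∃ (n : ℕ) (E : Fin n → QuivRep K V A t h), ∀ X, P X → ∃ j, RepIso K X (E j)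

namespace FiniteUpToIso

variable {P Q : QuivRep K V A t h → Prop}

theorem of_finite {ι : Type} [Finite ι] {E : ι → QuivRep K V A t h}
    (H : ∀ X, P X → ∃ j, RepIso K X (E j)) : FiniteUpToIso P := by
  obtain ⟨n, ⟨e⟩⟩ := Finite.exists_equiv_fin ι
  refine ⟨n, E ∘ e.symm, fun X hX => ?_⟩
  obtain ⟨j, hj⟩ := H X hX
  exact ⟨e j, by rwa [Function.comp_apply, e.symm_apply_apply]⟩

theorem mono (H : FiniteUpToIso P) (hPQ : ∀ X, Q X → P X) : FiniteUpToIso Q := by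
  obtain ⟨n, E, hE⟩ := H
  exact ⟨n, E, fun X hX => hE X (hPQ X hX)⟩

theorem of_forall_not (H : ∀ X, ¬ P X) : FiniteUpToIso P :=
  ⟨0, Fin.elim0, fun X hX => absurd hX (H X)⟩

theorem repIso (Y : QuivRep K V A t h) : FiniteUpToIso fun X => RepIso K X Y :=
  ⟨1, fun _ => Y, fun _ hX => ⟨0, hX⟩⟩

theorem exists_of_finite {ι : Type} [Finite ι] {P : ι → QuivRep K V A t h → Prop}
    (H : ∀ i, FiniteUpToIso (P i)) : FiniteUpToIso fun X => ∃ i, P i X := by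
  choose n E hE using H
  refine of_finite (E := fun p : Σ i, Fin (n i) => E p.1 p.2) ?_
  rintro X ⟨i, hX⟩
  obtain ⟨j, hj⟩ := hE i X hX
  exact ⟨⟨i, j⟩, hj⟩

theorem or (HP : FiniteUpToIso P) (HQ : FiniteUpToIso Q) : FiniteUpToIso fun X => P X ∨ Q X :=
  (exists_of_finite (ι := Bool) (P := Bool.rec Q P) (Bool.rec HQ HP)).mono fun _ hX =>
    hX.elim (fun hX => ⟨true, hX⟩) fun hX => ⟨false, hX⟩

theorem of_descent {ι : Type*} (μ : ι → ℕ) {R : ι → QuivRep K V A t h → Prop}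
    (H : ∀ i X, R i X → ∃ j, μ j < μ i ∧ ∃ F : QuivRep K V A t h → Prop, FiniteUpToIso F ∧
      ∀ Y, R i Y → F Y ∨ R j Y) (i : ι) : FiniteUpToIso (R i) := by
  induction hn : μ i using Nat.strong_induction_on generalizing i with
  | _ n ih =>
    by_cases hi : ∃ X, R i X
    · obtain ⟨X, hX⟩ := hi
      obtain ⟨j, hj, F, hF, hFR⟩ := H i X hX
      exact (hF.or (ih _ (hn ▸ hj) j rfl)).mono hFR
    · exact of_forall_not (not_exists.1 hi)

theorem exists_representatives (H : FiniteUpToIso P) :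
    ∃ (n : ℕ) (B : Fin n → QuivRep K V A t h), (∀ j, P (B j)) ∧
      (∀ j k, RepIso K (B j) (B k) → j = k) ∧ ∀ X, P X → ∃ j, RepIso K X (B j) := by
  obtain ⟨n, E, hE⟩ := H
  choose rep hrepP hrep using fun j : {j : Fin n // ∃ X, P X ∧ RepIso K X (E j)} => j.2
  let isoSetoid : Setoid {j : Fin n // ∃ X, P X ∧ RepIso K X (E j)} :=
    ⟨fun j k => RepIso K (rep j) (rep k), fun _ => .refl _, .symm, .trans⟩
  obtain ⟨m, ⟨e⟩⟩ := Finite.exists_equiv_fin (Quotient isoSetoid)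
  refine ⟨m, fun j => rep (e.symm j).out, fun j => hrepP _, fun j k hjk => ?_, fun X hX => ?_⟩
  · exact e.symm.injective (Quotient.out_equiv_out.1 hjk)
  · obtain ⟨j, hj⟩ := hE X hX
    refine ⟨e ⟦⟨j, X, hX, hj⟩⟧, ?_⟩
    simp only [e.symm_apply_apply]
    exact (hj.trans (hrep ⟨j, X, hX, hj⟩).symm).trans
      (.symm (Quotient.mk_out (s := isoSetoid) ⟨j, X, hX, hj⟩))

end FiniteUpToIso

theorem exists_equiv_fin_of_forall_exists_sink {ι : Type} [Finite ι] {r : ι → ι → Prop}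
    (H : ∀ s : Set ι, s.Nonempty → ∃ j ∈ s, ∀ k ∈ s, r j k) :
    ∃ (n : ℕ) (e : Fin n ≃ ι), ∀ j k, k ≤ j → r (e j) (e k) := by
  classical
  obtain ⟨n, ⟨e₀⟩⟩ := Finite.exists_equiv_fin ι
  refine ⟨n, ?_⟩
  induction n generalizing ι with
  | zero => exact ⟨e₀.symm, fun j => j.elim0⟩
  | succ n ih =>
    obtain ⟨a, -, ha⟩ := H Set.univ ⟨e₀.symm 0, trivial⟩
    obtain ⟨e, he⟩ := ih (ι := {j // j ≠ a}) (r := fun j k => r j k)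
      (fun s ⟨j, hj⟩ => by
        obtain ⟨_, ⟨j, hj, rfl⟩, hjs⟩ := H (Subtype.val '' s) ⟨j, j, hj, rfl⟩
        exact ⟨j, hj, fun k hk => hjs k ⟨k, hk, rfl⟩⟩)
      ((Equiv.optionSubtypeNe a).trans e₀ |>.trans finSuccEquivLast |>.removeNone.trans (.refl _))
    refine ⟨finSuccEquivLast.trans (e.optionCongr.trans (Equiv.optionSubtypeNe a)),
      fun j k hkj => ?_⟩
    induction j using Fin.lastCases with
    | last => simpa using ha _ trivial
    | cast j =>
      induction k using Fin.lastCases with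
      | last => exact absurd hkj (Fin.castSucc_lt_last j).not_ge
      | cast k => simpa using he j k (Fin.castSucc_le_castSucc_iff.1 hkj)

section Sinks

theorem exists_precomp_mem_range_dmap_of_infinite_deform [Finite V] [Finite A]
    {X Y : QuivRep K V A t h} {ξ : ExtCocycle X X}
    (H : {s : K | ¬ HomVanishes Y (X.deform ξ s)}.Infinite) :
    ∃ f : RepHom Y X, ¬ f.IsZero ∧ ξ.precomp f ∈ LinearMap.range (dmap Y X) := by
  have := Fintype.ofFinite V
  have := Fintype.ofFinite A
  let D : (∀ i, Y.sp i →ₗ[K] X.sp i) →ₗ[K] ExtCocycle Y X :=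
    -LinearMap.pi fun a => (LinearMap.llcomp K _ _ _ (ξ a)).comp (LinearMap.proj (t a))
  have hD : ∀ φ a x, D φ a x = -ξ a (φ (t a) x) := fun _ _ _ => rfl
  have hker : ∀ (s : K) (φ : ∀ i, Y.sp i →ₗ[K] X.sp i),
      (∀ a x, φ (h a) (Y.map a x) = X.map a (φ (t a) x) + s • ξ a (φ (t a) x)) →
      (dmap Y X + s • D) φ = 0 := fun s φ hφ => by
    funext a
    refine LinearMap.ext fun x => ?_
    change dmap Y X φ a x + s • D φ a x = 0
    rw [dmap_apply, hD, hφ, smul_neg]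
    abel
  have hpencil : {s : K | ¬ Function.Injective (dmap Y X + s • D)}.Infinite := by
    refine H.mono fun s hs hinj => (hs : ¬ HomVanishes Y (X.deform ξ s)) fun f => ?_
    have hf : f.app = 0 := hinj ((hker s f.app f.app_map).trans (map_zero _).symm)
    exact fun i x => by rw [hf]; rfl
  obtain ⟨φ₀, φ₁, hφ₀, h₀, h₁⟩ := exists_first_order_kernel_vector _ _ hpencil
  refine ⟨ofCommutes φ₀ (dmap_eq_zero_iff.1 h₀), fun hzero => hφ₀ ?_, φ₁, dmap_eq_iff.2 ?_⟩
  · exact funext fun i => LinearMap.ext (hzero i)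
  · intro a x
    have hx : dmap Y X φ₁ a x + D φ₀ a x = 0 := LinearMap.congr_fun (congrFun h₁ a) x
    rwa [hD, ← sub_eq_add_neg, sub_eq_zero] at hx

theorem exists_infinite_not_homVanishes_deform [Infinite K] {C : QuivRep K V A t h → Prop}
    (hopen : ∀ X (ξ : ExtCocycle X X), C X → {s : K | ¬ C (X.deform ξ s)}.Finite)
    {ι : Type} [Finite ι] {B : ι → QuivRep K V A t h}
    (hhom : ∀ X, C X → IsNonzero X → ∃ j, ¬ HomVanishes (B j) X)
    {X : QuivRep K V A t h} (hX : C X) (hX0 : IsNonzero X) (ξ : ExtCocycle X X) :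
    ∃ j, {s : K | ¬ HomVanishes (B j) (X.deform ξ s)}.Infinite := by
  by_contra! hfin
  refine Set.infinite_univ (((hopen X ξ hX).union (Set.finite_iUnion hfin)).subset
    fun s _ => ?_)
  by_cases hs : C (X.deform ξ s)
  · exact .inr (Set.mem_iUnion.2 (hhom _ hs hX0))
  · exact .inl hs

/-- The self-extension of a direct sum assembled from one extension of each summand by some
summand. -/
def directSumCocycle {κ : Type} [Fintype κ] [DecidableEq κ] {D : κ → QuivRep K V A t h}
    {s : κ → κ} (ξ : ∀ j, ExtCocycle (D j) (D (s j))) :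
    ExtCocycle (directSum D) (directSum D) :=
  ∑ j, ((ξ j).precomp (directSumProj D j)).postcomp (directSumIncl D (s j))

theorem directSumCocycle_precomp {κ : Type} [Fintype κ] [DecidableEq κ]
    {D : κ → QuivRep K V A t h} {s : κ → κ} (ξ : ∀ j, ExtCocycle (D j) (D (s j)))
    {Y : QuivRep K V A t h} {f : RepHom Y (directSum D)} {k : κ}
    (hf : ∀ l, l ≠ k → (f.comp (directSumProj D l)).IsZero) :
    (directSumCocycle ξ).precomp f =
      ((ξ k).precomp (f.comp (directSumProj D k))).postcomp (directSumIncl D (s k)) := by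
  funext a
  refine LinearMap.ext fun x => ?_
  have hsum : directSumCocycle ξ a (f.app (t a) x) = ∑ j, (directSumIncl D (s j)).app (h a)
      (ξ j a ((f.comp (directSumProj D j)).app (t a) x)) := by
    rw [directSumCocycle, Finset.sum_apply, LinearMap.sum_apply]
    rfl
  rw [ExtCocycle.precomp_apply, hsum, Finset.sum_eq_single k (fun l _ hl => ?_) (by simp)]
  · rfl
  · rw [hf l hl, map_zero, map_zero]

-- If no summand were a sink, non-split extensions `ξ j` of `D j` by `D (s j)` would deform
-- `⨁ D j`. By openness the deformations still receive maps from one fixed `B j`; such a map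
-- persists to first order, which forces some `ξ k` to split.
theorem exists_forall_extVanishes_of_directSum [Infinite K] [Finite V] [Finite A]
    {C : QuivRep K V A t h → Prop}
    (hopen : ∀ X (ξ : ExtCocycle X X), C X → {s : K | ¬ C (X.deform ξ s)}.Finite)
    {ι : Type} [Finite ι] {B : ι → QuivRep K V A t h}
    (hhom : ∀ X, C X → IsNonzero X → ∃ j, ¬ HomVanishes (B j) X)
    (horth : ∀ j k, j ≠ k → HomVanishes (B j) (B k)) (hbrick : ∀ j, IsBrick (B j))
    (hB : ∀ j, IsNonzero (B j)) {κ : Type} [Finite κ] [Nonempty κ] {g : κ → ι}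
    (hg : Function.Injective g) (hC : C (directSum fun j => B (g j))) :
    ∃ j, ∀ k, ExtVanishes (B (g j)) (B (g k)) := by
  classical
  have := Fintype.ofFinite κ
  by_contra! hsink
  choose s hs using hsink
  choose ξ hξ using fun j => exists_notMem_range_dmap (hs j)
  have hne : IsNonzero (directSum fun j => B (g j)) := by
    obtain ⟨k⟩ := ‹Nonempty κ›
    exact (hB (g k)).of_surjective (f := directSumProj (fun j => B (g j)) k)
      fun i y => ⟨_, directSumProj_incl (fun j => B (g j)) k i y⟩
  obtain ⟨j, hj⟩ :=
    exists_infinite_not_homVanishes_deform hopen hhom hC hne (directSumCocycle ξ)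
  obtain ⟨f, hf, hfξ⟩ := exists_precomp_mem_range_dmap_of_infinite_deform hj
  obtain ⟨k, hk⟩ : ∃ k, ¬ (f.comp (directSumProj _ k)).IsZero := by
    by_contra! hzero
    exact hf fun i x => directSum_ext fun k => (hzero k i x).trans (map_zero _).symm
  obtain rfl : j = g k := by
    by_contra hjk
    exact hk (horth _ _ hjk _)
  obtain ⟨c, hc0, hc⟩ := (hbrick (g k)).exists_ne_zero hk
  rw [directSumCocycle_precomp ξ fun l hl => horth (g k) (g l) (fun hkl => hl (hg hkl).symm) _]
    at hfξ
  obtain ⟨φ, hφ⟩ := hfξ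
  refine hξ k ((Submodule.smul_mem_iff _ hc0).1
    ⟨fun i => ((directSumProj _ (s k)).app i).comp (φ i), dmap_eq_iff.2 fun a x => ?_⟩)
  have hx := congrArg ((directSumProj _ (s k)).app (h a)) (dmap_eq_iff.1 hφ a x)
  rw [ExtCocycle.postcomp_apply, directSumProj_incl, map_sub, app_map, ExtCocycle.precomp_apply,
    hc, map_smul] at hx
  exact hx

end Sinks

theorem RepIso.not_homVanishes_left {X Y Z : QuivRep K V A t h} (e : RepIso K X Y)
    (H : ¬ HomVanishes X Z) : ¬ HomVanishes Y Z := by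
  obtain ⟨f, hf⟩ := not_homVanishes_iff.1 H
  obtain ⟨u, -, hu⟩ := e.symm.exists_bijective_hom
  refine fun hzero => hf fun i x => ?_
  obtain ⟨y, rfl⟩ := hu i x
  exact hzero (u.comp f) i y

/-- Representatives of the isomorphism classes in `P`, pairwise without nonzero morphisms and
listed in such an order that all extensions of a member by itself or an earlier one split. -/
structure IsOrderedSystem (P : QuivRep K V A t h → Prop) {n : ℕ} (B : Fin n → QuivRep K V A t h) :
    Prop where
  mem : ∀ j, P (B j)
  exists_repIso : ∀ X, P X → ∃ j, RepIso K X (B j)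
  homVanishes : ∀ j k, j ≠ k → HomVanishes (B j) (B k)
  extVanishes : ∀ j k, k ≤ j → ExtVanishes (B j) (B k)

theorem exists_isOrderedSystem [Finite V] [Finite A] [IsAlgClosed K]
    {C P : QuivRep K V A t h → Prop} (hfin : FiniteUpToIso P) (hPC : ∀ X, P X → C X)
    (hC0 : ∀ X, ¬ IsNonzero X → C X) (hC : ExtensionClosed C)
    (hopen : ∀ X (ξ : ExtCocycle X X), C X → {s : K | ¬ C (X.deform ξ s)}.Finite)
    (hhom : ∀ X, C X → IsNonzero X → ∃ S, P S ∧ ¬ HomVanishes S X)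
    (hne : ∀ X, P X → IsNonzero X)
    (hschur : ∀ X Y, P X → P Y → ∀ f : RepHom X Y, ¬ f.IsZero → f.IsInjective ∧ f.IsSurjective) :
    ∃ (n : ℕ) (B : Fin n → QuivRep K V A t h), IsOrderedSystem P B := by
  obtain ⟨m, B, hBP, hiso, hcover⟩ := hfin.exists_representatives
  have horth : ∀ j k, j ≠ k → HomVanishes (B j) (B k) := fun j k hjk f => by
    by_contra hf
    obtain ⟨hinj, hsurj⟩ := hschur _ _ (hBP j) (hBP k) f hf
    exact hjk (hiso j k (repIso_of_bijective f hinj hsurj))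
  have hbrick : ∀ j, IsBrick (B j) := fun j =>
    isBrick_of_injective_end (hne _ (hBP j)) fun f hf => (hschur _ _ (hBP j) (hBP j) f hf).1
  have hhomB : ∀ X, C X → IsNonzero X → ∃ j, ¬ HomVanishes (B j) X := fun X hX hX0 => by
    obtain ⟨S, hS, hSX⟩ := hhom X hX hX0
    exact (hcover S hS).imp fun j e => e.not_homVanishes_left hSX
  have : Infinite K := IsAlgClosed.instInfinite
  obtain ⟨n, e, he⟩ := exists_equiv_fin_of_forall_exists_sink
    (r := fun j k => ExtVanishes (B j) (B k)) fun s hs => by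
      obtain ⟨l, ⟨g⟩⟩ := Finite.exists_equiv_fin s
      have : Nonempty (Fin l) := hs.to_subtype.map g
      obtain ⟨j, hj⟩ := exists_forall_extVanishes_of_directSum hopen hhomB horth hbrick
        (fun j => hne _ (hBP j)) (g := fun j => (g.symm j : Fin m))
        (Subtype.val_injective.comp g.symm.injective) (hC.directSum hC0 _ fun j => hPC _ (hBP _))
      exact ⟨g.symm j, (g.symm j).2, fun k hk => by simpa using hj (g ⟨k, hk⟩)⟩
  refine ⟨n, B ∘ e, fun j => hBP _, fun X hX => ?_,
    fun j k hjk => horth _ _ (e.injective.ne hjk), he⟩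
  obtain ⟨j, hj⟩ := hcover X hX
  exact ⟨e.symm j, by rwa [Function.comp_apply, e.apply_symm_apply]⟩

/-! ### Compatible sets bound the stable representations -/

section Exceptional

variable {X Y X' Y' Z : QuivRep K V A t h}

theorem QuivRep.ExtVanishes.of_repIso (H : ExtVanishes X Y) (e : RepIso K X X')
    (e' : RepIso K Y Y') : ExtVanishes X' Y' := by
  obtain ⟨g, hg, -⟩ := e.symm.exists_bijective_hom
  obtain ⟨f, -, hf⟩ := e'.exists_bijective_hom
  exact (H.left_of_injective hg).right_of_surjective hf

theorem QuivRep.homDim_self_eq_one_iff : homDim X X = 1 ↔ IsNonzero X ∧ IsBrick X := by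
  have hid : (idHom X).app ∈ homS X X := (idHom X).comm
  have hid_eq_zero : (⟨_, hid⟩ : homS X X) = 0 ↔ ¬ IsNonzero X := by
    simp only [IsNonzero, not_exists, not_not, Submodule.mk_eq_zero, funext_iff, LinearMap.ext_iff]
    rfl
  constructor
  · intro H
    have hne : IsNonzero X := by
      by_contra hX
      have : Subsingleton (homS X X) := ⟨fun φ ψ => Subtype.ext (funext fun i =>
        LinearMap.ext fun x => by
          rw [not_exists.1 (not_exists.1 hX i) x |> not_not.1, map_zero, map_zero])⟩
      exact zero_ne_one (Module.finrank_zero_of_subsingleton.symm.trans H)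
    refine ⟨hne, fun f => ?_⟩
    obtain ⟨c, hc⟩ := (finrank_eq_one_iff_of_nonzero' _ fun h0 => hid_eq_zero.1 h0 hne).1 H
      ⟨f.app, f.comm⟩
    exact ⟨c, fun i x => (LinearMap.congr_fun (congrFun (congrArg Subtype.val hc) i) x).symm⟩
  · rintro ⟨hne, hX⟩
    refine (finrank_eq_one_iff_of_nonzero' _ fun h0 => hid_eq_zero.1 h0 hne).2 fun w => ?_
    obtain ⟨c, hc⟩ := hX ⟨w.1, w.2⟩
    exact ⟨c, Subtype.ext (funext fun i => LinearMap.ext fun x => (hc i x).symm)⟩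

theorem QuivRep.ExtVanishes.eulerPairing_eq_homDim [Fintype V] [Fintype A] (H : ExtVanishes X Y) :
    eulerPairing X Y = homDim X Y := by
  rw [eulerPairing_eq, extVanishes_iff_extDim.1 H, Nat.cast_zero, sub_zero]

-- The Euler form produces maps from `X` to `Z` and from `Z` to the image of the first; their
-- composition is a nonzero scalar on `Z`.
theorem QuivRep.ExtVanishes.repIso_of_dimVec_eq [Finite V] [Finite A] (hX : ExtVanishes X X)
    (hX1 : homDim X X = 1) (hZ : ExtVanishes Z Z) (hdim : Z.dimVec = X.dimVec) :
    RepIso K X Z := by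
  have := Fintype.ofFinite V
  have := Fintype.ofFinite A
  have heuler : ∀ {Y Y' : QuivRep K V A t h}, Y'.dimVec = Y.dimVec → ∀ {W W' : QuivRep K V A t h},
      W'.dimVec = W.dimVec → eulerPairing Y' W' = eulerPairing Y W := fun hY _ _ hW => by
    rw [eulerPairing, eulerPairing, hY, hW]
  have hXX : eulerPairing X X = 1 := by rw [hX.eulerPairing_eq_homDim, hX1, Nat.cast_one]
  have hbrick : IsBrick Z := by
    have hZ1 := hZ.eulerPairing_eq_homDim.symm.trans ((heuler hdim hdim).trans hXX)
    exact (homDim_self_eq_one_iff.1 (Nat.cast_eq_one.1 hZ1)).2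
  obtain ⟨f, hf⟩ : ∃ f : RepHom X Z, ¬ f.IsZero :=
    not_homVanishes_iff.1 (not_homVanishes_of_eulerPairing_pos (by
      rw [heuler rfl hdim, hXX]
      exact one_pos))
  obtain ⟨g, hg⟩ : ∃ g : RepHom Z (range f), ¬ g.IsZero :=
    not_homVanishes_iff.1 (not_homVanishes_of_eulerPairing_pos (by
      rw [heuler hdim rfl,
        (hX.right_of_surjective f.rangeRestrict_isSurjective).eulerPairing_eq_homDim]
      exact Nat.cast_pos.2 (Nat.pos_of_ne_zero
        (mt homVanishes_iff_homDim.2 (not_homVanishes_range hf)))))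
  obtain ⟨c, hc0, hc⟩ := hbrick.exists_ne_zero (f := g.comp f.rangeInclusion) fun H =>
    hg fun i x => f.rangeInclusion_isInjective i ((H i x).trans (map_zero _).symm)
  have hsurj : f.IsSurjective := fun i z => by
    obtain ⟨y, hy⟩ := f.rangeRestrict_isSurjective i (g.app i (c⁻¹ • z))
    refine ⟨y, ?_⟩
    rw [← rangeInclusion_rangeRestrict, hy, ← comp_app_apply, hc, smul_inv_smul₀ hc0]
  exact repIso_of_bijective f (hsurj.isInjective_of_dimVec_eq hdim.symm) hsurj

/-- The derivative of `dmap (X.deform ξ s) (Y.deform η s)` in the parameter `s`. -/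
def QuivRep.deformDmap (ξ : ExtCocycle X X) (η : ExtCocycle Y Y) :
    (∀ i, X.sp i →ₗ[K] Y.sp i) →ₗ[K] ExtCocycle X Y :=
  dmap { X with map := ξ } { Y with map := η }

theorem QuivRep.extVanishes_deform_iff (ξ : ExtCocycle X X) (η : ExtCocycle Y Y) (s : K) :
    ExtVanishes (X.deform ξ s) (Y.deform η s) ↔
      Function.Surjective (dmap X Y + s • deformDmap ξ η) := by
  have heq (φ : ∀ i, X.sp i →ₗ[K] Y.sp i) :
      dmap (X.deform ξ s) (Y.deform η s) φ = (dmap X Y + s • deformDmap ξ η) φ :=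
    funext fun a => LinearMap.ext fun x => by
      change φ (h a) (X.map a x + s • ξ a x) - (Y.map a (φ (t a) x) + s • η a (φ (t a) x)) =
        (φ (h a) (X.map a x) - Y.map a (φ (t a) x)) + s • (φ (h a) (ξ a x) - η a (φ (t a) x))
      rw [map_add, map_smul, smul_sub]
      abel
  rw [← funext heq]
  rfl

theorem QuivRep.ExtVanishes.finite_setOf_not_deform [Finite A] {ξ : ExtCocycle X X}
    {η : ExtCocycle Y Y} {s₀ : K} (H : ExtVanishes (X.deform ξ s₀) (Y.deform η s₀)) :
    {s | ¬ ExtVanishes (X.deform ξ s) (Y.deform η s)}.Finite := by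
  rw [extVanishes_deform_iff] at H
  refine ((finite_setOf_not_surjective_add_smul _ (deformDmap ξ η) H).preimage
    (f := fun s => s - s₀) sub_left_injective.injOn).subset fun s hs hsurj => hs ?_
  rw [extVanishes_deform_iff]
  convert hsurj using 2
  module

theorem QuivRep.exists_repIso_deform_one (hdim : X'.dimVec = X.dimVec) :
    ∃ ξ, RepIso K X' (X.deform ξ 1) := by
  have e : ∀ i, X'.sp i ≃ₗ[K] X.sp i := fun i => LinearEquiv.ofFinrankEq _ _ (congrFun hdim i)
  refine ⟨fun a => ((e (h a)).toLinearMap.comp (X'.map a)).comp (e (t a)).symm.toLinearMap -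
    X.map a, e, fun a x => ?_⟩
  change e (h a) (X'.map a x) = X.map a (e (t a) x) +
    (1 : K) • (e (h a) (X'.map a ((e (t a)).symm (e (t a) x))) - X.map a (e (t a) x))
  rw [LinearEquiv.symm_apply_apply, one_smul, add_sub_cancel]

theorem QuivRep.repIso_deform_zero (ξ : ExtCocycle X X) : RepIso K X (X.deform ξ 0) := by
  refine ⟨fun i => LinearEquiv.refl K (X.sp i), fun a x => ?_⟩
  change X.map a x = X.map a x + (0 : K) • ξ a x
  rw [zero_smul, add_zero]

-- A pair realizing the minimum lies on a line through the two exceptional representations; rigidity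
-- and the vanishing of `Ext` are both open on that line.
theorem QuivRep.extVanishes_of_extMin_eq_zero [Finite V] [Finite A] [Infinite K]
    (hX : X.IsExceptional) (hY : Y.IsExceptional) (H : extMin K t h X.dimVec Y.dimVec = 0) :
    ExtVanishes X Y := by
  obtain ⟨X', Y', hX', hY', hmin⟩ : ∃ X' Y' : QuivRep K V A t h,
      X'.dimVec = X.dimVec ∧ Y'.dimVec = Y.dimVec ∧ extDim X' Y' = 0 := by
    obtain ⟨X', Y', hX', hY', hmin⟩ := Nat.sInf_mem
      (s := {n | ∃ X' Y' : QuivRep K V A t h, X'.dimVec = X.dimVec ∧ Y'.dimVec = Y.dimVec ∧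
        extDim X' Y' = n}) ⟨_, X, Y, rfl, rfl, rfl⟩
    exact ⟨X', Y', hX', hY', hmin.trans H⟩
  obtain ⟨ξ, hξ⟩ := exists_repIso_deform_one hX'
  obtain ⟨η, hη⟩ := exists_repIso_deform_one hY'
  have hXX : ExtVanishes X X := extVanishes_iff_extDim.2 hX.1
  have hYY : ExtVanishes Y Y := extVanishes_iff_extDim.2 hY.1
  have hfinXY := ((extVanishes_iff_extDim.2 hmin).of_repIso hξ hη).finite_setOf_not_deform
  have hfinX :=
    (hXX.of_repIso (repIso_deform_zero ξ) (repIso_deform_zero ξ)).finite_setOf_not_deform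
  have hfinY :=
    (hYY.of_repIso (repIso_deform_zero η) (repIso_deform_zero η)).finite_setOf_not_deform
  obtain ⟨s, hs⟩ := ((hfinXY.union hfinX).union hfinY).exists_notMem
  simp only [Set.mem_union, Set.mem_ofPred_eq, not_or, not_not] at hs
  obtain ⟨⟨hsXY, hsX⟩, hsY⟩ := hs
  exact hsXY.of_repIso (hXX.repIso_of_dimVec_eq hX.2 hsX rfl).symm
    (hYY.repIso_of_dimVec_eq hY.2 hsY rfl).symm

end Exceptional

section WeightPresentation

variable {ι : Type} {B : ι → QuivRep K V A t h} {q : ι → ℚ} {m : V → ℚ}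
  {σ : V → ℤ} {X Y E W : QuivRep K V A t h}

/-- Orthogonality to the representations `B c` and to the shifted projectives `P_i[1]` with
`m i ≠ 0`: a map from `P_i` to `Y` is an element of `Y.sp i`. -/
def ExtOrthogonal (B : ι → QuivRep K V A t h) (m : V → ℚ) (Y : QuivRep K V A t h) : Prop :=
  (∀ c, ExtVanishes (B c) Y) ∧ ∀ i, m i ≠ 0 → Y.dimVec i = 0

theorem ExtOrthogonal.of_surjective (hX : ExtOrthogonal B m X) {f : RepHom X Y}
    (hf : f.IsSurjective) : ExtOrthogonal B m Y :=
  ⟨fun c => (hX.1 c).right_of_surjective hf, fun i hi =>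
    Nat.eq_zero_of_le_zero ((LinearMap.finrank_le_finrank_of_surjective (hf i)).trans_eq
      (hX.2 i hi))⟩

theorem RepHom.ShortExact.extOrthogonal {f : RepHom X Y} {g : RepHom Y W} (S : ShortExact f g)
    (hX : ExtOrthogonal B m X) (hW : ExtOrthogonal B m W) : ExtOrthogonal B m Y :=
  ⟨fun c => S.extVanishes_right (hX.1 c) (hW.1 c), fun i hi => by
    rw [S.dimVec, hX.2 i hi, hW.2 i hi]⟩

variable [Fintype V] [Fintype A]

/-- An expression of the weight `σ` as a combination, with coefficients `q c` and `m i`, of the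
weights `⟨dim B c, ·⟩` and `⟨-γ_i, ·⟩` belonging to pairwise compatible summands. -/
structure WeightPresentation [Fintype ι] (σ : V → ℤ) (B : ι → QuivRep K V A t h) (q : ι → ℚ)
    (m : V → ℚ) : Prop where
  weight_eq : ∀ Y : QuivRep K V A t h, (weight σ Y : ℚ) =
    ∑ c, q c * (eulerPairing (B c) Y : ℚ) - ∑ i, m i * (Y.dimVec i : ℚ)
  pos : ∀ c, 0 < q c
  nonneg : ∀ i, 0 ≤ m i
  extOrthogonal : ∀ c, ExtOrthogonal B m (B c)

namespace WeightPresentation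

variable [Fintype ι]

theorem weight_eq_sum_homDim (P : WeightPresentation σ B q m) (hY : ExtOrthogonal B m Y) :
    (weight σ Y : ℚ) = ∑ c, q c * (homDim (B c) Y : ℚ) := by
  have hm : ∑ i, m i * (Y.dimVec i : ℚ) = 0 := Finset.sum_eq_zero fun i _ =>
    mul_eq_zero.2 (or_iff_not_imp_left.2 fun hi => by rw [hY.2 i hi, Nat.cast_zero])
  rw [P.weight_eq, hm, sub_zero]
  simp only [(hY.1 _).eulerPairing_eq_homDim, Int.cast_natCast]

theorem weight_nonneg (P : WeightPresentation σ B q m) (hY : ExtOrthogonal B m Y) :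
    0 ≤ weight σ Y := by
  rw [← Int.cast_nonneg_iff (R := ℚ), P.weight_eq_sum_homDim hY]
  exact Finset.sum_nonneg fun c _ => mul_nonneg (P.pos c).le (Nat.cast_nonneg _)

theorem weight_pos (P : WeightPresentation σ B q m) (hY : ExtOrthogonal B m Y) {c : ι}
    (hc : ¬ HomVanishes (B c) Y) : 0 < weight σ Y := by
  rw [← Int.cast_pos (R := ℚ), P.weight_eq_sum_homDim hY]
  refine Finset.sum_pos' (fun d _ => mul_nonneg (P.pos d).le (Nat.cast_nonneg _))
    ⟨c, Finset.mem_univ c, mul_pos (P.pos c) (Nat.cast_pos.2 (Nat.pos_of_ne_zero ?_))⟩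
  exact mt homVanishes_iff_homDim.2 hc

theorem isTorsion (P : WeightPresentation σ B q m) (c : ι) : IsTorsion σ (B c) := by
  refine fun Y g hg hY => P.weight_pos ((P.extOrthogonal c).of_surjective hg)
    (not_homVanishes_iff.2 ⟨g, fun hzero => ?_⟩)
  obtain ⟨i, y, hy⟩ := hY
  obtain ⟨x, rfl⟩ := hg i y
  exact hy (hzero i x)

theorem homVanishes (P : WeightPresentation σ B q m) (hW : IsTorsionFree σ W) (c : ι) :
    HomVanishes (B c) W := fun f => by
  by_contra hf
  exact (hW f.range f.rangeInclusion f.rangeInclusion_isInjective).not_gt (P.weight_pos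
    ((P.extOrthogonal c).of_surjective f.rangeRestrict_isSurjective) (not_homVanishes_range hf))

-- The weight of a torsion-free `W` is a sum of nonpositive terms; it vanishes only if each does.
theorem extOrthogonal_of_isSemistable (P : WeightPresentation σ B q m) (hW : IsSemistable K σ W) :
    ExtOrthogonal B m W := by
  have hext (c : ι) : (eulerPairing (B c) W : ℚ) = -(extDim (B c) W : ℚ) := by
    rw [eulerPairing_eq, homVanishes_iff_homDim.1 (P.homVanishes hW.isTorsionFree c)]
    push_cast
    exact zero_sub _
  have hsum : ∑ c, q c * (extDim (B c) W : ℚ) + ∑ i, m i * (W.dimVec i : ℚ) = 0 := by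
    have := P.weight_eq W
    simp only [hW.weight_eq_zero, hext, mul_neg, Finset.sum_neg_distrib] at this
    push_cast at this
    linarith
  have hq : ∀ c ∈ Finset.univ, 0 ≤ q c * (extDim (B c) W : ℚ) := fun c _ =>
    mul_nonneg (P.pos c).le (Nat.cast_nonneg _)
  have hm : ∀ i ∈ Finset.univ, 0 ≤ m i * (W.dimVec i : ℚ) := fun i _ =>
    mul_nonneg (P.nonneg i) (Nat.cast_nonneg _)
  obtain ⟨hq0, hm0⟩ := (add_eq_zero_iff_of_nonneg (Finset.sum_nonneg hq) (Finset.sum_nonneg hm)).1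
    hsum
  rw [Finset.sum_eq_zero_iff_of_nonneg hq] at hq0
  rw [Finset.sum_eq_zero_iff_of_nonneg hm] at hm0
  exact ⟨fun c => extVanishes_iff_extDim.2 (Nat.cast_eq_zero.1
    ((mul_eq_zero.1 (hq0 c (Finset.mem_univ c))).resolve_left (P.pos c).ne')), fun i hi =>
    Nat.cast_eq_zero.1 ((mul_eq_zero.1 (hm0 i (Finset.mem_univ i))).resolve_left hi)⟩

theorem isSurjective_of_isStable (P : WeightPresentation σ B q m) (hE : ExtOrthogonal B m E)
    (hW : IsStable K σ W) {f : RepHom E W} (hf : ¬ f.IsZero) : f.IsSurjective := by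
  by_contra hsurj
  refine (hW.weight_neg f.rangeInclusion_isInjective (not_imp_comm.1 not_isNonzero_range_iff.1 hf)
    (mt rangeInclusion_isSurjective_iff.1 hsurj)).not_ge ?_
  exact P.weight_nonneg (hE.of_surjective f.rangeRestrict_isSurjective)

theorem extOrthogonal_ker (P : WeightPresentation σ B q m) (hE : ExtOrthogonal B m E)
    (hW : IsStable K σ W) {f : RepHom E W} (hf : f.IsSurjective) : ExtOrthogonal B m f.ker :=
  ⟨fun c => (shortExact_ker hf).extVanishes_right_sub
      (P.homVanishes hW.isSemistable.isTorsionFree c) (hE.1 c), fun i hi =>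
    Nat.eq_zero_of_le_zero ((LinearMap.finrank_le_finrank_of_injective
      (f.kerInclusion_isInjective i)).trans_eq (hE.2 i hi))⟩

theorem finiteUpToIso_not_homVanishes (P : WeightPresentation σ B q m)
    (hE : ExtOrthogonal B m E) :
    FiniteUpToIso fun W : QuivRep K V A t h => IsStable K σ W ∧ ¬ HomVanishes E W := by
  refine (FiniteUpToIso.of_descent totalDim (R := fun E W => ExtOrthogonal B m E ∧
    IsStable K σ W ∧ ¬ HomVanishes E W) ?_ E).mono fun W hW => ⟨hE, hW⟩
  rintro E W ⟨hE, hW, hEW⟩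
  obtain ⟨f, hf⟩ := not_homVanishes_iff.1 hEW
  have hsurj := P.isSurjective_of_isStable hE hW hf
  have S := shortExact_ker hsurj
  have hlt : totalDim f.ker < totalDim E := by
    have := S.totalDim
    have := totalDim_pos_iff.2 hW.isNonzero
    lia
  refine ⟨f.ker, hlt, _, FiniteUpToIso.repIso W, ?_⟩
  rintro W' ⟨-, hW', hEW'⟩
  obtain ⟨u, hu⟩ := not_homVanishes_iff.1 hEW'
  by_cases hk : (f.kerInclusion.comp u).IsZero
  · obtain ⟨v, hv⟩ := S.exists_desc u hk
    have hv0 : ¬ v.IsZero := fun hv0 => hu fun i x => by rw [← hv, hv0]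
    exact Or.inl (repIso_of_bijective v (hW.isInjective_of_not_isZero hW'.isSemistable hv0)
      (hW'.isSurjective_of_not_isZero hW.isSemistable hv0)).symm
  · exact Or.inr ⟨P.extOrthogonal_ker hE hW hsurj, hW', fun H => hk (H _)⟩

theorem exists_extOrthogonal_of_simple [DecidableEq V] (P : WeightPresentation σ B q m) {i : V}
    (hi : m i = 0) : ∃ E : QuivRep K V A t h, ExtOrthogonal B m E ∧
      ∀ W, IsStable K σ W → ¬ HomVanishes (simple K t h i) W → ¬ HomVanishes E W := by
  obtain ⟨E, ⟨hEm, hEhom⟩, hEext⟩ := exists_forall_extVanishes_right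
    (fun c d => (P.extOrthogonal d).1 c) (P := fun E => (∀ j, m j ≠ 0 → E.dimVec j = 0) ∧
      ∀ W, IsStable K σ W → ¬ HomVanishes (simple K t h i) W → ¬ HomVanishes E W) Finset.univ
    (fun c _ E ξ hE _ => by
      have S := shortExact_extension ξ
      refine ⟨fun j hj => by rw [S.dimVec, hE.1 j hj, (P.extOrthogonal c).2 j hj],
        fun W hW hs => ?_⟩
      obtain ⟨ψ, hψ⟩ := not_homVanishes_iff.1 (hE.2 W hW hs)
      obtain ⟨θ, hθ⟩ :=
        S.exists_extension ((P.extOrthogonal_of_isSemistable hW.isSemistable).1 c) ψ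
      exact fun H => hψ fun i x => by rw [← hθ, H])
    (X := simple K t h i)
    ⟨fun j hj => not_not.1 fun hj' => hj (dimVec_simple_ne_zero_iff.1 hj' ▸ hi), fun _ _ => id⟩
  exact ⟨E, ⟨fun c => hEext c (Finset.mem_univ c), hEm⟩, hEhom⟩

theorem finiteUpToIso_isStable (hQ : Acyclic t h) (P : WeightPresentation σ B q m) :
    FiniteUpToIso (IsStable K σ : QuivRep K V A t h → Prop) := by
  classical
  have hsimple (i : V) : FiniteUpToIso fun W : QuivRep K V A t h =>
      IsStable K σ W ∧ m i = 0 ∧ ¬ HomVanishes (simple K t h i) W := by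
    by_cases hi : m i = 0
    · obtain ⟨E, hE, hEhom⟩ := P.exists_extOrthogonal_of_simple hi
      exact (P.finiteUpToIso_not_homVanishes hE).mono fun W hW => ⟨hW.1, hEhom W hW.1 hW.2.2⟩
    · exact FiniteUpToIso.of_forall_not fun W hW => hi hW.2.1
  refine (FiniteUpToIso.exists_of_finite hsimple).mono fun W hW => ?_
  obtain ⟨i, hWi, hi⟩ := hQ.exists_hom_from_simple hW.isNonzero
  exact ⟨i, hW, not_not.1 fun hm =>
    hWi ((P.extOrthogonal_of_isSemistable hW.isSemistable).2 i hm), hi⟩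

end WeightPresentation

end WeightPresentation

section Cone

theorem IsCompatible.mono {C C' : Finset (V → ℤ)}
    (hC : IsCompatible K t h C) (hC' : C' ⊆ C) : IsCompatible K t h C' :=
  ⟨fun x hx => hC.1 x (hC' hx), fun x hx y hy => hC.2 x (hC' hx) y (hC' hy)⟩

theorem exists_pos_combination_of_mem_coneOf {C : Finset (V → ℤ)} {x : V → ℚ}
    (hx : x ∈ coneOf C) : ∃ C' ⊆ C, ∃ lam : (V → ℤ) → ℚ, (∀ c ∈ C', 0 < lam c) ∧
      x = ∑ c ∈ C', lam c • intQ c := by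
  obtain ⟨lam, hlam, rfl⟩ := hx
  classical
  refine ⟨C.filter fun c => lam c ≠ 0, Finset.filter_subset _ _, lam, fun c hc =>
    (hlam c).lt_of_ne' (Finset.mem_filter.1 hc).2, ?_⟩
  exact (Finset.sum_filter_of_ne fun c _ hc => left_ne_zero_of_smul hc).symm

variable [Fintype V] [Fintype A]

theorem intCast_eulerForm (x y : V → ℤ) :
    ((eulerForm t h x y : ℤ) : ℚ) = eulerForm t h (intQ x) (intQ y) := by
  simp only [eulerForm, intQ]
  push_cast
  rfl

theorem Acyclic.eulerForm_neg_gammaRoot (hQ : Acyclic t h) (i : V) (y : V → ℤ) :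
    eulerForm t h (fun j => -(gammaRoot t h i j : ℤ)) y = -y i := by
  have hneg : (fun j => -(gammaRoot t h i j : ℤ)) = (-1 : ℤ) • natZ (gammaRoot t h i) :=
    funext fun j => (neg_one_mul _).symm
  rw [hneg, eulerForm_smul_left, hQ.eulerForm_gammaRoot, neg_one_mul]

variable [DecidableEq V]

theorem intCast_weight_weightL {C : Finset (V → ℤ)} {lam : (V → ℤ) → ℚ} {α : V → ℤ}
    (hα : intQ α = ∑ c ∈ C, lam c • intQ c) (Y : QuivRep K V A t h) :
    (weight (weightL t h α) Y : ℚ) =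
      ∑ c : C, lam c * ((eulerForm t h c.1 (natZ Y.dimVec) : ℤ) : ℚ) := by
  rw [weight_weightL, intCast_eulerForm, hα, eulerForm_sum_left, ← Finset.sum_coe_sort]
  simp only [eulerForm_smul_left, ← intCast_eulerForm]

theorem IsCompatible.exists_weightPresentation [Infinite K] (hQ : Acyclic t h)
    {C : Finset (V → ℤ)} (hC : IsCompatible K t h C) {lam : (V → ℤ) → ℚ}
    (hlam : ∀ c ∈ C, 0 < lam c) {α : V → ℤ} (hα : intQ α = ∑ c ∈ C, lam c • intQ c) :
    ∃ (ι : Type) (_ : Fintype ι) (B : ι → QuivRep K V A t h) (q : ι → ℚ) (m : V → ℚ),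
      WeightPresentation (weightL t h α) B q m := by
  classical
  let IsRoot (c : C) : Prop := ∃ X : QuivRep K V A t h, X.IsExceptional ∧ c.1 = natZ X.dimVec
  choose X hX hXdim using fun c : {c // IsRoot c} => c.2
  have hshift (c : {c // ¬ IsRoot c}) : ∃ i : V, c.1.1 = fun j => -(gammaRoot t h i j : ℤ) :=
    (hC.1 _ c.1.2).resolve_left fun ⟨_, ⟨X, hXβ, hX⟩, hβ⟩ => c.2 ⟨X, hX, hXβ ▸ hβ⟩
  choose g hg using hshift
  refine ⟨{c // IsRoot c}, inferInstance, X, fun c => lam c.1,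
    fun i => ∑ c, if g c = i then lam c.1 else 0, fun Y => ?_, fun c => hlam _ c.1.2,
    fun i => Finset.sum_nonneg fun c _ => ?_, fun d => ⟨fun c => ?_, fun i hi => ?_⟩⟩
  · have hroot (c : {c // IsRoot c}) : eulerForm t h c.1.1 (natZ Y.dimVec) =
        eulerPairing (X c) Y := by rw [hXdim]; rfl
    have hproj (c : {c // ¬ IsRoot c}) : eulerForm t h c.1.1 (natZ Y.dimVec) =
        -(Y.dimVec (g c) : ℤ) := by rw [hg, hQ.eulerForm_neg_gammaRoot]; rfl
    rw [intCast_weight_weightL hα, ← Fintype.sum_subtype_add_sum_subtype IsRoot, sub_eq_add_neg]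
    simp only [hroot, hproj, Finset.sum_mul]
    rw [Finset.sum_comm, ← Finset.sum_neg_distrib]
    simp
  · split_ifs
    exacts [(hlam _ c.1.2).le, le_rfl]
  · by_cases hcd : c = d
    · exact hcd ▸ extVanishes_iff_extDim.2 (hX c).1
    · exact extVanishes_of_extMin_eq_zero (hX c) (hX d) ((hC.2 _ c.1.2 _ d.1.2 fun h =>
        hcd (Subtype.ext (Subtype.ext h))).1 _ _ ⟨X c, rfl, hX c⟩ ⟨X d, rfl, hX d⟩ (hXdim c)
          (hXdim d))
  · obtain ⟨c, -, hc⟩ := Finset.exists_ne_zero_of_sum_ne_zero hi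
    obtain rfl : g c = i := not_not.1 fun hgi => hc (if_neg hgi)
    have hne : d.1.1 ≠ c.1.1 := fun h => c.2 (Subtype.ext h ▸ d.2)
    exact (hC.2 _ d.1.2 _ c.1.2 hne).2 _ _ ⟨X d, rfl, hX d⟩ (hXdim d) (hg c)

theorem IsCompatible.finiteUpToIso_isStable [Infinite K] (hQ : Acyclic t h) {C : Finset (V → ℤ)}
    (hC : IsCompatible K t h C) {α : V → ℤ} (hα : intQ α ∈ coneOf C) :
    FiniteUpToIso (IsStable K (weightL t h α) : QuivRep K V A t h → Prop) := by
  obtain ⟨C', hC', lam, hlam, hα⟩ := exists_pos_combination_of_mem_coneOf hα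
  obtain ⟨ι, _, B, q, m, P⟩ := (hC.mono hC').exists_weightPresentation hQ hlam hα
  exact P.finiteUpToIso_isStable hQ

end Cone

/-! ### Finiteness yields a compatible set -/

section TorsionSimple

variable {X Y Z L M N : QuivRep K V A t h} {f : RepHom L M} {g : RepHom M N} {σ : V → ℤ}

theorem RepHom.exists_inverse {f : RepHom X Y} (hinj : f.IsInjective) (hsurj : f.IsSurjective) :
    ∃ f' : RepHom Y X, (∀ i x, f'.app i (f.app i x) = x) ∧ ∀ i y, f.app i (f'.app i y) = y := by
  obtain ⟨f', hf'⟩ := (shortExact_coker hinj).exists_lift (idHom Y) fun i y => by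
    by_contra hy
    exact not_isNonzero_coker_iff.2 hsurj ⟨i, _, hy⟩
  exact ⟨f', fun i x => hinj i (hf' i _), hf'⟩

theorem RepHom.ShortExact.exists_retraction_of_section (S : ShortExact f g) {s : RepHom N M}
    (hs : ∀ i y, g.app i (s.app i y) = y) : ∃ r : RepHom M L, ∀ i x, r.app i (f.app i x) = x := by
  obtain ⟨r, hr⟩ := S.exists_lift ((idHom M).sub (g.comp s)) fun i x => by
    rw [sub_app_apply, map_sub, comp_app_apply, hs, idHom_app_apply, sub_self]
  refine ⟨r, fun i x => S.injective i ?_⟩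
  rw [hr, sub_app_apply, comp_app_apply, S.comp_eq_zero, map_zero, sub_zero, idHom_app_apply]

variable [Fintype V]

theorem QuivRep.IsTorsionFree.of_comp_eq_zero (S : ShortExact f g) (hL : IsTorsionFree σ L)
    {j : RepHom X M} (hj : j.IsInjective) (hgj : ∀ i x, g.app i (j.app i x) = 0) :
    IsTorsionFree σ X := by
  obtain ⟨v, hv⟩ := S.exists_lift j hgj
  refine hL.of_injective (f := v) ((isInjective_iff v).2 fun i x hx => ?_)
  exact (isInjective_iff j).1 hj i x (by rw [← hv, hx, map_zero])

theorem RepHom.ShortExact.isTorsionFree_ker (S : ShortExact f g) (hL : IsTorsionFree σ L) :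
    IsTorsionFree σ g.ker :=
  hL.of_comp_eq_zero S g.kerInclusion_isInjective fun _ x => x.2

theorem RepHom.isTorsionFree_ker_comp {u : RepHom X Y} {v : RepHom Y Z}
    (hu : IsTorsionFree σ u.ker) (hv : IsTorsionFree σ v.ker) :
    IsTorsionFree σ (u.comp v).ker := by
  have S := shortExact_ker_range ((u.comp v).kerInclusion.comp u)
  refine S.isTorsionFree ?_ (hv.of_comp_eq_zero (shortExact_ker_range v)
    (rangeInclusion_isInjective _) ?_)
  · refine hu.of_comp_eq_zero (shortExact_ker_range u)
      ((kerInclusion_isInjective _).comp (kerInclusion_isInjective (u.comp v))) fun i x => ?_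
    exact rangeInclusion_isInjective u i x.2
  · rintro i ⟨-, x, rfl⟩
    exact rangeInclusion_isInjective v i x.2

theorem IsStable.isTorsion_extension (hL : IsStable K σ L) (hN : IsTorsion σ N)
    {ξ : ExtCocycle N L} (hξ : ξ ∉ LinearMap.range (dmap N L)) : IsTorsion σ (extension ξ) := by
  intro Y p hp hY
  set restricted := (extensionInl ξ).comp p
  have hadd := (shortExact_range_coker restricted).weight σ
  have hrange := hL.isSemistable.weight_nonneg restricted.rangeRestrict_isSurjective
  obtain ⟨ψ, hψ⟩ := (shortExact_extension ξ).exists_desc (p.comp restricted.cokerProjection)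
    fun i x => restricted.cokerProjection_eq_zero_iff.2 ⟨x, rfl⟩
  have hcoker : IsTorsion σ restricted.coker := hN.of_surjective (g := ψ) fun i y => by
    obtain ⟨x, rfl⟩ := hp.comp restricted.cokerProjection_isSurjective i y
    exact ⟨_, hψ i x⟩
  by_cases hcoker0 : IsNonzero restricted.coker
  · have hpos := hcoker.weight_pos hcoker0
    omega
  have hsurj := not_isNonzero_coker_iff.1 hcoker0
  refine hL.weight_pos hsurj hY fun hinj => ?_
  obtain ⟨v, hv, -⟩ := exists_inverse hinj hsurj
  exact hξ (mem_range_dmap_of_retraction (p.comp v) hv)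

/-- A simple object of the category of torsion objects for `σ`. A morphism of that category is a
monomorphism exactly when its kernel, taken among all representations, is torsion-free. -/
structure QuivRep.IsTorsionSimple (σ : V → ℤ) (S : QuivRep K V A t h) : Prop where
  isTorsion : IsTorsion σ S
  isNonzero : IsNonzero S
  bijective_of_isTorsionFree_ker : ∀ (X : QuivRep K V A t h) (u : RepHom X S), IsTorsion σ X →
    ¬ u.IsZero → IsTorsionFree σ u.ker → u.IsInjective ∧ u.IsSurjective

theorem isTorsionSimple_of_forall_weight_le {D : QuivRep K V A t h} (hD : IsTorsion σ D)
    (hD0 : IsNonzero D) (hext : ∀ W, IsSemistable K σ W → ExtVanishes D W)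
    (hmin : ∀ (X : QuivRep K V A t h) (u : RepHom X D), IsTorsion σ X → IsNonzero X →
      IsTorsionFree σ u.ker → weight σ D ≤ weight σ X) : IsTorsionSimple σ D := by
  refine ⟨hD, hD0, fun X u hX hu hker => ?_⟩
  have hweight := hmin X u hX (isNonzero_of_not_isZero hu).1 hker
  have hsource := (shortExact_ker_range u).weight σ
  have htarget := (shortExact_range_coker u).weight σ
  have hker_weight := hker.weight_nonpos
  have hcoker : IsTorsion σ u.coker := hD.of_surjective u.cokerProjection_isSurjective
  have hsurj : u.IsSurjective := not_isNonzero_coker_iff.1 fun h0 => by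
    have hpos := hcoker.weight_pos h0
    omega
  have hcoker_weight := hcoker.weight_nonneg
  have hker_ss : IsSemistable K σ u.ker := isSemistable_iff.2 ⟨by omega, hker⟩
  obtain ⟨s, hs⟩ := (shortExact_ker hsurj).exists_lifting (hext _ hker_ss) (idHom D)
  obtain ⟨r, hr⟩ := (shortExact_ker hsurj).exists_retraction_of_section hs
  exact ⟨not_isNonzero_ker_iff.1 <| IsTorsion.not_isNonzero_of_isTorsionFree
    (hX.of_surjective (g := r) fun i x => ⟨_, hr i x⟩) hker, hsurj⟩

theorem IsOrderedSystem.extVanishes_of_isSemistable {n : ℕ} {B : Fin n → QuivRep K V A t h}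
    (hB : IsOrderedSystem (IsStable K σ) B) (hX : ∀ j, ExtVanishes X (B j)) {W : QuivRep K V A t h}
    (hW : IsSemistable K σ W) : ExtVanishes X W := by
  refine IsSemistable.induction (P := ExtVanishes X) (fun W hW ξ => ⟨0, ?_⟩) ?_ hW
  · refine dmap_eq_iff.2 fun a x => ?_
    have hzero (y : W.sp (h a)) : y = 0 := not_not.1 fun hy => hW ⟨_, y, hy⟩
    exact (hzero _).trans (hzero _).symm
  · intro L M N f g S hL _ hN
    obtain ⟨j, e⟩ := hB.exists_repIso L hL
    exact S.extVanishes_right ((hX j).of_repIso (.refl X) e.symm) hN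

theorem IsOrderedSystem.exists_torsion_extVanishes [Finite A] {n : ℕ}
    {B : Fin n → QuivRep K V A t h} (hB : IsOrderedSystem (IsStable K σ) B)
    {C : QuivRep K V A t h} (hC : IsTorsion σ C) (u : RepHom C X) (hu : IsTorsionFree σ u.ker) :
    ∃ (D : QuivRep K V A t h) (v : RepHom D X), IsTorsion σ D ∧ weight σ D = weight σ C ∧
      IsTorsionFree σ v.ker ∧ ∀ W, IsSemistable K σ W → ExtVanishes D W := by
  obtain ⟨D, ⟨hD, hweight, v, hv⟩, hext⟩ := exists_forall_extVanishes_left hB.extVanishes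
    (P := fun D => IsTorsion σ D ∧ weight σ D = weight σ C ∧
      ∃ v : RepHom D X, IsTorsionFree σ v.ker) Finset.univ
    (fun j _ D ξ ⟨hD, hweight, v, hv⟩ hξ => by
      have S := shortExact_extension ξ
      refine ⟨(hB.mem j).isTorsion_extension hD hξ, ?_, (extensionSnd ξ).comp v,
        isTorsionFree_ker_comp (S.isTorsionFree_ker (hB.mem j).isSemistable.isTorsionFree) hv⟩
      rw [S.weight, (hB.mem j).weight_eq_zero, hweight, zero_add])
    ⟨hC, rfl, u, hu⟩
  exact ⟨D, v, hD, hweight, hv, fun W hW =>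
    hB.extVanishes_of_isSemistable (fun j => hext j (Finset.mem_univ j)) hW⟩

theorem exists_isOrderedSystem_isStable [Finite A] [IsAlgClosed K]
    (hfin : FiniteUpToIso (IsStable K σ : QuivRep K V A t h → Prop)) :
    ∃ (n : ℕ) (B : Fin n → QuivRep K V A t h), IsOrderedSystem (IsStable K σ) B :=
  exists_isOrderedSystem (C := IsSemistable K σ) hfin (fun _ hX => hX.isSemistable)
    (fun _ => isSemistable_of_not_isNonzero) (fun _ _ _ _ _ S => S.isSemistable)
    (fun _ ξ hX => hX.finite_setOf_not_deform ξ)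
    (fun _ hX hX0 => by
      obtain ⟨W, f, hW, hf⟩ := exists_isStable_sub hX hX0
      obtain ⟨i, x, hx⟩ := hW.isNonzero
      exact ⟨W, hW, fun hzero => hx ((isInjective_iff f).1 hf i x (hzero f i x))⟩)
    (fun _ hX => hX.isNonzero)
    fun _ _ hX hY _ hf =>
      ⟨hX.isInjective_of_not_isZero hY.isSemistable hf,
        hY.isSurjective_of_not_isZero hX.isSemistable hf⟩

theorem exists_isTorsionSimple_hom [Finite A] [IsAlgClosed K]
    (hfin : FiniteUpToIso (IsStable K σ : QuivRep K V A t h → Prop)) (hX : IsTorsion σ X)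
    (hX0 : IsNonzero X) :
    ∃ S : QuivRep K V A t h, IsTorsionSimple σ S ∧ ¬ HomVanishes S X := by
  obtain ⟨n, B, hB⟩ := exists_isOrderedSystem_isStable hfin
  obtain ⟨⟨C, u⟩, ⟨(hC : IsTorsion σ C), hC0, hu⟩, hmin⟩ :=
    (measure fun c : Σ C : QuivRep K V A t h, RepHom C X => (weight σ c.1).toNat).wf.has_min
      {c | IsTorsion σ c.1 ∧ IsNonzero c.1 ∧ IsTorsionFree σ c.2.ker}
      ⟨⟨X, idHom X⟩, hX, hX0,
        isTorsionFree_of_not_isNonzero (not_isNonzero_ker_iff.2 IsInjective.id)⟩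
  obtain ⟨D, v, hD, hDC, hv, hext⟩ := hB.exists_torsion_extVanishes hC u hu
  have hD0 : IsNonzero D := by
    by_contra hD0
    have hzero := weight_eq_zero_of_not_isNonzero hD0 σ
    have hpos := hC.weight_pos hC0
    omega
  refine ⟨D, isTorsionSimple_of_forall_weight_le hD hD0 hext fun Q w hQ hQ0 hw => ?_,
    fun hzero => ?_⟩
  · have hle : ¬ (weight σ Q).toNat < (weight σ C).toNat :=
      hmin ⟨Q, w.comp v⟩ ⟨hQ, hQ0, isTorsionFree_ker_comp hw hv⟩
    have hpos := hQ.weight_pos hQ0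
    omega
  · have hker : v.kerInclusion.IsSurjective := fun i x => ⟨⟨x, hzero v i x⟩, rfl⟩
    exact hD.not_isNonzero_of_isTorsionFree
      (hv.of_iso (repIso_of_bijective _ v.kerInclusion_isInjective hker)) hD0

namespace QuivRep.IsTorsionSimple

variable {S S' W : QuivRep K V A t h}

theorem isTorsionFree_ker (hS : IsTorsionSimple σ S) {u : RepHom S X} (hu : ¬ u.IsZero) :
    IsTorsionFree σ u.ker := by
  refine isTorsionFree_of_forall_isTorsion fun T w hw hT hT0 => hu ?_
  have hinj := hw.comp u.kerInclusion_isInjective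
  obtain ⟨-, hsurj⟩ := hS.bijective_of_isTorsionFree_ker T (w.comp u.kerInclusion) hT
    (fun hzero => by
      obtain ⟨i, x, hx⟩ := hT0
      exact hx ((isInjective_iff _).1 hinj i x (hzero i x)))
    (isTorsionFree_of_not_isNonzero (not_isNonzero_ker_iff.2 hinj))
  intro i x
  obtain ⟨y, rfl⟩ := hsurj i x
  exact (w.app i y).2

theorem bijective_of_not_isZero (hS : IsTorsionSimple σ S) (hS' : IsTorsionSimple σ S')
    {u : RepHom S S'} (hu : ¬ u.IsZero) : u.IsInjective ∧ u.IsSurjective :=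
  hS'.bijective_of_isTorsionFree_ker S u hS.isTorsion hu (hS.isTorsionFree_ker hu)

theorem repIso_of_not_isZero (hS : IsTorsionSimple σ S) (hS' : IsTorsionSimple σ S')
    {u : RepHom S S'} (hu : ¬ u.IsZero) : RepIso K S S' :=
  repIso_of_bijective u (hS.bijective_of_not_isZero hS' hu).1
    (hS.bijective_of_not_isZero hS' hu).2

theorem isTorsionFree_extension (hS : IsTorsionSimple σ S) (hY : IsTorsionFree σ Y)
    {ξ : ExtCocycle S Y} (hξ : ξ ∉ LinearMap.range (dmap S Y)) :
    IsTorsionFree σ (extension ξ) := by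
  have E := shortExact_extension ξ
  refine isTorsionFree_of_forall_isTorsion fun T u hu hT hT0 => ?_
  by_cases hzero : (u.comp (extensionSnd ξ)).IsZero
  · exact hT.not_isNonzero_of_isTorsionFree (hY.of_comp_eq_zero E hu hzero) hT0
  · obtain ⟨hinj, hsurj⟩ := hS.bijective_of_isTorsionFree_ker T _ hT hzero
      (hY.of_comp_eq_zero E ((kerInclusion_isInjective _).comp hu) fun _ x => x.2)
    obtain ⟨v, -, hv⟩ := exists_inverse hinj hsurj
    exact hξ (mem_range_dmap_of_section (v.comp u) hv)

theorem extVanishes (hS : IsTorsionSimple σ S) (hW : IsSemistable K σ W) : ExtVanishes S W := by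
  by_contra hext
  obtain ⟨ξ, hξ⟩ := exists_notMem_range_dmap hext
  have hle := (hS.isTorsionFree_extension hW.isTorsionFree hξ).weight_nonpos
  have hadd := (shortExact_extension ξ).weight σ
  have hpos := hS.isTorsion.weight_pos hS.isNonzero
  have hzero := hW.weight_eq_zero
  omega

end QuivRep.IsTorsionSimple

theorem finiteUpToIso_isTorsionSimple_not_extVanishes (hY : IsTorsionFree σ Y) :
    FiniteUpToIso fun S : QuivRep K V A t h => IsTorsionSimple σ S ∧ ¬ ExtVanishes S Y := by
  refine (FiniteUpToIso.of_descent (fun Y => (-weight σ Y).toNat) (R := fun Y S =>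
    IsTorsionFree σ Y ∧ IsTorsionSimple σ S ∧ ¬ ExtVanishes S Y) ?_ Y).mono fun S hS => ⟨hY, hS⟩
  rintro Y S ⟨hY, hS, hSY⟩
  obtain ⟨ξ, hξ⟩ := exists_notMem_range_dmap hSY
  have E := shortExact_extension ξ
  have hfree := hS.isTorsionFree_extension hY hξ
  refine ⟨extension ξ, ?_, _, .repIso S, ?_⟩
  · have hadd := E.weight σ
    have hpos := hS.isTorsion.weight_pos hS.isNonzero
    have hle := hfree.weight_nonpos
    omega
  · rintro S' ⟨-, hS', hS'Y⟩
    by_cases hzero : HomVanishes S' S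
    · exact .inr ⟨hfree, hS', fun hext => hS'Y (E.extVanishes_right_sub hzero hext)⟩
    · obtain ⟨u, hu⟩ := not_homVanishes_iff.1 hzero
      exact .inl (hS'.repIso_of_not_isZero hS hu)

theorem finiteUpToIso_isTorsionSimple_not_homVanishes (hX : IsTorsion σ X) :
    FiniteUpToIso fun S : QuivRep K V A t h => IsTorsionSimple σ S ∧ ¬ HomVanishes S X := by
  refine (FiniteUpToIso.of_descent (fun X => (weight σ X).toNat) (R := fun X S =>
    IsTorsion σ X ∧ IsTorsionSimple σ S ∧ ¬ HomVanishes S X) ?_ X).mono fun S hS => ⟨hX, hS⟩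
  rintro X S ⟨hX, hS, hSX⟩
  obtain ⟨f, hf⟩ := not_homVanishes_iff.1 hSX
  have hker := hS.isTorsionFree_ker hf
  have hcoker : IsTorsion σ f.coker := hX.of_surjective f.cokerProjection_isSurjective
  refine ⟨f.coker, ?_, _,
    (FiniteUpToIso.repIso S).or (finiteUpToIso_isTorsionSimple_not_extVanishes hker), ?_⟩
  · have hsource := (shortExact_ker_range f).weight σ
    have htarget := (shortExact_range_coker f).weight σ
    have hpos := hS.isTorsion.weight_pos hS.isNonzero
    have hker_le := hker.weight_nonpos
    have hcoker_ge := hcoker.weight_nonneg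
    omega
  · rintro S' ⟨-, hS', hS'X⟩
    obtain ⟨u, hu⟩ := not_homVanishes_iff.1 hS'X
    by_cases hzero : (u.comp f.cokerProjection).IsZero
    · obtain ⟨w, hw⟩ := (shortExact_range_coker f).exists_lift u hzero
      by_cases hext : ExtVanishes S' f.ker
      · obtain ⟨θ, hθ⟩ := (shortExact_ker_range f).exists_lifting hext w
        have hθ0 : ¬ θ.IsZero := fun h0 => hu fun i x => by
          rw [← hw, ← hθ, h0, map_zero, map_zero]
        exact .inl (.inl (hS'.repIso_of_not_isZero hS hθ0))
      · exact .inl (.inr ⟨hS', hext⟩)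
    · exact .inr ⟨hcoker, hS', fun h0 => hzero (h0 _)⟩

theorem Acyclic.finiteUpToIso_isTorsionSimple [Finite A] (hQ : Acyclic t h) :
    FiniteUpToIso (IsTorsionSimple σ : QuivRep K V A t h → Prop) := by
  classical
  refine (FiniteUpToIso.exists_of_finite (ι := {i : V // 0 < σ i}) fun i =>
    finiteUpToIso_isTorsionSimple_not_homVanishes (isTorsion_simple i.2)).mono fun S hS => ?_
  obtain ⟨i, hi⟩ := hQ.exists_hom_to_simple hS.isNonzero
  refine ⟨⟨i, ?_⟩, hS, hi⟩
  by_contra hσ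
  exact hi (hS.isTorsion.homVanishes (isTorsionFree_simple (not_lt.1 hσ)))

theorem exists_isOrderedSystem_isTorsionSimple [Finite A] [IsAlgClosed K] (hQ : Acyclic t h)
    (hfin : FiniteUpToIso (IsStable K σ : QuivRep K V A t h → Prop)) :
    ∃ (n : ℕ) (B : Fin n → QuivRep K V A t h), IsOrderedSystem (IsTorsionSimple σ) B :=
  exists_isOrderedSystem (C := IsTorsion σ) hQ.finiteUpToIso_isTorsionSimple
    (fun _ hX => hX.isTorsion) (fun _ => isTorsion_of_not_isNonzero)
    (fun _ _ _ _ _ S => S.isTorsion) (fun _ ξ hX => hX.finite_setOf_not_deform ξ)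
    (fun _ hX hX0 => exists_isTorsionSimple_hom hfin hX hX0) (fun _ hX => hX.isNonzero)
    fun _ _ hX hY _ hf => hX.bijective_of_not_isZero hY hf

end TorsionSimple

section NonsplitTower

variable {X Y L M N : QuivRep K V A t h} {f : RepHom L M} {g : RepHom M N}

theorem RepHom.ShortExact.homDim_eq_of_comp_eq_zero (S : ShortExact f g)
    (H : ∀ u : RepHom M X, (f.comp u).IsZero) : homDim M X = homDim N X := by
  let precomp : homS N X →ₗ[K] homS M X :=
    { toFun := fun φ => ⟨_, (g.comp ⟨φ.1, φ.2⟩).comm⟩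
      map_add' := fun _ _ => rfl
      map_smul' := fun _ _ => rfl }
  have hinj : Function.Injective precomp := by
    refine fun φ ψ hφψ => Subtype.ext (funext fun i => LinearMap.ext fun y => ?_)
    obtain ⟨x, rfl⟩ := S.surjective i y
    exact LinearMap.congr_fun (congrFun (congrArg Subtype.val hφψ) i) x
  have hsurj : Function.Surjective precomp := fun ψ => by
    obtain ⟨v, hv⟩ := S.exists_desc ⟨ψ.1, ψ.2⟩ (H _)
    exact ⟨⟨v.app, v.comm⟩, Subtype.ext (funext fun i => LinearMap.ext (hv i))⟩
  exact (LinearEquiv.ofBijective precomp ⟨hinj, hsurj⟩).finrank_eq.symm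

theorem QuivRep.IsBrick.extensionInl_comp_isZero (hL : IsBrick L) {ξ : ExtCocycle N L}
    (hξ : ξ ∉ LinearMap.range (dmap N L)) (u : RepHom (extension ξ) L) :
    ((extensionInl ξ).comp u).IsZero := by
  by_contra hu
  obtain ⟨c, hc, hcu⟩ := hL.exists_ne_zero hu
  refine hξ (mem_range_dmap_of_retraction (ofCommutes (fun i => c⁻¹ • u.app i) fun a y => ?_)
    fun i x => ?_)
  · rw [LinearMap.smul_apply, LinearMap.smul_apply, app_map, map_smul]
  · rw [ofCommutes_app, LinearMap.smul_apply, ← comp_app_apply, hcu, inv_smul_smul₀ hc]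

/-- The representations obtained from `B k` by successive nonsplit extensions, with subobjects
`B l` for `k < l`. A maximal one is the universal extension of `B k` by the `B l`. -/
inductive IsNonsplitTower {n : ℕ} (B : Fin n → QuivRep K V A t h) (k : Fin n) :
    QuivRep K V A t h → Prop
  | base : IsNonsplitTower B k (B k)
  | extend {X : QuivRep K V A t h} {l : Fin n} (hl : k < l) {ξ : ExtCocycle X (B l)}
      (hξ : ξ ∉ LinearMap.range (dmap X (B l))) (hX : IsNonsplitTower B k X) :
      IsNonsplitTower B k (extension ξ)

/-- The representations `M k` are built from the system `B`, and their classes form a dual family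
to those of the `B j` under the Euler form. -/
structure IsDualSystem [Fintype V] [Fintype A] {n : ℕ} (B M : Fin n → QuivRep K V A t h) :
    Prop where
  isExceptional : ∀ k, (M k).IsExceptional
  extVanishes : ∀ k j, ExtVanishes (M k) (B j)
  eulerPairing : ∀ k j, QuivRep.eulerPairing (M k) (B j) = if j = k then 1 else 0
  of_extensionClosed : ∀ k (P : QuivRep K V A t h → Prop), ExtensionClosed P →
    (∀ j, P (B j)) → P (M k)

variable {n : ℕ} {B : Fin n → QuivRep K V A t h} {k : Fin n}

namespace IsNonsplitTower

theorem of_extensionClosed {P : QuivRep K V A t h → Prop} (hX : IsNonsplitTower B k X)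
    (hP : ExtensionClosed P) (hB : ∀ j, P (B j)) : P X := by
  induction hX with
  | base => exact hB k
  | extend _ _ _ ih => exact hP (shortExact_extension _) (hB _) ih

theorem extVanishes (hX : IsNonsplitTower B k X) (hB : ∀ j, k ≤ j → ExtVanishes (B j) Y) :
    ExtVanishes X Y := by
  induction hX with
  | base => exact hB k le_rfl
  | extend hl _ _ ih => exact (shortExact_extension _).extVanishes_left (hB _ hl.le) ih

theorem homDim_eq [Finite V] (hX : IsNonsplitTower B k X) (hB : ∀ j, IsBrick (B j))
    (horth : ∀ i j, i ≠ j → HomVanishes (B i) (B j)) (j : Fin n) :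
    homDim X (B j) = homDim (B k) (B j) := by
  induction hX with
  | base => rfl
  | @extend X l hl ξ hξ hX ih =>
    rw [(shortExact_extension ξ).homDim_eq_of_comp_eq_zero fun u => ?_, ih]
    by_cases hlj : l = j
    · subst hlj
      exact (hB l).extensionInl_comp_isZero hξ u
    · exact horth l j hlj _

theorem eulerPairing_eq_one [Fintype V] [Fintype A] (hX : IsNonsplitTower B k X)
    (hY : ∀ j, eulerPairing Y (B j) = if j = k then 1 else 0) : eulerPairing Y X = 1 := by
  induction hX with
  | base => rw [hY, if_pos rfl]
  | extend hl _ _ ih =>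
    rw [(shortExact_extension _).eulerPairing_right, ih, hY, if_neg hl.ne', zero_add]

end IsNonsplitTower

theorem IsOrderedSystem.exists_isDualSystem [Fintype V] [Fintype A]
    {P : QuivRep K V A t h → Prop} (hB : IsOrderedSystem P B)
    (hbrick : ∀ j, IsBrick (B j)) (hne : ∀ j, IsNonzero (B j)) :
    ∃ M : Fin n → QuivRep K V A t h, IsDualSystem B M := by
  choose M hM hMgt using fun k => exists_forall_extVanishes_left hB.extVanishes
    (P := IsNonsplitTower B k) (Finset.Ioi k)
    (fun _ hl _ _ hX hξ => .extend (Finset.mem_Ioi.1 hl) hξ hX) .base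
  have hext : ∀ k j, ExtVanishes (M k) (B j) := fun k j => by
    obtain hkj | hjk := lt_or_ge k j
    · exact hMgt k j (Finset.mem_Ioi.2 hkj)
    · exact (hM k).extVanishes fun i hki => hB.extVanishes i j (hjk.trans hki)
  have heuler : ∀ k j, eulerPairing (M k) (B j) = if j = k then 1 else 0 := fun k j => by
    rw [(hext k j).eulerPairing_eq_homDim, (hM k).homDim_eq hbrick hB.homVanishes]
    split_ifs with hjk
    · rw [hjk, homDim_self_eq_one_iff.2 ⟨hne k, hbrick k⟩, Nat.cast_one]
    · rw [homVanishes_iff_homDim.1 (hB.homVanishes k j (Ne.symm hjk)), Nat.cast_zero]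
  refine ⟨M, fun k => ?_, hext, heuler, fun k _ hP hPB => (hM k).of_extensionClosed hP hPB⟩
  have hrigid : ExtVanishes (M k) (M k) :=
    (hM k).of_extensionClosed (fun _ _ _ _ _ S => S.extVanishes_right) (hext k)
  refine ⟨extVanishes_iff_extDim.1 hrigid, Nat.cast_injective (R := ℤ) ?_⟩
  rw [← hrigid.eulerPairing_eq_homDim,
    (hM k).eulerPairing_eq_one (heuler k), Nat.cast_one]

end NonsplitTower

section Reduction

variable {X Y : QuivRep K V A t h} {σ σ' : V → ℤ}

theorem QuivRep.IsSemistable.exists_isStable_not_homVanishes [Fintype V]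
    (hX : IsSemistable K σ X) (hYX : ¬ HomVanishes Y X) :
    ∃ W, IsStable K σ W ∧ ¬ HomVanishes Y W := by
  revert hYX
  refine hX.induction (P := fun X => ¬ HomVanishes Y X → _) (fun X hX0 hYX => ?_)
    fun W X N f g S hW _ ih hYX => ?_
  · obtain ⟨u, hu⟩ := not_homVanishes_iff.1 hYX
    exact absurd (isNonzero_of_not_isZero hu).2 hX0
  · by_cases hN : HomVanishes Y N
    · obtain ⟨u, hu⟩ := not_homVanishes_iff.1 hYX
      obtain ⟨v, hv⟩ := S.exists_lift u (hN (u.comp g))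
      refine ⟨W, hW, not_homVanishes_iff.2 ⟨v, fun hzero => hu fun i y => ?_⟩⟩
      rw [← hv, hzero, map_zero]
    · exact ih hN

theorem QuivRep.IsSemistable.finiteUpToIso_isStable_from [Fintype V] (hX : IsSemistable K σ X) :
    FiniteUpToIso fun W : QuivRep K V A t h => IsStable K σ W ∧ ¬ HomVanishes X W := by
  refine (FiniteUpToIso.of_descent totalDim (R := fun X W =>
    IsSemistable K σ X ∧ IsStable K σ W ∧ ¬ HomVanishes X W) ?_ X).mono fun W hW => ⟨hX, hW⟩
  rintro X W ⟨hX, hW, hXW⟩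
  obtain ⟨f, hf⟩ := not_homVanishes_iff.1 hXW
  have S := shortExact_ker (hW.isSurjective_of_not_isZero hX hf)
  have hdim := S.totalDim
  have hpos := totalDim_pos_iff.2 hW.isNonzero
  refine ⟨f.ker, by omega, _, .repIso W, ?_⟩
  rintro W' ⟨-, hW', hXW'⟩
  by_cases hker : HomVanishes f.ker W'
  · obtain ⟨u, hu⟩ := not_homVanishes_iff.1 hXW'
    obtain ⟨v, hv⟩ := S.exists_desc u (hker (f.kerInclusion.comp u))
    have hv0 : ¬ v.IsZero := fun hzero => hu fun i x => by rw [← hv, hzero]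
    exact .inl (repIso_of_bijective v (hW.isInjective_of_not_isZero hW'.isSemistable hv0)
      (hW'.isSurjective_of_not_isZero hW.isSemistable hv0)).symm
  · exact .inr ⟨S.isSemistable_left hW.weight_eq_zero hX, hW', hker⟩

theorem QuivRep.IsSemistable.finiteUpToIso_isStable_to [Fintype V] (hX : IsSemistable K σ X) :
    FiniteUpToIso fun W : QuivRep K V A t h => IsStable K σ W ∧ ¬ HomVanishes W X := by
  refine (FiniteUpToIso.of_descent totalDim (R := fun X W =>
    IsSemistable K σ X ∧ IsStable K σ W ∧ ¬ HomVanishes W X) ?_ X).mono fun W hW => ⟨hX, hW⟩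
  rintro X W ⟨hX, hW, hWX⟩
  obtain ⟨f, hf⟩ := not_homVanishes_iff.1 hWX
  have S := shortExact_coker (hW.isInjective_of_not_isZero hX hf)
  have hdim := S.totalDim
  have hpos := totalDim_pos_iff.2 hW.isNonzero
  refine ⟨f.coker, by omega, _, .repIso W, ?_⟩
  rintro W' ⟨-, hW', hW'X⟩
  by_cases hcoker : HomVanishes W' f.coker
  · obtain ⟨u, hu⟩ := not_homVanishes_iff.1 hW'X
    obtain ⟨v, hv⟩ := S.exists_lift u (hcoker (u.comp f.cokerProjection))
    have hv0 : ¬ v.IsZero := fun hzero => hu fun i x => by rw [← hv, hzero, map_zero]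
    exact .inl (repIso_of_bijective v (hW'.isInjective_of_not_isZero hW.isSemistable hv0)
      (hW.isSurjective_of_not_isZero hW'.isSemistable hv0))
  · exact .inr ⟨S.isSemistable_right hW.weight_eq_zero hX, hW', hcoker⟩

variable [Fintype V] [Fintype A]

/-- The reduction step of the induction: `B` generates the `σ`-torsion representations by
morphisms, `M` is dual to `B`, and `σ'` is obtained from `σ` by subtracting the combination of the
weights `⟨dim M k, ·⟩` which makes `σ'` vanish on all the `B j`. -/
structure IsReduction (σ σ' : V → ℤ) {n : ℕ} (B M : Fin n → QuivRep K V A t h) : Prop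
    extends IsDualSystem B M where
  isTorsionSimple : ∀ j, IsTorsionSimple σ (B j)
  exists_not_homVanishes : ∀ X, IsTorsion σ X → IsNonzero X → ∃ j, ¬ HomVanishes (B j) X
  weight_eq : ∀ X : QuivRep K V A t h,
    weight σ' X = weight σ X - ∑ k, weight σ (B k) * QuivRep.eulerPairing (M k) X

namespace IsReduction

variable {n : ℕ} {B M : Fin n → QuivRep K V A t h} (H : IsReduction σ σ' B M)
include H

theorem isTorsion (k : Fin n) : IsTorsion σ (M k) :=
  H.of_extensionClosed k _ (fun _ _ _ _ _ S => S.isTorsion) fun j => (H.isTorsionSimple j).isTorsion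

theorem extVanishes_of_forall (hY : ∀ j, ExtVanishes (B j) Y) (k : Fin n) : ExtVanishes (M k) Y :=
  H.of_extensionClosed k (ExtVanishes · Y) (fun _ _ _ _ _ S => S.extVanishes_left) hY

theorem weight_self_eq_zero (j : Fin n) : weight σ' (B j) = 0 := by
  simp [H.weight_eq, H.eulerPairing]

theorem weight_eq_of_isTorsionFree (hY : IsTorsionFree σ Y) (hext : ∀ j, ExtVanishes (B j) Y) :
    weight σ' Y = weight σ Y := by
  rw [H.weight_eq, Finset.sum_eq_zero, sub_zero]
  intro k _
  rw [(H.extVanishes_of_forall hext k).eulerPairing_eq_homDim,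
    homVanishes_iff_homDim.1 ((H.isTorsion k).homVanishes hY), Nat.cast_zero, mul_zero]

theorem exists_isTorsionFree_embedding (hY : IsTorsionFree σ Y) :
    ∃ (C : QuivRep K V A t h) (u : RepHom Y C), u.IsInjective ∧ IsTorsionFree σ C ∧
      weight σ' C = weight σ' Y ∧ weight σ' C = weight σ C := by
  induction hn : (-weight σ Y).toNat using Nat.strong_induction_on generalizing Y with
  | _ n ih =>
    by_cases hext : ∀ j, ExtVanishes (B j) Y
    · exact ⟨Y, idHom Y, .id, hY, rfl, H.weight_eq_of_isTorsionFree hY hext⟩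
    obtain ⟨j, hj⟩ := not_forall.1 hext
    obtain ⟨ξ, hξ⟩ := exists_notMem_range_dmap hj
    have E := shortExact_extension ξ
    have hS := H.isTorsionSimple j
    have hfree := hS.isTorsionFree_extension hY hξ
    have hdecrease := E.weight σ
    have hpos := hS.isTorsion.weight_pos hS.isNonzero
    have hle := hfree.weight_nonpos
    obtain ⟨C, u, hu, hC, hCE, hσC⟩ := ih _ (by omega) hfree rfl
    refine ⟨C, (extensionInl ξ).comp u, E.injective.comp hu, hC, ?_, hσC⟩
    rw [hCE, E.weight σ', H.weight_self_eq_zero, add_zero]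

theorem weight_nonpos (hY : IsTorsionFree σ Y) : weight σ' Y ≤ 0 := by
  obtain ⟨C, u, -, hC, hCY, hσC⟩ := H.exists_isTorsionFree_embedding hY
  rw [← hCY, hσC]
  exact hC.weight_nonpos

theorem isTorsionFree (hY : IsTorsionFree σ Y) : IsTorsionFree σ' Y :=
  fun _ _ hf => H.weight_nonpos (hY.of_injective hf)

/-- Every nonzero torsion representation `X` receives a nonzero `f : B j → X`; its kernel is
torsion-free, so passing to the cokernel of `f` lowers the weight `σ`. -/
theorem induction_isTorsion {P : QuivRep K V A t h → Prop} (zero : ∀ X, ¬ IsNonzero X → P X)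
    (step : ∀ (X : QuivRep K V A t h) (j : Fin n) (f : RepHom (B j) X), IsTorsionFree σ f.ker →
      P f.coker → P X) (hX : IsTorsion σ X) : P X := by
  induction hn : (weight σ X).toNat using Nat.strong_induction_on generalizing X with
  | _ n ih =>
    by_cases hX0 : IsNonzero X
    · obtain ⟨j, hj⟩ := H.exists_not_homVanishes X hX hX0
      obtain ⟨f, hf⟩ := not_homVanishes_iff.1 hj
      have hS := H.isTorsionSimple j
      have hker := hS.isTorsionFree_ker hf
      have hcoker := hX.of_surjective f.cokerProjection_isSurjective
      refine step X j f hker (ih _ ?_ hcoker rfl)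
      have hsource := (shortExact_ker_range f).weight σ
      have htarget := (shortExact_range_coker f).weight σ
      have hpos := hS.isTorsion.weight_pos hS.isNonzero
      have hker_le := hker.weight_nonpos
      have hcoker_ge := hcoker.weight_nonneg
      omega
    · exact zero X hX0

theorem weight_nonneg (hX : IsTorsion σ X) : 0 ≤ weight σ' X := by
  refine H.induction_isTorsion (fun X hX => (weight_eq_zero_of_not_isNonzero hX σ').ge)
    (fun X j f hker ih => ?_) hX
  have hsource := (shortExact_ker_range f).weight σ'
  have htarget := (shortExact_range_coker f).weight σ'
  have hzero := H.weight_self_eq_zero j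
  have hker_le := H.weight_nonpos hker
  omega

theorem extVanishes_of_isTorsion (hX : IsTorsion σ X) (k : Fin n) : ExtVanishes (M k) X := by
  refine H.induction_isTorsion (fun X hX => ?_) (fun X j f _ ih => ?_) hX
  · exact (H.extVanishes k k).right_of_surjective (g := RepHom.zero (B k) X)
      fun i x => ⟨0, by_contra fun hx => hX ⟨i, x, fun h0 => hx (by rw [h0, map_zero])⟩⟩
  · exact (shortExact_range_coker f).extVanishes_right
      ((H.extVanishes k j).right_of_surjective f.rangeRestrict_isSurjective) ih

theorem isTorsion_of_isTorsion (hX : IsTorsion σ' X) : IsTorsion σ X := by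
  obtain ⟨T, F, f, g, S, hT, hF⟩ := exists_torsion_sequence σ X
  refine S.isTorsion hT (isTorsion_of_not_isNonzero fun hF0 => ?_)
  exact ((hX.of_surjective S.surjective).weight_pos hF0).not_ge (H.weight_nonpos hF)

theorem isSemistable (hX : IsSemistable K σ X) : IsSemistable K σ' X := by
  refine isSemistable_iff.2 ⟨?_, H.isTorsionFree hX.isTorsionFree⟩
  rw [H.weight_eq_of_isTorsionFree hX.isTorsionFree fun j => (H.isTorsionSimple j).extVanishes hX,
    hX.weight_eq_zero]

theorem isSemistable_self (j : Fin n) : IsSemistable K σ' (B j) := by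
  refine isSemistable_iff.2 ⟨H.weight_self_eq_zero j, fun Y f hf => ?_⟩
  have hadd := (shortExact_coker hf).weight σ'
  have hzero := H.weight_self_eq_zero j
  have hcoker := H.weight_nonneg
    ((H.isTorsionSimple j).isTorsion.of_surjective f.cokerProjection_isSurjective)
  omega

theorem isTorsion_or_isTorsionFree_of_isStable {W : QuivRep K V A t h} (hW : IsStable K σ' W) :
    IsTorsion σ W ∨ IsTorsionFree σ W := by
  obtain ⟨T, F, f, g, S, hT, hF⟩ := exists_torsion_sequence σ W
  by_cases hF0 : IsNonzero F
  · right
    refine S.isTorsionFree (isTorsionFree_of_not_isNonzero fun hT0 => ?_) hF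
    refine (hW.weight_neg S.injective hT0 fun hsurj => ?_).not_ge (H.weight_nonneg hT)
    obtain ⟨i, y, hy⟩ := hF0
    obtain ⟨x, rfl⟩ := S.surjective i y
    obtain ⟨z, rfl⟩ := hsurj i x
    exact hy (S.comp_eq_zero i z)
  · exact .inl (S.isTorsion hT (isTorsion_of_not_isNonzero hF0))

theorem exists_isStable_not_homVanishes {W : QuivRep K V A t h} (hW : IsStable K σ' W)
    (hfree : IsTorsionFree σ W) : ∃ W', IsStable K σ W' ∧ ¬ HomVanishes W W' := by
  obtain ⟨C, u, hu, hC, hCW, hσC⟩ := H.exists_isTorsionFree_embedding hfree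
  refine IsSemistable.exists_isStable_not_homVanishes (X := C) (isSemistable_iff.2 ⟨?_, hC⟩) ?_
  · rw [← hσC, hCW, hW.weight_eq_zero]
  · obtain ⟨i, x, hx⟩ := hW.isNonzero
    exact not_homVanishes_iff.2 ⟨u, fun hzero => hx ((isInjective_iff u).1 hu i x (hzero i x))⟩

theorem finiteUpToIso_isStable (hfin : FiniteUpToIso (IsStable K σ : QuivRep K V A t h → Prop)) :
    FiniteUpToIso (IsStable K σ' : QuivRep K V A t h → Prop) := by
  obtain ⟨m, D, hD, -, hcover⟩ := hfin.exists_representatives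
  refine ((FiniteUpToIso.exists_of_finite fun j =>
      (H.isSemistable_self j).finiteUpToIso_isStable_from).or
    (FiniteUpToIso.exists_of_finite fun j =>
      (H.isSemistable (hD j).isSemistable).finiteUpToIso_isStable_to)).mono fun W hW => ?_
  obtain htorsion | hfree := H.isTorsion_or_isTorsionFree_of_isStable hW
  · obtain ⟨j, hj⟩ := H.exists_not_homVanishes W htorsion hW.isNonzero
    exact .inl ⟨j, hW, hj⟩
  · obtain ⟨W', hW', hWW'⟩ := H.exists_isStable_not_homVanishes hW hfree
    obtain ⟨j, hj⟩ := hcover W' hW'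
    obtain ⟨a, ha, -⟩ := hj.exists_bijective_hom
    obtain ⟨v, hv⟩ := not_homVanishes_iff.1 hWW'
    exact .inr ⟨j, hW, not_homVanishes_iff.2 ⟨v.comp a, fun hzero =>
      hv fun i x => (isInjective_iff a).1 ha i _ (hzero i x)⟩⟩

end IsReduction

end Reduction

section ExistsPresentation

variable {X Y W : QuivRep K V A t h} {σ σ' : V → ℤ}

section SemistableSpan

variable [Fintype V]

/-- The rational span of the dimension vectors of the `σ`-semistable representations. It grows
strictly along a reduction step, so that the induction terminates. -/
def semistableSpan (K : Type) [Field K] {V A : Type} [Fintype V] (t h : A → V) (σ : V → ℤ) :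
    Submodule ℚ (V → ℚ) :=
  Submodule.span ℚ {x | ∃ W : QuivRep K V A t h, IsSemistable K σ W ∧ x = natQ W.dimVec}

theorem QuivRep.IsSemistable.natQ_dimVec_mem_semistableSpan (hW : IsSemistable K σ W) :
    natQ W.dimVec ∈ semistableSpan K t h σ :=
  Submodule.subset_span ⟨W, hW, rfl⟩

theorem intCast_weight (σ : V → ℤ) (X : QuivRep K V A t h) :
    (weight σ X : ℚ) = intQ σ ⬝ᵥ natQ X.dimVec := by
  simp [weight, dotProduct, intQ, natQ]

theorem weight_eq_zero_of_natQ_dimVec_mem_semistableSpan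
    (hX : natQ X.dimVec ∈ semistableSpan K t h σ) : weight σ X = 0 := by
  have hle : semistableSpan K t h σ ≤ LinearMap.ker (dotProductBilin ℚ ℚ (intQ σ)) := by
    refine Submodule.span_le.2 ?_
    rintro _ ⟨W, hW, rfl⟩
    exact (intCast_weight σ W).symm.trans (Int.cast_eq_zero.2 hW.weight_eq_zero)
  exact Int.cast_eq_zero.1 ((intCast_weight σ X).trans (hle hX))

end SemistableSpan

variable [Fintype V] [Fintype A]

theorem exists_isReduction [IsAlgClosed K] (hQ : Acyclic t h)
    (hfin : FiniteUpToIso (IsStable K σ : QuivRep K V A t h → Prop)) :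
    ∃ (σ' : V → ℤ) (n : ℕ) (B M : Fin n → QuivRep K V A t h), IsReduction σ σ' B M := by
  classical
  obtain ⟨n, B, hB⟩ := exists_isOrderedSystem_isTorsionSimple hQ hfin
  obtain ⟨M, hM⟩ := hB.exists_isDualSystem
    (fun j => isBrick_of_injective_end (hB.mem j).isNonzero fun _ hf =>
      ((hB.mem j).bijective_of_not_isZero (hB.mem j) hf).1)
    fun j => (hB.mem j).isNonzero
  refine ⟨σ - ∑ k, weight σ (B k) • weightL t h (natZ (M k).dimVec), n, B, M,
    { toIsDualSystem := hM
      isTorsionSimple := hB.mem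
      exists_not_homVanishes := fun X hX hX0 => ?_
      weight_eq := fun X => ?_ }⟩
  · obtain ⟨S, hS, hSX⟩ := exists_isTorsionSimple_hom hfin hX hX0
    exact (hB.exists_repIso S hS).imp fun j e => RepIso.not_homVanishes_left e hSX
  · simp only [eulerPairing, ← weight_weightL]
    simp only [weight, Pi.sub_apply, sub_mul, Finset.sum_sub_distrib, Finset.sum_apply,
      Finset.sum_mul, Pi.smul_apply, smul_eq_mul, Finset.mul_sum, mul_assoc]
    rw [Finset.sum_comm (s := Finset.univ (α := V))]

namespace IsReduction

variable {n : ℕ} {B M : Fin n → QuivRep K V A t h} (H : IsReduction σ σ' B M)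
include H

theorem semistableSpan_lt (j : Fin n) : semistableSpan K t h σ < semistableSpan K t h σ' := by
  refine lt_of_le_of_ne (Submodule.span_mono fun _ ⟨W, hW, hx⟩ => ⟨W, H.isSemistable hW, hx⟩)
    fun heq => ?_
  have hmem := heq ▸ (H.isSemistable_self j).natQ_dimVec_mem_semistableSpan
  exact ((H.isTorsionSimple j).isTorsion.weight_pos (H.isTorsionSimple j).isNonzero).ne'
    (weight_eq_zero_of_natQ_dimVec_mem_semistableSpan hmem)

theorem weightPresentation {ι : Type} [Fintype ι] {N : ι → QuivRep K V A t h} {q : ι → ℚ}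
    {m : V → ℚ} (P : WeightPresentation σ' N q m) :
    WeightPresentation σ (Sum.elim N M) (Sum.elim q fun k => (weight σ (B k) : ℚ)) m := by
  have hMN : ∀ k p, ExtVanishes (M k) (N p) := fun k p =>
    H.extVanishes_of_isTorsion (H.isTorsion_of_isTorsion (P.isTorsion p)) k
  have hNM : ∀ k, ExtOrthogonal N m (M k) := fun k =>
    H.of_extensionClosed k _ (fun _ _ _ _ _ S => S.extOrthogonal) fun j =>
      P.extOrthogonal_of_isSemistable (H.isSemistable_self j)
  have hMM : ∀ k l, ExtVanishes (M k) (M l) := fun k l =>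
    H.extVanishes_of_isTorsion (H.isTorsion l) k
  refine ⟨fun Y => ?_, ?_, P.nonneg, ?_⟩
  · have hσ' := P.weight_eq Y
    rw [H.weight_eq] at hσ'
    push_cast at hσ'
    rw [Fintype.sum_sum_type]
    simp only [Sum.elim_inl, Sum.elim_inr]
    linarith
  · rintro (p | k)
    · exact P.pos p
    · exact Int.cast_pos.2
        ((H.isTorsionSimple k).isTorsion.weight_pos (H.isTorsionSimple k).isNonzero)
  · rintro (p | l)
    · exact ⟨Sum.rec (P.extOrthogonal p).1 (hMN · p), (P.extOrthogonal p).2⟩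
    · exact ⟨Sum.rec (hNM l).1 (hMM · l), (hNM l).2⟩

end IsReduction

theorem weightPresentation_of_forall_nonpos (hσ : ∀ i, σ i ≤ 0) :
    WeightPresentation σ (Empty.elim : Empty → QuivRep K V A t h) Empty.elim
      fun i => -(σ i : ℚ) where
  weight_eq Y := by simp [weight]
  pos := Empty.rec
  nonneg i := neg_nonneg.2 (Int.cast_nonpos.2 (hσ i))
  extOrthogonal := Empty.rec

theorem exists_weightPresentation [IsAlgClosed K] (hQ : Acyclic t h)
    (hfin : FiniteUpToIso (IsStable K σ : QuivRep K V A t h → Prop)) :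
    ∃ (ι : Type) (_ : Fintype ι) (N : ι → QuivRep K V A t h) (q : ι → ℚ) (m : V → ℚ),
      WeightPresentation σ N q m ∧ ∀ p, (N p).IsExceptional := by
  classical
  induction hU : semistableSpan K t h σ using WellFoundedGT.induction generalizing σ with
  | ind U ih =>
    subst hU
    obtain ⟨σ', n, B, M, H⟩ := exists_isReduction hQ hfin
    by_cases hn : Nonempty (Fin n)
    · obtain ⟨j⟩ := hn
      obtain ⟨ι, _, N, q, m, P, hN⟩ :=
        ih _ (H.semistableSpan_lt j) (H.finiteUpToIso_isStable hfin) rfl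
      exact ⟨ι ⊕ Fin n, inferInstance, _, _, m, H.weightPresentation P,
        Sum.rec hN H.isExceptional⟩
    · refine ⟨Empty, inferInstance, _, _, _, weightPresentation_of_forall_nonpos fun i => ?_,
        Empty.rec⟩
      by_contra! hi
      obtain ⟨j, -⟩ := H.exists_not_homVanishes _ (isTorsion_simple hi) (isNonzero_simple i)
      exact hn ⟨j⟩

end ExistsPresentation

section CompatibleSupport

theorem natZ_injective : Function.Injective (natZ (V := V)) := fun _ _ hβ =>
  funext fun i => Int.ofNat_inj.1 (congrFun hβ i)

theorem Acyclic.natZ_ne_neg_gammaRoot [Finite V] [Finite A] (hQ : Acyclic t h) (β : V → ℕ)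
    (i : V) : natZ β ≠ fun j => -(gammaRoot t h i j : ℤ) := fun heq => by
  have hi : (β i : ℤ) = -(gammaRoot t h i i : ℤ) := congrFun heq i
  have := hQ.gammaRoot_self_pos i
  omega

theorem sum_smul_mem_coneOf {κ : Type} [Fintype V] (s : Finset κ) {c : κ → ℚ}
    (hc : ∀ x, 0 ≤ c x) (r : κ → V → ℤ) : ∑ x ∈ s, c x • intQ (r x) ∈ coneOf (s.image r) := by
  refine ⟨fun v => ∑ x ∈ s with r x = v, c x, fun v => Finset.sum_nonneg fun x _ => hc x, ?_⟩
  rw [← Finset.sum_fiberwise_of_maps_to fun x hx => Finset.mem_image_of_mem r hx]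
  refine Finset.sum_congr rfl fun v _ => ?_
  rw [Finset.sum_smul]
  exact Finset.sum_congr rfl fun x hx => by rw [(Finset.mem_filter.1 hx).2]

variable {ι : Type} {N : ι → QuivRep K V A t h} {q : ι → ℚ} {m : V → ℚ}

/-- The element of `Ψ(Q)_{≥ -1}` attached to a summand of a weight presentation: the dimension
vector of `N p`, or `-γ_i`. -/
def almostPositiveRoot (N : ι → QuivRep K V A t h) : ι ⊕ V → V → ℤ :=
  Sum.elim (fun p => natZ (N p).dimVec) fun i j => -(gammaRoot t h i j : ℤ)

theorem Acyclic.almostPositiveRoot_eq_natZ_iff [Finite V] [Finite A] (hQ : Acyclic t h)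
    {x : ι ⊕ V} {β : V → ℕ} :
    almostPositiveRoot N x = natZ β ↔ ∃ p, x = .inl p ∧ (N p).dimVec = β := by
  constructor
  · intro hx
    obtain p | i := x
    · exact ⟨p, rfl, natZ_injective hx⟩
    · exact absurd hx.symm (hQ.natZ_ne_neg_gammaRoot β i)
  · rintro ⟨p, rfl, rfl⟩
    rfl

theorem Acyclic.almostPositiveRoot_eq_neg_gammaRoot_iff [Finite V] [Finite A] (hQ : Acyclic t h)
    {x : ι ⊕ V} {i : V} :
    (almostPositiveRoot N x = fun j => -(gammaRoot t h i j : ℤ)) ↔ x = .inr i := by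
  constructor
  · intro hx
    obtain p | k := x
    · exact absurd hx (hQ.natZ_ne_neg_gammaRoot _ i)
    · exact congrArg _ (hQ.gammaRoot_injective (funext fun j =>
        Int.ofNat_inj.1 (neg_injective (congrFun hx j))))
  · rintro rfl
    rfl

variable [Fintype V] [Fintype A] [Fintype ι]

theorem WeightPresentation.intQ_eq [DecidableEq V] (hQ : Acyclic t h) {α : V → ℤ}
    (P : WeightPresentation (weightL t h α) N q m) :
    intQ α = ∑ x, Sum.elim q m x • intQ (almostPositiveRoot N x) := by
  have hpairing (Y : QuivRep K V A t h) : eulerForm t h (intQ α) (intQ (natZ Y.dimVec)) =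
      eulerForm t h (∑ x, Sum.elim q m x • intQ (almostPositiveRoot N x))
        (intQ (natZ Y.dimVec)) := by
    rw [← intCast_eulerForm, ← weight_weightL, P.weight_eq, eulerForm_sum_left,
      Fintype.sum_sum_type, sub_eq_add_neg, ← Finset.sum_neg_distrib]
    simp only [almostPositiveRoot, Sum.elim_inl, Sum.elim_inr, eulerForm_smul_left,
      ← intCast_eulerForm, hQ.eulerForm_neg_gammaRoot, eulerPairing, natZ, Int.cast_neg,
      Int.cast_natCast, mul_neg]
  refine hQ.eulerForm_left_ext fun i => ?_
  have hsimple : intQ (natZ (simple K t h i).dimVec) = Pi.single i 1 :=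
    funext fun j => by simp [intQ, natZ, dimVec_simple, Pi.single_apply]
  simpa only [hsimple] using hpairing (simple K t h i)

theorem WeightPresentation.isCompatible {σ : V → ℤ} (hQ : Acyclic t h)
    (P : WeightPresentation σ N q m) (hN : ∀ p, (N p).IsExceptional) :
    IsCompatible K t h
      ((Finset.univ.filter fun x => Sum.elim q m x ≠ 0).image (almostPositiveRoot N)) := by
  simp only [IsCompatible, Finset.forall_mem_image, Finset.mem_filter_univ]
  refine ⟨?_, fun x _ y hy _ => ⟨?_, ?_⟩⟩
  · rintro (p | i) -
    · exact .inl ⟨_, ⟨N p, rfl, hN p⟩, rfl⟩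
    · exact .inr ⟨i, rfl⟩
  · rintro _ _ - - hxβ hyβ
    obtain ⟨p, -, rfl⟩ := hQ.almostPositiveRoot_eq_natZ_iff.1 hxβ
    obtain ⟨p', -, rfl⟩ := hQ.almostPositiveRoot_eq_natZ_iff.1 hyβ
    exact Nat.le_zero.1 (Nat.sInf_le
      ⟨N p, N p', rfl, rfl, extVanishes_iff_extDim.1 ((P.extOrthogonal p').1 p)⟩)
  · rintro _ i - hxβ hyi
    obtain ⟨p, -, rfl⟩ := hQ.almostPositiveRoot_eq_natZ_iff.1 hxβ
    obtain rfl := hQ.almostPositiveRoot_eq_neg_gammaRoot_iff.1 hyi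
    exact (P.extOrthogonal p).2 i hy

theorem exists_isCompatible_of_finiteUpToIso [DecidableEq V] [IsAlgClosed K] (hQ : Acyclic t h)
    {α : V → ℤ}
    (hfin : FiniteUpToIso (IsStable K (weightL t h α) : QuivRep K V A t h → Prop)) :
    ∃ C : Finset (V → ℤ), IsCompatible K t h C ∧ intQ α ∈ coneOf C := by
  obtain ⟨ι, _, N, q, m, P, hN⟩ := exists_weightPresentation hQ hfin
  refine ⟨_, P.isCompatible hQ hN, ?_⟩
  rw [P.intQ_eq hQ, ← Finset.sum_filter_of_ne fun x _ hx => left_ne_zero_of_smul hx]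
  exact sum_smul_mem_coneOf _ (Sum.rec (fun p => (P.pos p).le) P.nonneg) _

end CompatibleSupport

theorem stmt10_general [Fintype V] [DecidableEq V] [Fintype A] [IsAlgClosed K] (hQ : Acyclic t h)
    (α : V → ℤ) :
    (∃ (n : ℕ) (E : Fin n → QuivRep K V A t h),
        ∀ W : QuivRep K V A t h, IsStable K (weightL t h α) W → ∃ j, RepIso K W (E j)) ↔
      (∃ C : Finset (V → ℤ), IsCompatible K t h C ∧ intQ α ∈ coneOf C) := by
  have : Infinite K := IsAlgClosed.instInfinite
  exact ⟨exists_isCompatible_of_finiteUpToIso hQ,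
    fun ⟨_, hC, hα⟩ => hC.finiteUpToIso_isStable hQ hα⟩

end Semistability

/-- For `σ = ⟨α,·⟩` there are finitely many isomorphism classes of
`σ`-stable representations iff `α ∈ Cone(C)` for some compatible subset `C` of
`Ψ(Q)_{≥ −1}`. -/
theorem stmt10 [IsAlgClosed K] [CharZero K] (t h : A → V) (hQ : Acyclic t h)
    (α : V → ℤ) :
    (∃ (n : ℕ) (E : Fin n → QuivRep K V A t h),
        ∀ W : QuivRep K V A t h, IsStable K (weightL t h α) W → ∃ j, RepIso K W (E j)) ↔
      (∃ C : Finset (V → ℤ), IsCompatible K t h C ∧ intQ α ∈ coneOf C) :=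
  stmt10_general hQ α

end
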